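/- Suppose m > n ≥ 1. Then there exists a Σ1 provability predicate PR_T(x) of T such that: (1) for any modal formula A and any arithmetical interpretation f based on PR_T(x), if N⁺A_{m,n} ⊢ A then T ⊢ f(A); and (2) there exists an arithmetical interpretation f based on PR_T(x) such that for every modal formula A, N⁺A_{m,n} ⊢ A if and only if T ⊢ f(A). (No Σ1-soundness assumption on T is needed.) -/

import Mathlib

namespace PLN

/-! ### Modal formulas and the logics N⁺A_{m,n} -/

/-- Formulas of modal propositional logic. -/
inductive MFml : Type
  | var : ℕ → MFml
  | bot : MFml
  | neg : MFml → MFml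
  | and : MFml → MFml → MFml
  | or : MFml → MFml → MFml
  | imp : MFml → MFml → MFml
  | box : MFml → MFml
  deriving DecidableEq

/-- `boxIter n A` is `□ⁿ A`, where `□⁰ A = A` and `□^(k+1) A = □ (□ᵏ A)`. -/
def boxIter : ℕ → MFml → MFml
  | 0, A => A
  | k + 1, A => .box (boxIter k A)

/-- Evaluation of a modal formula under a valuation of its "propositional atoms"
(propositional variables, and boxed formulas); used to define propositional tautologies
in the modal language. -/
def MFml.evalTC (v : MFml → Prop) : MFml → Prop
  | .bot => False
  | .neg A => ¬ A.evalTC v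
  | .and A B => A.evalTC v ∧ B.evalTC v
  | .or A B => A.evalTC v ∨ B.evalTC v
  | .imp A B => A.evalTC v → B.evalTC v
  | A => v A

/-- Propositional tautologies in the modal language. -/
def MTaut (A : MFml) : Prop := ∀ v, A.evalTC v

/-- Provability in the logic `N⁺A_{m,n}`: the pure logic of necessitation `N`
(propositional tautologies, modus ponens, necessitation) together with the axiom scheme
`□ⁿA → □ᵐA` and the rule `Ros□` (from `¬□A` infer `¬□□A`). -/
inductive NAProves (m n : ℕ) : MFml → Prop
  | taut {A} : MTaut A → NAProves m n A
  | acc (A) : NAProves m n (.imp (boxIter n A) (boxIter m A))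
  | mp {A B} : NAProves m n (.imp A B) → NAProves m n A → NAProves m n B
  | nec {A} : NAProves m n A → NAProves m n (.box A)
  | ros {A} : NAProves m n (.neg (.box A)) → NAProves m n (.neg (.box (.box A)))

/-- `IsSub B A` : `B` is a subformula of `A`. -/
inductive IsSub : MFml → MFml → Prop
  | refl (A) : IsSub A A
  | neg {B A} : IsSub B A → IsSub B (.neg A)
  | andL {B A C} : IsSub B A → IsSub B (.and A C)
  | andR {B A C} : IsSub B C → IsSub B (.and A C)
  | orL {B A C} : IsSub B A → IsSub B (.or A C)
  | orR {B A C} : IsSub B C → IsSub B (.or A C)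
  | impL {B A C} : IsSub B A → IsSub B (.imp A C)
  | impR {B A C} : IsSub B C → IsSub B (.imp A C)
  | box {B A} : IsSub B A → IsSub B (.box A)

/-! ### N-frames and N-models -/

/-- An N-model on a set `W` of worlds: an N-frame (a binary relation `≺_B` on `W`
for each modal formula `B`) together with a valuation of propositional variables. -/
structure NModel (W : Type) where
  rel : MFml → W → W → Prop
  val : W → ℕ → Prop

/-- The forcing relation of an N-model:
`x ⊩ □B` iff every `y` with `x ≺_B y` satisfies `y ⊩ B`. -/
def NModel.Forces {W : Type} (M : NModel W) : W → MFml → Prop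
  | x, .var p => M.val x p
  | _, .bot => False
  | x, .neg A => ¬ NModel.Forces M x A
  | x, .and A B => NModel.Forces M x A ∧ NModel.Forces M x B
  | x, .or A B => NModel.Forces M x A ∨ NModel.Forces M x B
  | x, .imp A B => NModel.Forces M x A → NModel.Forces M x B
  | x, .box A => ∀ y, M.rel A x y → NModel.Forces M y A

/-- The relations `≺_B^k` : `x ≺_B^0 y` iff `x = y`, and
`x ≺_B^(k+1) y` iff `∃ w, x ≺_{□ᵏB} w` and `w ≺_B^k y`. -/
def NModel.relIter {W : Type} (M : NModel W) (B : MFml) : ℕ → W → W → Prop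
  | 0, x, y => x = y
  | k + 1, x, y => ∃ w, M.rel (boxIter k B) x w ∧ NModel.relIter M B k w y

/-- `(m,n)`-accessibility of (the frame of) an N-model. -/
def NModel.Accessible {W : Type} (M : NModel W) (m n : ℕ) : Prop :=
  ∀ (B : MFml) (x y : W), NModel.relIter M B m x y → NModel.relIter M B n x y

/-! ### The language of first-order arithmetic -/

/-- Terms of the language of arithmetic, with de Bruijn variables. -/
inductive ATerm : Type
  | var : ℕ → ATerm
  | zero : ATerm
  | succ : ATerm → ATerm
  | add : ATerm → ATerm → ATerm
  | mul : ATerm → ATerm → ATerm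
  deriving DecidableEq

/-- Formulas of the language of arithmetic (with `≤` primitive), de Bruijn variables. -/
inductive AFml : Type
  | eq : ATerm → ATerm → AFml
  | le : ATerm → ATerm → AFml
  | neg : AFml → AFml
  | and : AFml → AFml → AFml
  | or : AFml → AFml → AFml
  | imp : AFml → AFml → AFml
  | all : AFml → AFml
  | ex : AFml → AFml
  deriving DecidableEq

/-- Lift (shift up by one) the variables `≥ c` of a term. -/
def ATerm.lift (c : ℕ) : ATerm → ATerm
  | .var n => .var (if n < c then n else n + 1)
  | .zero => .zero
  | .succ t => .succ (t.lift c)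
  | .add t s => .add (t.lift c) (s.lift c)
  | .mul t s => .mul (t.lift c) (s.lift c)

/-- Simultaneous substitution in terms. -/
def ATerm.substAll (σ : ℕ → ATerm) : ATerm → ATerm
  | .var n => σ n
  | .zero => .zero
  | .succ t => .succ (t.substAll σ)
  | .add t s => .add (t.substAll σ) (s.substAll σ)
  | .mul t s => .mul (t.substAll σ) (s.substAll σ)

/-- Pushing a substitution under a binder. -/
def liftSub (σ : ℕ → ATerm) : ℕ → ATerm
  | 0 => .var 0
  | n + 1 => (σ n).lift 0

/-- Lift (shift up by one) the free variables `≥ c` of a formula. -/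
def AFml.lift (c : ℕ) : AFml → AFml
  | .eq t s => .eq (t.lift c) (s.lift c)
  | .le t s => .le (t.lift c) (s.lift c)
  | .neg φ => .neg (φ.lift c)
  | .and φ ψ => .and (φ.lift c) (ψ.lift c)
  | .or φ ψ => .or (φ.lift c) (ψ.lift c)
  | .imp φ ψ => .imp (φ.lift c) (ψ.lift c)
  | .all φ => .all (φ.lift (c + 1))
  | .ex φ => .ex (φ.lift (c + 1))

/-- Simultaneous (capture-avoiding) substitution in formulas. -/
def AFml.substAll (σ : ℕ → ATerm) : AFml → AFml
  | .eq t s => .eq (t.substAll σ) (s.substAll σ)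
  | .le t s => .le (t.substAll σ) (s.substAll σ)
  | .neg φ => .neg (φ.substAll σ)
  | .and φ ψ => .and (φ.substAll σ) (ψ.substAll σ)
  | .or φ ψ => .or (φ.substAll σ) (ψ.substAll σ)
  | .imp φ ψ => .imp (φ.substAll σ) (ψ.substAll σ)
  | .all φ => .all (φ.substAll (liftSub σ))
  | .ex φ => .ex (φ.substAll (liftSub σ))

def subst0Env (t : ATerm) : ℕ → ATerm
  | 0 => t
  | n + 1 => .var n

def subst2Env (t s : ATerm) : ℕ → ATerm
  | 0 => t
  | 1 => s
  | n + 2 => .var n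

/-- Substitute the term `t` for the free variable `0` (decrementing other variables). -/
def AFml.subst0 (φ : AFml) (t : ATerm) : AFml := φ.substAll (subst0Env t)

/-- Substitute the terms `t`, `s` for the free variables `0`, `1` simultaneously. -/
def AFml.subst2 (φ : AFml) (t s : ATerm) : AFml := φ.substAll (subst2Env t s)

/-- Substitute `S(var 0)` for `var 0`, leaving all other free variables unchanged. -/
def succSubst (φ : AFml) : AFml :=
  φ.substAll fun n => if n = 0 then .succ (.var 0) else .var n

/-- All variables of a term are `< c`. -/
def ATerm.FreeLt (c : ℕ) : ATerm → Prop
  | .var n => n < c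
  | .zero => True
  | .succ t => t.FreeLt c
  | .add t s => t.FreeLt c ∧ s.FreeLt c
  | .mul t s => t.FreeLt c ∧ s.FreeLt c

/-- All free variables of a formula are `< c`; `FreeLt 0 φ` says that `φ` is a sentence. -/
def AFml.FreeLt (c : ℕ) : AFml → Prop
  | .eq t s => t.FreeLt c ∧ s.FreeLt c
  | .le t s => t.FreeLt c ∧ s.FreeLt c
  | .neg φ => φ.FreeLt c
  | .and φ ψ => φ.FreeLt c ∧ ψ.FreeLt c
  | .or φ ψ => φ.FreeLt c ∧ ψ.FreeLt c
  | .imp φ ψ => φ.FreeLt c ∧ ψ.FreeLt c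
  | .all φ => φ.FreeLt (c + 1)
  | .ex φ => φ.FreeLt (c + 1)

/-- The numeral `n̄`. -/
def numeral : ℕ → ATerm
  | 0 => .zero
  | n + 1 => .succ (numeral n)

/-- A Gödel numbering of terms. -/
def ATerm.code : ATerm → ℕ
  | .var n => Nat.pair 0 n
  | .zero => Nat.pair 1 0
  | .succ t => Nat.pair 2 t.code
  | .add t s => Nat.pair 3 (Nat.pair t.code s.code)
  | .mul t s => Nat.pair 4 (Nat.pair t.code s.code)

/-- A Gödel numbering of formulas. -/
def AFml.code : AFml → ℕ
  | .eq t s => Nat.pair 0 (Nat.pair t.code s.code)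
  | .le t s => Nat.pair 1 (Nat.pair t.code s.code)
  | .neg φ => Nat.pair 2 φ.code
  | .and φ ψ => Nat.pair 3 (Nat.pair φ.code ψ.code)
  | .or φ ψ => Nat.pair 4 (Nat.pair φ.code ψ.code)
  | .imp φ ψ => Nat.pair 5 (Nat.pair φ.code ψ.code)
  | .all φ => Nat.pair 6 φ.code
  | .ex φ => Nat.pair 7 φ.code

/-- `⌜φ⌝`, the numeral of the Gödel number of `φ`. -/
def gnum (φ : AFml) : ATerm := numeral φ.code

/-- For a formula `P(x)` (with free variable `var 0`), `P.appNum φ` is `P(⌜φ⌝)`. -/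
def AFml.appNum (P φ : AFml) : AFml := P.subst0 (gnum φ)

/-- Iterated application of a predicate: `iterPred P k φ = P(⌜P(⌜⋯P(⌜φ⌝)⋯⌝)⌝)` (`k` times). -/
def iterPred (P : AFml) : ℕ → AFml → AFml
  | 0, φ => φ
  | k + 1, φ => P.appNum (iterPred P k φ)

/-! ### Satisfaction in the standard model -/

def ATerm.val (ρ : ℕ → ℕ) : ATerm → ℕ
  | .var n => ρ n
  | .zero => 0
  | .succ t => t.val ρ + 1
  | .add t s => t.val ρ + s.val ρ
  | .mul t s => t.val ρ * s.val ρ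

def consEnv (a : ℕ) (ρ : ℕ → ℕ) : ℕ → ℕ
  | 0 => a
  | n + 1 => ρ n

/-- Satisfaction in the standard model `ℕ` under an environment `ρ`. -/
def AFml.Sat (ρ : ℕ → ℕ) : AFml → Prop
  | .eq t s => t.val ρ = s.val ρ
  | .le t s => t.val ρ ≤ s.val ρ
  | .neg φ => ¬ φ.Sat ρ
  | .and φ ψ => φ.Sat ρ ∧ ψ.Sat ρ
  | .or φ ψ => φ.Sat ρ ∨ ψ.Sat ρ
  | .imp φ ψ => φ.Sat ρ → ψ.Sat ρ
  | .all φ => ∀ a, φ.Sat (consEnv a ρ)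
  | .ex φ => ∃ a, φ.Sat (consEnv a ρ)

/-- `ℕ ⊨ φ`. -/
def TrueN (φ : AFml) : Prop := φ.Sat fun _ => 0

/-! ### The arithmetical hierarchy: Δ₀, Σ₁, Π₁ -/

/-- `Δ₀` formulas: every quantifier is bounded. -/
inductive IsDelta0 : AFml → Prop
  | eq (t s : ATerm) : IsDelta0 (.eq t s)
  | le (t s : ATerm) : IsDelta0 (.le t s)
  | neg {φ} : IsDelta0 φ → IsDelta0 (.neg φ)
  | and {φ ψ} : IsDelta0 φ → IsDelta0 ψ → IsDelta0 (.and φ ψ)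
  | or {φ ψ} : IsDelta0 φ → IsDelta0 ψ → IsDelta0 (.or φ ψ)
  | imp {φ ψ} : IsDelta0 φ → IsDelta0 ψ → IsDelta0 (.imp φ ψ)
  | ball {φ : AFml} (t : ATerm) : IsDelta0 φ → IsDelta0 (.all (.imp (.le (.var 0) (ATerm.lift 0 t)) φ))
  | bex {φ : AFml} (t : ATerm) : IsDelta0 φ → IsDelta0 (.ex (.and (.le (.var 0) (ATerm.lift 0 t)) φ))

mutual
  /-- `Σ₁` formulas. -/
  inductive IsSigma1 : AFml → Prop
    | delta0 {φ} : IsDelta0 φ → IsSigma1 φ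
    | and {φ ψ} : IsSigma1 φ → IsSigma1 ψ → IsSigma1 (.and φ ψ)
    | or {φ ψ} : IsSigma1 φ → IsSigma1 ψ → IsSigma1 (.or φ ψ)
    | ex {φ} : IsSigma1 φ → IsSigma1 (.ex φ)
    | negPi {φ} : IsPi1 φ → IsSigma1 (.neg φ)
    | impPiSigma {φ ψ} : IsPi1 φ → IsSigma1 ψ → IsSigma1 (.imp φ ψ)
  /-- `Π₁` formulas. -/
  inductive IsPi1 : AFml → Prop
    | delta0 {φ} : IsDelta0 φ → IsPi1 φ
    | and {φ ψ} : IsPi1 φ → IsPi1 ψ → IsPi1 (.and φ ψ)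
    | or {φ ψ} : IsPi1 φ → IsPi1 ψ → IsPi1 (.or φ ψ)
    | all {φ} : IsPi1 φ → IsPi1 (.all φ)
    | negSigma {φ} : IsSigma1 φ → IsPi1 (.neg φ)
    | impSigmaPi {φ ψ} : IsSigma1 φ → IsPi1 ψ → IsPi1 (.imp φ ψ)
end

/-! ### A Hilbert-style proof system for first-order arithmetic -/

/-- Evaluation of an arithmetical formula under a valuation of its "propositionally atomic"
subformulas (atomic or quantified formulas); used for propositional tautologies and
tautological consequence. -/
def AFml.evalProp (v : AFml → Prop) : AFml → Prop
  | .neg φ => ¬ φ.evalProp v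
  | .and φ ψ => φ.evalProp v ∧ ψ.evalProp v
  | .or φ ψ => φ.evalProp v ∨ ψ.evalProp v
  | .imp φ ψ => φ.evalProp v → ψ.evalProp v
  | φ => v φ

/-- Propositional tautologies in the language of arithmetic. -/
def ATaut (φ : AFml) : Prop := ∀ v, φ.evalProp v

/-- `φ` is a tautological consequence of the set `X` of formulas. -/
def TC (X : Set AFml) (φ : AFml) : Prop :=
  ∀ v : AFml → Prop, (∀ ψ ∈ X, ψ.evalProp v) → φ.evalProp v

def iffF (φ ψ : AFml) : AFml := .and (.imp φ ψ) (.imp ψ φ)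

/-- Hilbert-style provability from the set of axioms `Γ` in classical first-order
logic with equality. -/
inductive Proves (Γ : Set AFml) : AFml → Prop
  | ax {φ} : φ ∈ Γ → Proves Γ φ
  | taut {φ} : ATaut φ → Proves Γ φ
  | mp {φ ψ} : Proves Γ (.imp φ ψ) → Proves Γ φ → Proves Γ ψ
  | allE (φ : AFml) (t : ATerm) : Proves Γ (.imp (.all φ) (φ.subst0 t))
  | exI (φ : AFml) (t : ATerm) : Proves Γ (.imp (φ.subst0 t) (.ex φ))
  | allImp (φ ψ : AFml) : Proves Γ (.imp (.all (.imp φ ψ)) (.imp (.all φ) (.all ψ)))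
  | vacAll (φ : AFml) : Proves Γ (.imp φ (.all (AFml.lift 0 φ)))
  | exDef (φ : AFml) : Proves Γ (iffF (.ex φ) (.neg (.all (.neg φ))))
  | gen {φ} : Proves Γ φ → Proves Γ (.all φ)
  | eqRefl (t : ATerm) : Proves Γ (.eq t t)
  | eqSubst (φ : AFml) (t s : ATerm) : Proves Γ (.imp (.eq t s) (.imp (φ.subst0 t) (φ.subst0 s)))

/-! ### Peano arithmetic -/

/-- The axioms of Peano arithmetic. -/
inductive PAax : AFml → Prop
  | succNeZero : PAax (.all (.neg (.eq (.succ (.var 0)) .zero)))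
  | succInj :
      PAax (.all (.all (.imp (.eq (.succ (.var 1)) (.succ (.var 0))) (.eq (.var 1) (.var 0)))))
  | addZero : PAax (.all (.eq (.add (.var 0) .zero) (.var 0)))
  | addSucc :
      PAax (.all (.all (.eq (.add (.var 1) (.succ (.var 0))) (.succ (.add (.var 1) (.var 0))))))
  | mulZero : PAax (.all (.eq (.mul (.var 0) .zero) .zero))
  | mulSucc :
      PAax (.all (.all (.eq (.mul (.var 1) (.succ (.var 0)))
        (.add (.mul (.var 1) (.var 0)) (.var 1)))))
  | leDef :
      PAax (.all (.all (iffF (.le (.var 1) (.var 0))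
        (.ex (.eq (.add (.var 0) (.var 2)) (.var 1))))))
  | ind (φ : AFml) :
      PAax (.imp (.and (φ.subst0 .zero) (.all (.imp φ (succSubst φ)))) (.all φ))

/-- Peano arithmetic, as a set of axioms. -/
def PA : Set AFml := {φ | PAax φ}

/-- The sentence `0 = 1`. -/
def botFml : AFml := .eq .zero (.succ .zero)

/-- `t < s`, as the formula `S(t) ≤ s`. -/
def ltF (t s : ATerm) : AFml := .le (.succ t) s

/-- `Δ₁(PA)` formulas: `Σ₁` formulas which are `PA`-provably equivalent to a `Π₁` formula. -/
def IsDelta1PA (φ : AFml) : Prop :=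
  IsSigma1 φ ∧ ∃ ψ, IsPi1 ψ ∧ Proves PA (iffF φ ψ)

/-! ### Theories, provability predicates, arithmetical interpretations -/

/-- `Tax` is primitive recursively axiomatized (via the Gödel numbering). -/
def PrAxiomatized (Tax : Set AFml) : Prop :=
  ∃ p : ℕ → Bool, Primrec p ∧ ∀ φ : AFml, φ ∈ Tax ↔ p φ.code = true

/-- `Σ₁`-soundness: every `T`-provable `Σ₁` sentence is true in `ℕ`. -/
def Sigma1Sound (Tax : Set AFml) : Prop :=
  ∀ φ : AFml, IsSigma1 φ → φ.FreeLt 0 → Proves Tax φ → TrueN φ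

/-- `P` is a provability predicate of `T`: a formula `P(x)` with at most the free
variable `x` such that for every formula `φ`, `T ⊢ φ` iff `PA ⊢ P(⌜φ⌝)`. -/
def IsProvPred (Tax : Set AFml) (P : AFml) : Prop :=
  P.FreeLt 1 ∧ ∀ φ : AFml, Proves Tax φ ↔ Proves PA (P.appNum φ)

/-- `f` is an arithmetical interpretation based on the predicate `P`. -/
def IsInterp (P : AFml) (f : MFml → AFml) : Prop :=
  (∀ i, (f (.var i)).FreeLt 0) ∧
  f .bot = botFml ∧
  (∀ A, f (.neg A) = .neg (f A)) ∧
  (∀ A B, f (.and A B) = .and (f A) (f B)) ∧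
  (∀ A B, f (.or A B) = .or (f A) (f B)) ∧
  (∀ A B, f (.imp A B) = .imp (f A) (f B)) ∧
  (∀ A, f (.box A) = P.appNum (f A))

/-- The provability logic of the predicate `P` (relative to the theory `Tax`). -/
def PL (Tax : Set AFml) (P : AFml) : Set MFml :=
  {A | ∀ f : MFml → AFml, IsInterp P f → Proves Tax (f A)}

/-- The formulas with a `T`-proof of code `≤ s` (relative to a proof enumeration `prf`). -/
def PTset (prf : ℕ → Option AFml) (s : ℕ) : Set AFml :=
  {φ | ∃ y ≤ s, prf y = some φ}

/-! ## Part 1 : syntax lemmas -/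

/-- The renaming that shifts the variables `≥ c`. -/
def lft (c : ℕ) : ℕ → ATerm := fun n => .var (if n < c then n else n + 1)

theorem ATerm.lift_eq (c : ℕ) (t : ATerm) : t.lift c = t.substAll (lft c) := by
  induction t <;> simp_all [ATerm.lift, ATerm.substAll, lft]

theorem liftSub_lft (c : ℕ) : liftSub (lft c) = lft (c + 1) := by
  funext n
  cases n with
  | zero => simp [liftSub, lft]
  | succ n => simp only [liftSub, lft, ATerm.lift]; grind

theorem AFml.lift_eq (c : ℕ) (φ : AFml) : φ.lift c = φ.substAll (lft c) := by
  induction φ generalizing c <;>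
    simp_all [AFml.lift, AFml.substAll, ATerm.lift_eq, liftSub_lft]

theorem ATerm.substAll_comp (σ τ : ℕ → ATerm) (t : ATerm) :
    (t.substAll σ).substAll τ = t.substAll (fun n => (σ n).substAll τ) := by
  induction t <;> simp_all [ATerm.substAll]

theorem liftSub_comp (σ τ : ℕ → ATerm) :
    (fun n => (liftSub σ n).substAll (liftSub τ)) = liftSub (fun n => (σ n).substAll τ) := by
  funext n
  cases n with
  | zero => simp [liftSub, ATerm.substAll]
  | succ n =>
    simp only [liftSub, ATerm.lift_eq, ATerm.substAll_comp]
    congr 1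
    funext k
    simp [lft, ATerm.substAll, liftSub, ATerm.lift_eq]

theorem AFml.substAll_comp (σ τ : ℕ → ATerm) (φ : AFml) :
    (φ.substAll σ).substAll τ = φ.substAll (fun n => (σ n).substAll τ) := by
  induction φ generalizing σ τ <;>
    simp_all [AFml.substAll, ATerm.substAll_comp, liftSub_comp]

theorem ATerm.substAll_congr {c : ℕ} {σ τ : ℕ → ATerm} (h : ∀ n < c, σ n = τ n) {t : ATerm}
    (ht : t.FreeLt c) : t.substAll σ = t.substAll τ := by
  induction t <;> simp_all [ATerm.substAll, ATerm.FreeLt]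

theorem AFml.substAll_congr {c : ℕ} {σ τ : ℕ → ATerm} (h : ∀ n < c, σ n = τ n) {φ : AFml}
    (ht : φ.FreeLt c) : φ.substAll σ = φ.substAll τ := by
  induction φ generalizing c σ τ with
  | eq t s => simp only [AFml.substAll, ATerm.substAll_congr h ht.1, ATerm.substAll_congr h ht.2]
  | le t s => simp only [AFml.substAll, ATerm.substAll_congr h ht.1, ATerm.substAll_congr h ht.2]
  | neg φ ih => simp only [AFml.substAll, ih h ht]
  | and φ ψ ih1 ih2 => simp only [AFml.substAll, ih1 h ht.1, ih2 h ht.2]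
  | or φ ψ ih1 ih2 => simp only [AFml.substAll, ih1 h ht.1, ih2 h ht.2]
  | imp φ ψ ih1 ih2 => simp only [AFml.substAll, ih1 h ht.1, ih2 h ht.2]
  | all φ ih =>
    simp only [AFml.substAll]
    rw [ih (c := c + 1) _ ht]
    intro n hn
    cases n with
    | zero => rfl
    | succ n => simp only [liftSub]; rw [h n (by omega)]
  | ex φ ih =>
    simp only [AFml.substAll]
    rw [ih (c := c + 1) _ ht]
    intro n hn
    cases n with
    | zero => rfl
    | succ n => simp only [liftSub]; rw [h n (by omega)]

theorem ATerm.substAll_var (t : ATerm) : t.substAll .var = t := by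
  induction t <;> simp_all [ATerm.substAll]

theorem liftSub_var : liftSub .var = .var := by
  funext n
  cases n <;> simp [liftSub, ATerm.lift]

theorem AFml.substAll_var (φ : AFml) : φ.substAll .var = φ := by
  induction φ <;> simp_all [AFml.substAll, ATerm.substAll_var, liftSub_var]

theorem ATerm.FreeLt.mono {c d : ℕ} (h : c ≤ d) {t : ATerm} (ht : t.FreeLt c) : t.FreeLt d := by
  induction t <;> simp_all [ATerm.FreeLt]
  omega

theorem AFml.FreeLt.mono {c d : ℕ} (h : c ≤ d) {t : AFml} (ht : t.FreeLt c) : t.FreeLt d := by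
  induction t generalizing c d with
  | eq t s => exact ⟨ht.1.mono h, ht.2.mono h⟩
  | le t s => exact ⟨ht.1.mono h, ht.2.mono h⟩
  | neg φ ih => exact ih h ht
  | and φ ψ ih1 ih2 => exact ⟨ih1 h ht.1, ih2 h ht.2⟩
  | or φ ψ ih1 ih2 => exact ⟨ih1 h ht.1, ih2 h ht.2⟩
  | imp φ ψ ih1 ih2 => exact ⟨ih1 h ht.1, ih2 h ht.2⟩
  | all φ ih => exact ih (c := c + 1) (d := d + 1) (by omega) ht
  | ex φ ih => exact ih (c := c + 1) (d := d + 1) (by omega) ht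

theorem ATerm.substAll_closed {σ : ℕ → ATerm} {t : ATerm} (ht : t.FreeLt 0) :
    t.substAll σ = t := by
  rw [ATerm.substAll_congr (c := 0) (τ := .var) (by simp) ht, ATerm.substAll_var]

theorem AFml.substAll_closed {σ : ℕ → ATerm} {t : AFml} (ht : t.FreeLt 0) :
    t.substAll σ = t := by
  rw [AFml.substAll_congr (c := 0) (τ := .var) (by simp) ht, AFml.substAll_var]

theorem ATerm.FreeLt_substAll {σ : ℕ → ATerm} {c d : ℕ} {t : ATerm} (ht : t.FreeLt c)
    (h : ∀ n < c, (σ n).FreeLt d) : (t.substAll σ).FreeLt d := by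
  induction t <;> simp_all [ATerm.substAll, ATerm.FreeLt]

theorem liftSub_FreeLt {σ : ℕ → ATerm} {c d : ℕ} (h : ∀ n < c, (σ n).FreeLt d) :
    ∀ n < c + 1, (liftSub σ n).FreeLt (d + 1) := by
  intro n hn
  cases n with
  | zero => simp [liftSub, ATerm.FreeLt]
  | succ n =>
    simp only [liftSub, ATerm.lift_eq]
    exact ATerm.FreeLt_substAll (h n (by omega)) (fun k hk => by simp [lft, ATerm.FreeLt, hk])

theorem AFml.FreeLt_substAll {σ : ℕ → ATerm} {c d : ℕ} {t : AFml} (ht : t.FreeLt c)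
    (h : ∀ n < c, (σ n).FreeLt d) : (t.substAll σ).FreeLt d := by
  induction t generalizing σ c d with
  | eq t s => exact ⟨ATerm.FreeLt_substAll ht.1 h, ATerm.FreeLt_substAll ht.2 h⟩
  | le t s => exact ⟨ATerm.FreeLt_substAll ht.1 h, ATerm.FreeLt_substAll ht.2 h⟩
  | neg φ ih => exact ih ht h
  | and φ ψ ih1 ih2 => exact ⟨ih1 ht.1 h, ih2 ht.2 h⟩
  | or φ ψ ih1 ih2 => exact ⟨ih1 ht.1 h, ih2 ht.2 h⟩
  | imp φ ψ ih1 ih2 => exact ⟨ih1 ht.1 h, ih2 ht.2 h⟩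
  | all φ ih => exact ih (c := c + 1) (d := d + 1) ht (liftSub_FreeLt h)
  | ex φ ih => exact ih (c := c + 1) (d := d + 1) ht (liftSub_FreeLt h)

theorem ATerm.exists_FreeLt (t : ATerm) : ∃ c, t.FreeLt c := by
  induction t with
  | var n => exact ⟨n + 1, by simp [ATerm.FreeLt]⟩
  | zero => exact ⟨0, trivial⟩
  | succ t ih => exact ih
  | add t s ih1 ih2 =>
    obtain ⟨a, ha⟩ := ih1
    obtain ⟨b, hb⟩ := ih2
    exact ⟨max a b, ha.mono (by simp), hb.mono (by simp)⟩
  | mul t s ih1 ih2 =>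
    obtain ⟨a, ha⟩ := ih1
    obtain ⟨b, hb⟩ := ih2
    exact ⟨max a b, ha.mono (by simp), hb.mono (by simp)⟩

theorem AFml.exists_FreeLt (t : AFml) : ∃ c, t.FreeLt c := by
  induction t with
  | eq t s | le t s =>
    obtain ⟨a, ha⟩ := t.exists_FreeLt
    obtain ⟨b, hb⟩ := s.exists_FreeLt
    exact ⟨max a b, ha.mono (by simp), hb.mono (by simp)⟩
  | neg φ ih => exact ih
  | and t s ih1 ih2 | or t s ih1 ih2 | imp t s ih1 ih2 =>
    obtain ⟨a, ha⟩ := ih1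
    obtain ⟨b, hb⟩ := ih2
    exact ⟨max a b, ha.mono (by simp), hb.mono (by simp)⟩
  | all φ ih | ex φ ih =>
    obtain ⟨a, ha⟩ := ih
    exact ⟨a, AFml.FreeLt.mono (Nat.le_succ a) ha⟩

theorem ATerm.val_substAll (σ : ℕ → ATerm) (ρ : ℕ → ℕ) (t : ATerm) :
    (t.substAll σ).val ρ = t.val (fun n => (σ n).val ρ) := by
  induction t <;> simp_all [ATerm.substAll, ATerm.val]

theorem liftSub_val (σ : ℕ → ATerm) (ρ : ℕ → ℕ) (a : ℕ) :
    (fun n => (liftSub σ n).val (consEnv a ρ)) = consEnv a (fun n => (σ n).val ρ) := by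
  funext n
  cases n with
  | zero => rfl
  | succ n =>
    simp only [liftSub, ATerm.lift_eq, ATerm.val_substAll, consEnv]
    rfl

theorem AFml.Sat_substAll (σ : ℕ → ATerm) (ρ : ℕ → ℕ) (φ : AFml) :
    (φ.substAll σ).Sat ρ ↔ φ.Sat (fun n => (σ n).val ρ) := by
  induction φ generalizing σ ρ <;>
    simp_all [AFml.substAll, AFml.Sat, ATerm.val_substAll, liftSub_val]

theorem ATerm.lift_substAll_liftSub (σ : ℕ → ATerm) (t : ATerm) :
    (t.lift 0).substAll (liftSub σ) = (t.substAll σ).lift 0 := by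
  simp only [ATerm.lift_eq, ATerm.substAll_comp]
  congr 1
  funext k
  simp [lft, ATerm.substAll, liftSub, ATerm.lift_eq]

theorem IsDelta0.substAll {φ : AFml} (h : IsDelta0 φ) (σ : ℕ → ATerm) :
    IsDelta0 (φ.substAll σ) := by
  induction h generalizing σ with
  | eq t s => exact .eq _ _
  | le t s => exact .le _ _
  | neg _ ih => exact .neg (ih σ)
  | and _ _ ih1 ih2 => exact .and (ih1 σ) (ih2 σ)
  | or _ _ ih1 ih2 => exact .or (ih1 σ) (ih2 σ)
  | imp _ _ ih1 ih2 => exact .imp (ih1 σ) (ih2 σ)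
  | ball t _ ih =>
    simp only [AFml.substAll, ATerm.lift_substAll_liftSub]
    exact .ball _ (ih _)
  | bex t _ ih =>
    simp only [AFml.substAll, ATerm.lift_substAll_liftSub]
    exact .bex _ (ih _)

theorem numeral_FreeLt (n : ℕ) : (numeral n).FreeLt 0 := by
  induction n with
  | zero => trivial
  | succ n ih => exact ih

@[simp] theorem numeral_substAll (n : ℕ) (σ : ℕ → ATerm) : (numeral n).substAll σ = numeral n :=
  ATerm.substAll_closed (numeral_FreeLt n)

@[simp] theorem numeral_lift (n c : ℕ) : (numeral n).lift c = numeral n := by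
  rw [ATerm.lift_eq, numeral_substAll]

@[simp] theorem numeral_val (n : ℕ) (ρ : ℕ → ℕ) : (numeral n).val ρ = n := by
  induction n with
  | zero => rfl
  | succ n ih => simp [numeral, ATerm.val, ih]

theorem numeral_inj {a b : ℕ} (h : numeral a = numeral b) : a = b := by
  have := congrArg (fun t => ATerm.val (fun _ => 0) t) h
  simpa using this

/-- The substitution of numerals given by an environment. -/
def numS (ρ : ℕ → ℕ) : ℕ → ATerm := fun n => numeral (ρ n)

/-- `φ` with all its variables replaced by numerals. -/
def AFml.inst (φ : AFml) (ρ : ℕ → ℕ) : AFml := φ.substAll (numS ρ)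

/-- `φ` with all its variables but `var 0` replaced by numerals. -/
def AFml.inst1 (φ : AFml) (ρ : ℕ → ℕ) : AFml := φ.substAll (liftSub (numS ρ))

theorem liftSub_numS_succ (ρ : ℕ → ℕ) (n : ℕ) : liftSub (numS ρ) (n + 1) = numeral (ρ n) := by
  simp [liftSub, numS]

theorem AFml.inst1_subst0 (φ : AFml) (ρ : ℕ → ℕ) (t : ATerm) :
    (φ.inst1 ρ).subst0 t = φ.substAll (fun n => match n with | 0 => t | n + 1 => numeral (ρ n)) := by
  simp only [AFml.inst1, AFml.subst0, AFml.substAll_comp]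
  congr 1
  funext n
  cases n with
  | zero => simp [liftSub, ATerm.substAll, subst0Env]
  | succ n => simp [liftSub_numS_succ]

theorem AFml.inst1_subst0_num (φ : AFml) (ρ : ℕ → ℕ) (a : ℕ) :
    (φ.inst1 ρ).subst0 (numeral a) = φ.inst (consEnv a ρ) := by
  rw [AFml.inst1_subst0, AFml.inst]
  congr 1
  funext n
  cases n <;> rfl

theorem AFml.inst1_subst0_var (φ : AFml) (ρ : ℕ → ℕ) :
    (φ.inst1 ρ).subst0 (.var 0) = φ.inst1 ρ := by
  rw [AFml.inst1_subst0, AFml.inst1]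
  congr 1
  funext n
  cases n with
  | zero => rfl
  | succ n => simp [liftSub_numS_succ]

theorem AFml.inst_substAll (φ : AFml) (ρ : ℕ → ℕ) (σ : ℕ → ATerm) :
    (φ.inst ρ).substAll σ = φ.inst ρ := by
  simp only [AFml.inst, AFml.substAll_comp]
  congr 1
  funext n
  simp [numS]

theorem AFml.inst_lift (φ : AFml) (ρ : ℕ → ℕ) (c : ℕ) : (φ.inst ρ).lift c = φ.inst ρ := by
  rw [AFml.lift_eq, AFml.inst_substAll]

theorem AFml.lift_subst0 (φ : AFml) (t : ATerm) : (φ.lift 0).subst0 t = φ := by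
  rw [AFml.lift_eq, AFml.subst0, AFml.substAll_comp]
  conv_rhs => rw [← AFml.substAll_var φ]
  congr 1

theorem ATerm.lift_subst0 (φ : ATerm) (t : ATerm) : (φ.lift 0).substAll (subst0Env t) = φ := by
  rw [ATerm.lift_eq, ATerm.substAll_comp]
  conv_rhs => rw [← ATerm.substAll_var φ]
  congr 1

/-! ## Part 2 : derivations in the Hilbert calculus and in PA -/

theorem Proves.mono {Γ Δ : Set AFml} (h : Γ ⊆ Δ) {φ : AFml} (hp : Proves Γ φ) : Proves Δ φ := by
  induction hp with
  | ax h' => exact .ax (h h')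
  | taut h' => exact .taut h'
  | mp _ _ ih1 ih2 => exact .mp ih1 ih2
  | allE φ t => exact .allE φ t
  | exI φ t => exact .exI φ t
  | allImp φ ψ => exact .allImp φ ψ
  | vacAll φ => exact .vacAll φ
  | exDef φ => exact .exDef φ
  | gen _ ih => exact .gen ih
  | eqRefl t => exact .eqRefl t
  | eqSubst φ t s => exact .eqSubst φ t s

section hilb
variable {Γ : Set AFml}

theorem Proves.tc1 {a c : AFml} (ha : Proves Γ a)
    (h : ∀ v, a.evalProp v → c.evalProp v) : Proves Γ c :=
  .mp (.taut (φ := .imp a c) (fun v => h v)) ha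

theorem Proves.tc2 {a b c : AFml} (ha : Proves Γ a) (hb : Proves Γ b)
    (h : ∀ v, a.evalProp v → b.evalProp v → c.evalProp v) : Proves Γ c :=
  .mp (.mp (.taut (φ := .imp a (.imp b c)) (fun v => h v)) ha) hb

theorem Proves.tc3 {a b d c : AFml} (ha : Proves Γ a) (hb : Proves Γ b) (hd : Proves Γ d)
    (h : ∀ v, a.evalProp v → b.evalProp v → d.evalProp v → c.evalProp v) : Proves Γ c :=
  .mp (.mp (.mp (.taut (φ := .imp a (.imp b (.imp d c))) (fun v => h v)) ha) hb) hd

theorem Proves.tc4 {a b d e c : AFml} (ha : Proves Γ a) (hb : Proves Γ b) (hd : Proves Γ d)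
    (he : Proves Γ e)
    (h : ∀ v, a.evalProp v → b.evalProp v → d.evalProp v → e.evalProp v → c.evalProp v) :
    Proves Γ c :=
  .mp (.mp (.mp (.mp (.taut (φ := .imp a (.imp b (.imp d (.imp e c)))) (fun v => h v)) ha) hb) hd) he

theorem Proves.inst0 {φ : AFml} (h : Proves Γ φ) (t : ATerm) : Proves Γ (φ.subst0 t) :=
  .mp (.allE φ t) (.gen h)

/-- existential elimination -/
theorem Proves.exE {φ ψ : AFml} (h : Proves Γ (.imp φ (ψ.lift 0))) :
    Proves Γ (.imp (.ex φ) ψ) := by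
  have h1 : Proves Γ (.imp (.neg (ψ.lift 0)) (.neg φ)) :=
    h.tc1 (by intro v; simp only [AFml.evalProp]; tauto)
  have h2 := Proves.mp (.allImp _ _) (.gen h1)
  have h3 : Proves Γ (.imp (.neg ψ) (.all (.neg (ψ.lift 0)))) := Proves.vacAll (.neg ψ)
  refine Proves.tc3 h2 h3 (.exDef φ) ?_
  intro v
  simp only [AFml.evalProp, iffF]
  tauto

theorem Proves.neg_ex {φ : AFml} (h : Proves Γ (.neg φ)) : Proves Γ (.neg (.ex φ)) := by
  refine Proves.tc2 (Proves.gen h) (.exDef φ) ?_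
  intro v
  simp only [AFml.evalProp, iffF]
  tauto

theorem eqSymm (t s : ATerm) : Proves Γ (.imp (.eq t s) (.eq s t)) := by
  have h := Proves.eqSubst (Γ := Γ) (.eq (.var 0) (t.lift 0)) t s
  simp only [AFml.subst0, AFml.substAll, ATerm.substAll, subst0Env, ATerm.lift_subst0] at h
  exact h.tc2 (.eqRefl t) (by intro v; simp only [AFml.evalProp]; tauto)

theorem eqTrans (t s r : ATerm) : Proves Γ (.imp (.eq t s) (.imp (.eq s r) (.eq t r))) := by
  have h := Proves.eqSubst (Γ := Γ) (.eq (t.lift 0) (.var 0)) s r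
  simp only [AFml.subst0, AFml.substAll, ATerm.substAll, subst0Env, ATerm.lift_subst0] at h
  exact h.tc1 (by intro v; simp only [AFml.evalProp]; tauto)

theorem eqSucc (t s : ATerm) : Proves Γ (.imp (.eq t s) (.eq (.succ t) (.succ s))) := by
  have h := Proves.eqSubst (Γ := Γ) (.eq (.succ (t.lift 0)) (.succ (.var 0))) t s
  simp only [AFml.subst0, AFml.substAll, ATerm.substAll, subst0Env, ATerm.lift_subst0] at h
  exact h.tc2 (.eqRefl (.succ t)) (by intro v; simp only [AFml.evalProp]; tauto)

theorem eqAddL (t s r : ATerm) : Proves Γ (.imp (.eq t s) (.eq (.add t r) (.add s r))) := by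
  have h := Proves.eqSubst (Γ := Γ) (.eq (.add (t.lift 0) (r.lift 0)) (.add (.var 0) (r.lift 0))) t s
  simp only [AFml.subst0, AFml.substAll, ATerm.substAll, subst0Env, ATerm.lift_subst0] at h
  exact h.tc2 (.eqRefl (.add t r)) (by intro v; simp only [AFml.evalProp]; tauto)

theorem eqAddR (t s r : ATerm) : Proves Γ (.imp (.eq t s) (.eq (.add r t) (.add r s))) := by
  have h := Proves.eqSubst (Γ := Γ) (.eq (.add (r.lift 0) (t.lift 0)) (.add (r.lift 0) (.var 0))) t s
  simp only [AFml.subst0, AFml.substAll, ATerm.substAll, subst0Env, ATerm.lift_subst0] at h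
  exact h.tc2 (.eqRefl (.add r t)) (by intro v; simp only [AFml.evalProp]; tauto)

theorem eqMulL (t s r : ATerm) : Proves Γ (.imp (.eq t s) (.eq (.mul t r) (.mul s r))) := by
  have h := Proves.eqSubst (Γ := Γ) (.eq (.mul (t.lift 0) (r.lift 0)) (.mul (.var 0) (r.lift 0))) t s
  simp only [AFml.subst0, AFml.substAll, ATerm.substAll, subst0Env, ATerm.lift_subst0] at h
  exact h.tc2 (.eqRefl (.mul t r)) (by intro v; simp only [AFml.evalProp]; tauto)

theorem eqMulR (t s r : ATerm) : Proves Γ (.imp (.eq t s) (.eq (.mul r t) (.mul r s))) := by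
  have h := Proves.eqSubst (Γ := Γ) (.eq (.mul (r.lift 0) (t.lift 0)) (.mul (r.lift 0) (.var 0))) t s
  simp only [AFml.subst0, AFml.substAll, ATerm.substAll, subst0Env, ATerm.lift_subst0] at h
  exact h.tc2 (.eqRefl (.mul r t)) (by intro v; simp only [AFml.evalProp]; tauto)

theorem eqLeL (t s r : ATerm) : Proves Γ (.imp (.eq t s) (.imp (.le t r) (.le s r))) := by
  have h := Proves.eqSubst (Γ := Γ) (.le (.var 0) (r.lift 0)) t s
  simpa only [AFml.subst0, AFml.substAll, ATerm.substAll, subst0Env, ATerm.lift_subst0] using h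

theorem eqLeR (t s r : ATerm) : Proves Γ (.imp (.eq t s) (.imp (.le r t) (.le r s))) := by
  have h := Proves.eqSubst (Γ := Γ) (.le (r.lift 0) (.var 0)) t s
  simpa only [AFml.subst0, AFml.substAll, ATerm.substAll, subst0Env, ATerm.lift_subst0] using h

theorem Proves.symm {t s : ATerm} (h : Proves Γ (.eq t s)) : Proves Γ (.eq s t) :=
  .mp (eqSymm t s) h

theorem Proves.trans {t s r : ATerm} (h : Proves Γ (.eq t s)) (h' : Proves Γ (.eq s r)) :
    Proves Γ (.eq t r) :=
  .mp (.mp (eqTrans t s r) h) h'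

end hilb

/-! ### Arithmetic in PA -/

theorem paAddZero (t : ATerm) : Proves PA (.eq (.add t .zero) t) := by
  have h := Proves.mp (.allE _ t) (Proves.ax (Γ := PA) PAax.addZero)
  simpa [AFml.subst0, AFml.substAll, ATerm.substAll, subst0Env] using h

theorem paMulZero (t : ATerm) : Proves PA (.eq (.mul t .zero) .zero) := by
  have h := Proves.mp (.allE _ t) (Proves.ax (Γ := PA) PAax.mulZero)
  simpa [AFml.subst0, AFml.substAll, ATerm.substAll, subst0Env] using h

theorem paSuccNe (t : ATerm) : Proves PA (.neg (.eq (.succ t) .zero)) := by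
  have h := Proves.mp (.allE _ t) (Proves.ax (Γ := PA) PAax.succNeZero)
  simpa [AFml.subst0, AFml.substAll, ATerm.substAll, subst0Env] using h

theorem paAddSucc (t s : ATerm) :
    Proves PA (.eq (.add t (.succ s)) (.succ (.add t s))) := by
  have h := Proves.mp (.allE _ t) (Proves.ax (Γ := PA) PAax.addSucc)
  have h := Proves.mp (.allE _ s) h
  simpa [AFml.subst0, AFml.substAll, ATerm.substAll, subst0Env, liftSub, ATerm.lift_subst0] using h

theorem paMulSucc (t s : ATerm) :
    Proves PA (.eq (.mul t (.succ s)) (.add (.mul t s) t)) := by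
  have h := Proves.mp (.allE _ t) (Proves.ax (Γ := PA) PAax.mulSucc)
  have h := Proves.mp (.allE _ s) h
  simpa [AFml.subst0, AFml.substAll, ATerm.substAll, subst0Env, liftSub, ATerm.lift_subst0] using h

theorem paSuccInj (t s : ATerm) :
    Proves PA (.imp (.eq (.succ t) (.succ s)) (.eq t s)) := by
  have h := Proves.mp (.allE _ t) (Proves.ax (Γ := PA) PAax.succInj)
  have h := Proves.mp (.allE _ s) h
  simpa [AFml.subst0, AFml.substAll, ATerm.substAll, subst0Env, liftSub, ATerm.lift_subst0] using h

theorem paLeDef (a b : ATerm) :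
    Proves PA (iffF (.le a b) (.ex (.eq (.add (.var 0) (a.lift 0)) (b.lift 0)))) := by
  have h := Proves.mp (.allE _ a) (Proves.ax (Γ := PA) PAax.leDef)
  have h := Proves.mp (.allE _ b) h
  simpa [AFml.subst0, AFml.substAll, ATerm.substAll, subst0Env, liftSub, ATerm.lift_subst0, iffF,
    ATerm.lift_substAll_liftSub, ATerm.lift] using h

theorem leIntro (z a b : ATerm) : Proves PA (.imp (.eq (.add z a) b) (.le a b)) := by
  have h := Proves.exI (Γ := PA) (.eq (.add (.var 0) (a.lift 0)) (b.lift 0)) z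
  simp only [AFml.subst0, AFml.substAll, ATerm.substAll, subst0Env, ATerm.lift_subst0] at h
  refine h.tc2 (paLeDef a b) ?_
  intro v
  simp only [AFml.evalProp, iffF]
  tauto

theorem leElim {a b : ATerm} {ψ : AFml}
    (h : Proves PA (.imp (.eq (.add (.var 0) (a.lift 0)) (b.lift 0)) (ψ.lift 0))) :
    Proves PA (.imp (.le a b) ψ) := by
  refine (Proves.exE h).tc2 (paLeDef a b) ?_
  intro v
  simp only [AFml.evalProp, iffF]
  tauto

theorem paZS : Proves PA (.or (.eq (.var 0) .zero) (.ex (.eq (.var 1) (.succ (.var 0))))) := by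
  have hi := Proves.ax (Γ := PA)
    (PAax.ind (.or (.eq (.var 0) .zero) (.ex (.eq (.var 1) (.succ (.var 0))))))
  have h0 : Proves PA (AFml.subst0
      (.or (.eq (.var 0) .zero) (.ex (.eq (.var 1) (.succ (.var 0))))) .zero) := by
    simp only [AFml.subst0, AFml.substAll, ATerm.substAll, subst0Env]
    exact (Proves.eqRefl .zero).tc1 (by intro v; simp only [AFml.evalProp]; tauto)
  have hx := Proves.exI (Γ := PA) (.eq (.succ (.var 1)) (.succ (.var 0))) (.var 0)
  simp only [AFml.subst0, AFml.substAll, ATerm.substAll, subst0Env] at hx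
  have h1 : Proves PA (.all (.imp (.or (.eq (.var 0) .zero) (.ex (.eq (.var 1) (.succ (.var 0)))))
      (succSubst (.or (.eq (.var 0) .zero) (.ex (.eq (.var 1) (.succ (.var 0)))))))) := by
    refine .gen ?_
    simp only [succSubst, AFml.substAll, ATerm.substAll, liftSub, if_true, ATerm.lift]
    exact hx.tc2 (Proves.eqRefl (.succ (.var 0)))
      (by intro v; simp only [AFml.evalProp]; tauto)
  have h2 := Proves.mp hi (h0.tc2 h1 (by intro v; simp only [AFml.evalProp]; tauto))
  have h3 := Proves.mp (.allE _ (.var 0)) h2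
  simpa [AFml.subst0, AFml.substAll, ATerm.substAll, subst0Env, liftSub, ATerm.lift] using h3

theorem zsElim {t : ATerm} {ψ : AFml} (h0 : Proves PA (.imp (.eq t .zero) ψ))
    (h1 : Proves PA (.imp (.eq (t.lift 0) (.succ (.var 0))) (ψ.lift 0))) : Proves PA ψ := by
  have h := paZS.inst0 t
  simp only [AFml.subst0, AFml.substAll, ATerm.substAll, subst0Env, liftSub] at h
  refine h.tc3 h0 (Proves.exE h1) ?_
  intro v
  simp only [AFml.evalProp]
  tauto

theorem paS0 (t s : ATerm) : Proves PA (.imp (.eq t (.succ s)) (.neg (.le t .zero))) := by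
  have h : Proves PA (.imp (.le t .zero) (.neg (.eq t (.succ s)))) := by
    refine leElim ?_
    simp only [AFml.lift, ATerm.lift]
    -- z + t = 0, t = S s
    refine Proves.tc4 (eqAddR (t.lift 0) (.succ (s.lift 0)) (.var 0))
      (eqTrans (.succ (.add (.var 0) (s.lift 0))) (.add (.var 0) (t.lift 0)) .zero)
      (paSuccNe (.add (.var 0) (s.lift 0))) (a := _) (c := _)
      (e := .imp (.eq (.add (.var 0) (t.lift 0)) (.add (.var 0) (.succ (s.lift 0))))
        (.eq (.succ (.add (.var 0) (s.lift 0))) (.add (.var 0) (t.lift 0)))) ?_ ?_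
    · refine Proves.tc3 (eqTrans (.add (.var 0) (t.lift 0)) (.add (.var 0) (.succ (s.lift 0)))
        (.succ (.add (.var 0) (s.lift 0)))) (paAddSucc (.var 0) (s.lift 0))
        (eqSymm (.add (.var 0) (t.lift 0)) (.succ (.add (.var 0) (s.lift 0)))) ?_
      intro v
      simp only [AFml.evalProp]
      tauto
    · intro v
      simp only [AFml.evalProp]
      tauto
  refine h.tc1 ?_
  intro v
  simp only [AFml.evalProp]
  tauto

theorem paS1 (t s r : ATerm) :
    Proves PA (.imp (.eq t (.succ s)) (.imp (.le t (.succ r)) (.le s r))) := by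
  have h : Proves PA (.imp (.le t (.succ r)) (.imp (.eq t (.succ s)) (.le s r))) := by
    refine leElim ?_
    simp only [AFml.lift, ATerm.lift]
    -- z + t = S r, t = S s
    have e1 : Proves PA (.imp (.eq (.add (.var 0) (t.lift 0)) (.add (.var 0) (.succ (s.lift 0))))
        (.eq (.succ (.add (.var 0) (s.lift 0))) (.add (.var 0) (t.lift 0)))) := by
      refine Proves.tc3 (eqTrans (.add (.var 0) (t.lift 0)) (.add (.var 0) (.succ (s.lift 0)))
        (.succ (.add (.var 0) (s.lift 0)))) (paAddSucc (.var 0) (s.lift 0))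
        (eqSymm (.add (.var 0) (t.lift 0)) (.succ (.add (.var 0) (s.lift 0)))) ?_
      intro v
      simp only [AFml.evalProp]
      tauto
    have e2 : Proves PA (.imp (.eq (t.lift 0) (.succ (s.lift 0)))
        (.imp (.eq (.add (.var 0) (t.lift 0)) (.succ (r.lift 0)))
        (.eq (.succ (.add (.var 0) (s.lift 0))) (.succ (r.lift 0))))) := by
      refine Proves.tc3 e1 (eqAddR (t.lift 0) (.succ (s.lift 0)) (.var 0))
        (eqTrans (.succ (.add (.var 0) (s.lift 0))) (.add (.var 0) (t.lift 0)) (.succ (r.lift 0))) ?_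
      intro v
      simp only [AFml.evalProp]
      tauto
    refine Proves.tc3 e2 (paSuccInj (.add (.var 0) (s.lift 0)) (r.lift 0))
      (leIntro (.var 0) (s.lift 0) (r.lift 0)) ?_
    intro v
    simp only [AFml.evalProp]
    tauto
  refine h.tc1 ?_
  intro v
  simp only [AFml.evalProp]
  tauto

/-- The disjunction `t = 0 ∨ ... ∨ t = n`. -/
def Dis : ℕ → ATerm → AFml
  | 0, t => .eq t .zero
  | n + 1, t => .or (Dis n t) (.eq t (numeral (n + 1)))

theorem Dis_subst (n : ℕ) (t : ATerm) (σ : ℕ → ATerm) :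
    (Dis n t).substAll σ = Dis n (t.substAll σ) := by
  induction n with
  | zero => simp [Dis, AFml.substAll, ATerm.substAll]
  | succ n ih => simp [Dis, AFml.substAll, ih]

theorem Dis_zero (n : ℕ) (t : ATerm) : Proves PA (.imp (.eq t .zero) (Dis n t)) := by
  induction n with
  | zero => exact .taut (by intro v; simp only [AFml.evalProp, Dis]; tauto)
  | succ n ih => exact ih.tc1 (by intro v; simp only [AFml.evalProp, Dis]; tauto)

theorem Dis_succ (n : ℕ) (t s : ATerm) :
    Proves PA (.imp (.eq t (.succ s)) (.imp (Dis n s) (Dis (n + 1) t))) := by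
  induction n with
  | zero =>
    refine Proves.tc2 (eqTrans t (.succ s) (.succ .zero)) (eqSucc s .zero) ?_
    intro v
    simp only [AFml.evalProp, Dis, numeral]
    tauto
  | succ n ih =>
    refine Proves.tc3 ih (eqTrans t (.succ s) (.succ (numeral (n + 1))))
      (eqSucc s (numeral (n + 1))) ?_
    intro v
    simp only [AFml.evalProp, Dis]
    rw [show numeral (n + 1 + 1) = .succ (numeral (n + 1)) from rfl]
    tauto

theorem le_Dis (n : ℕ) (t : ATerm) : Proves PA (.imp (.le t (numeral n)) (Dis n t)) := by
  have key : Proves PA (.imp (.le (.var 0) (numeral n)) (Dis n (.var 0))) := by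
    induction n with
    | zero =>
      refine zsElim (t := .var 0) ((Dis_zero 0 (.var 0)).tc1 ?_) ?_
      · intro v; simp only [AFml.evalProp]; tauto
      · simp only [AFml.lift, numeral, ATerm.lift]
        exact (paS0 (.var 1) (.var 0)).tc1 (by intro v; simp only [AFml.evalProp]; tauto)
    | succ n ih =>
      refine zsElim (t := .var 0) ((Dis_zero (n + 1) (.var 0)).tc1 ?_) ?_
      · exact fun v h h0 _ => h h0
      · have ih' := ih
        simp only [AFml.lift_eq, AFml.substAll, numeral_substAll, Dis_subst, ATerm.lift_eq,
          ATerm.substAll, lft]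
        refine Proves.tc3 (paS1 (.var 1) (.var 0) (numeral n)) ih (Dis_succ n (.var 1) (.var 0)) ?_
        intro v
        simp only [Nat.not_lt_zero, if_false]
        exact fun a b c d e => c d (b (a d e))
  have := key.inst0 t
  simpa [AFml.subst0, AFml.substAll, Dis_subst, ATerm.substAll, subst0Env] using this

theorem leCases {n : ℕ} {t : ATerm} {ψ : AFml}
    (h : ∀ i ≤ n, Proves PA (.imp (.eq t (numeral i)) ψ)) :
    Proves PA (.imp (.le t (numeral n)) ψ) := by
  have key : Proves PA (.imp (Dis n t) ψ) := by
    induction n with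
    | zero => exact h 0 le_rfl
    | succ n ih =>
      exact (ih (fun i hi => h i (by omega))).tc2 (h (n + 1) le_rfl)
        (by intro v; simp only [AFml.evalProp, Dis]; tauto)
  exact (le_Dis n t).tc2 key (by intro v; simp only [AFml.evalProp]; tauto)

theorem numAdd (a b : ℕ) : Proves PA (.eq (.add (numeral a) (numeral b)) (numeral (a + b))) := by
  induction b with
  | zero => exact paAddZero _
  | succ b ih => exact (paAddSucc _ _).trans (.mp (eqSucc _ _) ih)

theorem numMul (a b : ℕ) : Proves PA (.eq (.mul (numeral a) (numeral b)) (numeral (a * b))) := by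
  induction b with
  | zero => exact paMulZero _
  | succ b ih =>
    exact (paMulSucc _ _).trans ((Proves.mp (eqAddL _ _ _) ih).trans (numAdd _ _))

theorem numNe {a b : ℕ} (h : a ≠ b) : Proves PA (.neg (.eq (numeral a) (numeral b))) := by
  induction a generalizing b with
  | zero =>
    cases b with
    | zero => exact absurd rfl h
    | succ b =>
      exact (paSuccNe (numeral b)).tc2 (eqSymm (numeral 0) (numeral (b + 1)))
        (by intro v; simp only [AFml.evalProp, numeral]; tauto)
  | succ a ih =>
    cases b with
    | zero => exact paSuccNe _
    | succ b =>
      exact (ih (b := b) (by omega)).tc2 (paSuccInj _ _)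
        (by intro v; simp only [AFml.evalProp, numeral]; tauto)

theorem numLe {a b : ℕ} (h : a ≤ b) : Proves PA (.le (numeral a) (numeral b)) := by
  obtain ⟨c, rfl⟩ := Nat.exists_eq_add_of_le' h
  exact .mp (leIntro (numeral c) _ _) (numAdd c a)

theorem numNle {a b : ℕ} (h : ¬ a ≤ b) : Proves PA (.neg (.le (numeral a) (numeral b))) := by
  have : Proves PA (.imp (.le (numeral a) (numeral b)) (.neg (.eq .zero .zero))) := by
    refine leCases fun i hi => ?_
    exact (numNe (a := a) (b := i) (by omega)).tc1 (by intro v; simp only [AFml.evalProp]; tauto)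
  exact this.tc2 (.eqRefl .zero) (by intro v; simp only [AFml.evalProp]; tauto)

theorem succAddNum (v : ATerm) (n : ℕ) :
    Proves PA (.eq (.add (.succ v) (numeral n)) (.add v (.succ (numeral n)))) := by
  induction n with
  | zero =>
    exact (paAddZero _).trans ((paAddSucc v .zero).trans (.mp (eqSucc _ _) (paAddZero v))).symm
  | succ n ih =>
    exact (paAddSucc _ _).trans ((Proves.mp (eqSucc _ _) ih).trans (paAddSucc v _).symm)

theorem dichotomy (n : ℕ) (t : ATerm) :
    Proves PA (.or (.le t (numeral n)) (.le (numeral n) t)) := by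
  induction n with
  | zero =>
    exact (Proves.mp (leIntro t .zero t) (paAddZero t)).tc1
      (by intro v; simp only [AFml.evalProp, numeral]; tauto)
  | succ n ih =>
    have h1 : Proves PA (.imp (.le t (numeral n)) (.le t (numeral (n + 1)))) := by
      refine leCases fun i hi => ?_
      refine Proves.tc3 (eqSymm t (numeral i)) (eqLeL (numeral i) t (numeral (n + 1)))
        (numLe (a := i) (b := n + 1) (by omega)) ?_
      intro v; simp only [AFml.evalProp]; tauto
    have h2 : Proves PA (.imp (.le (numeral n) t)
        (.or (.le t (numeral (n + 1))) (.le (numeral (n + 1)) t))) := by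
      refine leElim ?_
      simp only [AFml.lift, numeral_lift]
      refine zsElim (t := .var 0) ?_ ?_
      · have a1 : Proves PA (.imp (.eq (.var 0) .zero)
            (.eq (.add (.var 0) (numeral n)) (numeral n))) := by
          have := numAdd 0 n
          rw [Nat.zero_add] at this
          refine Proves.tc3 (eqAddL (.var 0) .zero (numeral n)) this
            (eqTrans (.add (.var 0) (numeral n)) (.add .zero (numeral n)) (numeral n)) ?_
          intro v; simp only [AFml.evalProp, numeral]; tauto
        have a2 : Proves PA (.imp (.eq (.add (.var 0) (numeral n)) (numeral n))
            (.imp (.eq (.add (.var 0) (numeral n)) (t.lift 0)) (.eq (numeral n) (t.lift 0)))) := by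
          refine Proves.tc2 (eqSymm (.add (.var 0) (numeral n)) (numeral n))
            (eqTrans (numeral n) (.add (.var 0) (numeral n)) (t.lift 0)) ?_
          intro v; simp only [AFml.evalProp]; tauto
        refine Proves.tc4 a1 a2 (eqLeL (numeral n) (t.lift 0) (numeral (n + 1)))
          (numLe (a := n) (b := n + 1) (by omega)) ?_
        intro v; simp only [AFml.evalProp]; tauto
      · simp only [AFml.lift, ATerm.lift, numeral_lift]
        simp only [Nat.not_lt_zero, if_false]
        have a1 : Proves PA (.imp (.eq (.var 1) (.succ (.var 0)))
            (.eq (.add (.var 1) (numeral n)) (.add (.var 0) (.succ (numeral n))))) := by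
          refine Proves.tc3 (eqAddL (.var 1) (.succ (.var 0)) (numeral n)) (succAddNum (.var 0) n)
            (eqTrans (.add (.var 1) (numeral n)) (.add (.succ (.var 0)) (numeral n))
              (.add (.var 0) (.succ (numeral n)))) ?_
          intro v; simp only [AFml.evalProp]; tauto
        have a2 : Proves PA (.imp
            (.eq (.add (.var 1) (numeral n)) (.add (.var 0) (.succ (numeral n))))
            (.imp (.eq (.add (.var 1) (numeral n)) ((t.lift 0).lift 0))
              (.eq (.add (.var 0) (.succ (numeral n))) ((t.lift 0).lift 0)))) := by
          refine Proves.tc2 (eqSymm (.add (.var 1) (numeral n)) (.add (.var 0) (.succ (numeral n))))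
            (eqTrans (.add (.var 0) (.succ (numeral n))) (.add (.var 1) (numeral n))
              ((t.lift 0).lift 0)) ?_
          intro v; simp only [AFml.evalProp]; tauto
        refine Proves.tc3 a1 a2
          (leIntro (.var 0) (.succ (numeral n)) ((t.lift 0).lift 0)) ?_
        intro v; simp only [AFml.evalProp, numeral]; tauto
    refine Proves.tc3 ih h1 h2 ?_
    intro v; simp only [AFml.evalProp]; tauto

theorem termEval (t : ATerm) (ρ : ℕ → ℕ) :
    Proves PA (.eq (t.substAll (numS ρ)) (numeral (t.val ρ))) := by
  induction t with
  | var n => exact .eqRefl _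
  | zero => exact .eqRefl _
  | succ t ih => exact .mp (eqSucc _ _) ih
  | add t s ih1 ih2 =>
    exact ((Proves.mp (eqAddL _ _ _) ih1).trans (.mp (eqAddR _ _ _) ih2)).trans (numAdd _ _)
  | mul t s ih1 ih2 =>
    exact ((Proves.mp (eqMulL _ _ _) ih1).trans (.mp (eqMulR _ _ _) ih2)).trans (numMul _ _)

theorem eqInst1 (φ : AFml) (ρ : ℕ → ℕ) (i : ℕ) (t : ATerm) (ht : t = .var 0) :
    Proves PA (.imp (.eq (numeral i) t) (.imp (φ.inst (consEnv i ρ)) (φ.inst1 ρ))) := by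
  subst ht
  have := Proves.eqSubst (Γ := PA) (φ.inst1 ρ) (numeral i) (.var 0)
  rwa [AFml.inst1_subst0_num, AFml.inst1_subst0_var] at this

theorem boundedAll {φ : AFml} {ρ : ℕ → ℕ} {n : ℕ}
    (h : ∀ i ≤ n, Proves PA (φ.inst (consEnv i ρ))) :
    Proves PA (.imp (.le (.var 0) (numeral n)) (φ.inst1 ρ)) := by
  refine leCases fun i hi => ?_
  refine Proves.tc3 (eqSymm (.var 0) (numeral i)) (eqInst1 φ ρ i (.var 0) rfl) (h i hi) ?_
  intro v; simp only [AFml.evalProp]; tauto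

theorem instBallAux (t : ATerm) (ρ : ℕ → ℕ) :
    (t.lift 0).substAll (liftSub (numS ρ)) = t.substAll (numS ρ) := by
  rw [ATerm.lift_substAll_liftSub, ATerm.lift_eq, ATerm.substAll_comp]
  congr 1
  funext n
  simp [numS]

theorem closedTermSubst (t : ATerm) (ρ : ℕ → ℕ) (σ : ℕ → ATerm) :
    (t.substAll (numS ρ)).substAll σ = t.substAll (numS ρ) := by
  rw [ATerm.substAll_comp]
  congr 1
  funext n
  simp [numS]

theorem delta0Complete {φ : AFml} (h : IsDelta0 φ) : ∀ ρ : ℕ → ℕ,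
    (φ.Sat ρ → Proves PA (φ.inst ρ)) ∧ (¬ φ.Sat ρ → Proves PA (.neg (φ.inst ρ))) := by
  induction h with
  | eq t s =>
    intro ρ
    have ht := termEval t ρ
    have hs := termEval s ρ
    refine ⟨fun hh => ?_, fun hh => ?_⟩
    · simp only [AFml.Sat] at hh
      rw [hh] at ht
      exact ht.trans hs.symm
    · have := numNe hh
      simp only [AFml.inst, AFml.substAll]
      have e : Proves PA (.imp (.eq (t.substAll (numS ρ)) (s.substAll (numS ρ)))
          (.eq (numeral (t.val ρ)) (s.substAll (numS ρ)))) :=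
        .mp (eqTrans _ _ _) ht.symm
      refine Proves.tc4 this e hs (eqTrans (numeral (t.val ρ)) (s.substAll (numS ρ))
        (numeral (s.val ρ))) ?_
      intro v; simp only [AFml.evalProp]; tauto
  | le t s =>
    intro ρ
    have ht := termEval t ρ
    have hs := termEval s ρ
    refine ⟨fun hh => ?_, fun hh => ?_⟩
    · exact .mp (.mp (eqLeR _ _ _) hs.symm) (.mp (.mp (eqLeL _ _ _) ht.symm) (numLe hh))
    · have := numNle hh
      simp only [AFml.inst, AFml.substAll]
      refine Proves.tc3 this (Proves.mp (eqLeL _ _ (s.substAll (numS ρ))) ht)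
        (Proves.mp (eqLeR _ _ (numeral (t.val ρ))) hs) ?_
      intro v; simp only [AFml.evalProp]; tauto
  | @neg φ _ ih =>
    intro ρ
    refine ⟨fun hh => (ih ρ).2 hh, fun hh => ?_⟩
    have hh : φ.Sat ρ := by simpa [AFml.Sat] using hh
    exact ((ih ρ).1 hh).tc1 (by intro v; simp only [AFml.inst, AFml.substAll, AFml.evalProp]; tauto)
  | @and φ ψ _ _ ih1 ih2 =>
    intro ρ
    refine ⟨fun hh => ?_, fun hh => ?_⟩
    · exact ((ih1 ρ).1 hh.1).tc2 ((ih2 ρ).1 hh.2)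
        (by intro v; simp only [AFml.inst, AFml.substAll, AFml.evalProp]; tauto)
    · by_cases hφ : φ.Sat ρ
      · exact ((ih2 ρ).2 (fun h => hh ⟨hφ, h⟩)).tc1
          (by intro v; simp only [AFml.inst, AFml.substAll, AFml.evalProp]; tauto)
      · exact ((ih1 ρ).2 hφ).tc1
          (by intro v; simp only [AFml.inst, AFml.substAll, AFml.evalProp]; tauto)
  | @or φ ψ _ _ ih1 ih2 =>
    intro ρ
    refine ⟨fun hh => ?_, fun hh => ?_⟩
    · rcases hh with hh | hh
      · exact ((ih1 ρ).1 hh).tc1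
          (by intro v; simp only [AFml.inst, AFml.substAll, AFml.evalProp]; tauto)
      · exact ((ih2 ρ).1 hh).tc1
          (by intro v; simp only [AFml.inst, AFml.substAll, AFml.evalProp]; tauto)
    · exact ((ih1 ρ).2 (fun h => hh (Or.inl h))).tc2 ((ih2 ρ).2 (fun h => hh (Or.inr h)))
        (by intro v; simp only [AFml.inst, AFml.substAll, AFml.evalProp]; tauto)
  | @imp φ ψ _ _ ih1 ih2 =>
    intro ρ
    refine ⟨fun hh => ?_, fun hh => ?_⟩
    · by_cases hφ : φ.Sat ρ
      · exact ((ih2 ρ).1 (hh hφ)).tc1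
          (by intro v; simp only [AFml.inst, AFml.substAll, AFml.evalProp]; tauto)
      · exact ((ih1 ρ).2 hφ).tc1
          (by intro v; simp only [AFml.inst, AFml.substAll, AFml.evalProp]; tauto)
    · have hh : φ.Sat ρ ∧ ¬ ψ.Sat ρ := by simpa [AFml.Sat] using hh
      exact ((ih1 ρ).1 hh.1).tc2 ((ih2 ρ).2 hh.2)
        (by intro v; simp only [AFml.inst, AFml.substAll, AFml.evalProp]; tauto)
  | @ball φ t _ ih =>
    intro ρ
    have hv : ∀ a, (t.lift 0).val (consEnv a ρ) = t.val ρ := by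
      intro a
      rw [ATerm.lift_eq, ATerm.val_substAll]
      rfl
    have hform : (AFml.all (.imp (.le (.var 0) (t.lift 0)) φ)).inst ρ
        = .all (.imp (.le (.var 0) (t.substAll (numS ρ))) (φ.inst1 ρ)) := by
      simp only [AFml.inst, AFml.substAll, instBallAux, AFml.inst1, ATerm.substAll, liftSub]
    rw [hform]
    refine ⟨fun hh => ?_, fun hh => ?_⟩
    · refine .gen ?_
      have := boundedAll (φ := φ) (ρ := ρ) (n := t.val ρ) (fun i hi => (ih _).1 (hh i (by
        simp only [AFml.Sat, hv]; exact hi)))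
      refine Proves.tc2 this (Proves.mp (eqLeR _ _ (.var 0)) (termEval t ρ)) ?_
      intro v; simp only [AFml.evalProp]; tauto
    · have hh : ∃ a, a ≤ t.val ρ ∧ ¬ φ.Sat (consEnv a ρ) := by
        simpa [AFml.Sat, hv, ATerm.val, consEnv] using hh
      obtain ⟨a, ha, hna⟩ := hh
      have h1 := Proves.allE (Γ := PA)
        (.imp (.le (.var 0) (t.substAll (numS ρ))) (φ.inst1 ρ)) (numeral a)
      rw [show (AFml.imp (.le (.var 0) (t.substAll (numS ρ))) (φ.inst1 ρ)).subst0 (numeral a)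
          = .imp (.le (numeral a) (t.substAll (numS ρ))) ((φ.inst1 ρ).subst0 (numeral a)) by
        simp only [AFml.subst0, AFml.substAll, closedTermSubst, ATerm.substAll, subst0Env],
        AFml.inst1_subst0_num] at h1
      have h2 : Proves PA (.le (numeral a) (t.substAll (numS ρ))) :=
        .mp (.mp (eqLeR _ _ _) (termEval t ρ).symm) (numLe ha)
      refine Proves.tc3 h1 h2 ((ih _).2 hna) ?_
      intro v; simp only [AFml.evalProp]; tauto
  | @bex φ t _ ih =>
    intro ρ
    have hv : ∀ a, (t.lift 0).val (consEnv a ρ) = t.val ρ := by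
      intro a
      rw [ATerm.lift_eq, ATerm.val_substAll]
      rfl
    have hform : (AFml.ex (.and (.le (.var 0) (t.lift 0)) φ)).inst ρ
        = .ex (.and (.le (.var 0) (t.substAll (numS ρ))) (φ.inst1 ρ)) := by
      simp only [AFml.inst, AFml.substAll, instBallAux, AFml.inst1, ATerm.substAll, liftSub]
    rw [hform]
    refine ⟨fun hh => ?_, fun hh => ?_⟩
    · have hh : ∃ a, a ≤ t.val ρ ∧ φ.Sat (consEnv a ρ) := by
        simpa [AFml.Sat, hv, ATerm.val, consEnv] using hh
      obtain ⟨a, ha, hna⟩ := hh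
      have h1 := Proves.exI (Γ := PA)
        (.and (.le (.var 0) (t.substAll (numS ρ))) (φ.inst1 ρ)) (numeral a)
      rw [show (AFml.and (.le (.var 0) (t.substAll (numS ρ))) (φ.inst1 ρ)).subst0 (numeral a)
          = .and (.le (numeral a) (t.substAll (numS ρ))) ((φ.inst1 ρ).subst0 (numeral a)) by
        simp only [AFml.subst0, AFml.substAll, closedTermSubst, ATerm.substAll, subst0Env],
        AFml.inst1_subst0_num] at h1
      have h2 : Proves PA (.le (numeral a) (t.substAll (numS ρ))) :=
        .mp (.mp (eqLeR _ _ _) (termEval t ρ).symm) (numLe ha)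
      refine Proves.tc3 h1 h2 ((ih _).1 hna) ?_
      intro v; simp only [AFml.evalProp]; tauto
    · refine Proves.neg_ex ?_
      have hh : ∀ a, a ≤ t.val ρ → ¬ φ.Sat (consEnv a ρ) := by
        simpa [AFml.Sat, hv, ATerm.val, consEnv] using hh
      have := boundedAll (φ := .neg φ) (ρ := ρ) (n := t.val ρ) (fun i hi => (ih _).2 (hh i hi))
      refine Proves.tc2 this (Proves.mp (eqLeR _ _ (.var 0)) (termEval t ρ)) ?_
      intro v; simp only [AFml.evalProp, AFml.inst1, AFml.substAll]; tauto

/-! ### Rosser-style formulas -/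

/-- The matrix of the Rosser-style formula. -/
def RosM (B C : AFml) : AFml :=
  .and B (.all (.imp (.le (.var 0) (ATerm.lift 0 (.var 0)))
    (.or (.eq (.var 0) (.var 1)) (.neg (C.lift 1)))))

/-- `∃ s (B(s) ∧ ∀ t ≤ s (t = s ∨ ¬ C(t)))`. -/
def Ros (B C : AFml) : AFml := .ex (RosM B C)

theorem RosM_delta0 {B C : AFml} (hB : IsDelta0 B) (hC : IsDelta0 C) : IsDelta0 (RosM B C) := by
  refine .and hB (.ball _ (.or (.eq _ _) (.neg ?_)))
  rw [AFml.lift_eq]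
  exact hC.substAll _

theorem RosM_Sat (B C : AFml) (s : ℕ) (ρ : ℕ → ℕ) : (RosM B C).Sat (consEnv s ρ) ↔
    B.Sat (consEnv s ρ) ∧ ∀ t < s, ¬ C.Sat (consEnv t ρ) := by
  have hC : ∀ t, (C.lift 1).Sat (consEnv t (consEnv s ρ)) ↔ C.Sat (consEnv t ρ) := by
    intro t
    rw [AFml.lift_eq, AFml.Sat_substAll]
    have : (fun n => (lft 1 n).val (consEnv t (consEnv s ρ))) = consEnv t ρ := by
      funext n
      cases n with
      | zero => rfl
      | succ n => simp [lft, ATerm.val, consEnv]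
    rw [this]
  simp only [RosM, AFml.Sat, ATerm.lift, ATerm.val, consEnv, hC, Nat.not_lt_zero, if_false]
  refine and_congr_right fun _ => ⟨fun h t ht => ?_, fun h t ht => ?_⟩
  · exact (h t ht.le).resolve_left (by omega)
  · by_cases e : t = s
    · exact Or.inl e
    · exact Or.inr (h t (by omega))

theorem Ros_true {B C : AFml} (hB : IsDelta0 B) (hC : IsDelta0 C) {ρ : ℕ → ℕ} {s : ℕ}
    (h : B.Sat (consEnv s ρ)) (h' : ∀ t < s, ¬ C.Sat (consEnv t ρ)) :
    Proves PA ((Ros B C).inst ρ) := by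
  have h1 := (delta0Complete (RosM_delta0 hB hC) (consEnv s ρ)).1 ((RosM_Sat _ _ _ _).2 ⟨h, h'⟩)
  rw [← AFml.inst1_subst0_num] at h1
  exact .mp (.exI _ _) h1

theorem Ros_false {B C : AFml} (hB : IsDelta0 B) (hC : IsDelta0 C) {ρ : ℕ → ℕ} {t : ℕ}
    (h : C.Sat (consEnv t ρ)) (h' : ∀ s ≤ t, B.Sat (consEnv s ρ) →
      ∃ r < s, C.Sat (consEnv r ρ)) :
    Proves PA (.neg ((Ros B C).inst ρ)) := by
  have hd : ∀ s ≤ t, Proves PA (.neg ((RosM B C).inst (consEnv s ρ))) := by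
    intro s hs
    refine (delta0Complete (RosM_delta0 hB hC) (consEnv s ρ)).2 ?_
    rw [RosM_Sat]
    rintro ⟨h1, h2⟩
    obtain ⟨r, hr, hr'⟩ := h' s hs h1
    exact h2 r hr hr'
  change Proves PA (.neg (.ex ((RosM B C).inst1 ρ)))
  refine Proves.neg_ex ?_
  have h1 : Proves PA (.imp (.le (.var 0) (numeral t)) (.neg ((RosM B C).inst1 ρ))) :=
    boundedAll (φ := .neg (RosM B C)) hd
  have h2 : Proves PA (.imp ((RosM B C).inst1 ρ) (.imp (.le (numeral t) (.var 0))
      (.or (.eq (numeral t) (.var 0)) (.neg (C.inst (consEnv t ρ)))))) := by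
    have e : (RosM B C).inst1 ρ = .and (B.inst1 ρ)
        (.all (.imp (.le (.var 0) (.var 1)) (.or (.eq (.var 0) (.var 1))
          (.neg (C.inst1 ρ))))) := by
      simp only [RosM, AFml.inst1, AFml.substAll, ATerm.lift, ATerm.substAll, liftSub]
      simp only [Nat.not_lt_zero, if_false, liftSub, ATerm.lift]
      rw [AFml.lift_eq, AFml.substAll_comp]
      congr 6
      funext n
      cases n with
      | zero => rfl
      | succ n => simp [lft, ATerm.substAll, liftSub, numS]
    have e2 := Proves.allE (Γ := PA) (.imp (.le (.var 0) (.var 1)) (.or (.eq (.var 0) (.var 1))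
          (.neg (C.inst1 ρ)))) (numeral t)
    rw [show (AFml.imp (.le (.var 0) (.var 1)) (.or (.eq (.var 0) (.var 1))
          (.neg (C.inst1 ρ)))).subst0 (numeral t) = .imp (.le (numeral t) (.var 0))
          (.or (.eq (numeral t) (.var 0)) (.neg ((C.inst1 ρ).subst0 (numeral t)))) from rfl,
          AFml.inst1_subst0_num] at e2
    rw [e]
    exact e2.tc1 (by intro v; simp only [AFml.evalProp]; tauto)
  have h3 := (delta0Complete hC _).1 h
  have h4 : Proves PA (.imp (.eq (numeral t) (.var 0)) (.neg ((RosM B C).inst1 ρ))) :=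
    (eqInst1 (.neg (RosM B C)) ρ t (.var 0) rfl).tc2 (hd t le_rfl) (by
      intro v; simp only [AFml.evalProp, AFml.inst, AFml.inst1, AFml.substAll]; tauto)
  have h5 : Proves PA (.imp (.le (numeral t) (.var 0)) (.neg ((RosM B C).inst1 ρ))) :=
    h2.tc3 h3 h4 (by intro v; simp only [AFml.evalProp]; tauto)
  exact h1.tc3 h5 (dichotomy t (.var 0)) (by intro v; simp only [AFml.evalProp]; tauto)

set_option linter.unusedVariables false

/-! ## Part 3 : Σ₁ relations on the natural numbers -/

def shE (ρ : ℕ → ℕ) : ℕ → ℕ := fun n => ρ (n + 1)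

theorem consEnv_shE (ρ : ℕ → ℕ) : consEnv (ρ 0) (shE ρ) = ρ := by
  funext n; cases n <;> rfl

def Pl (a : (ℕ → ℕ) → ℕ) : Prop := ∃ t : ATerm, ∀ ρ, t.val ρ = a ρ

theorem Pl.var (k : ℕ) : Pl (fun ρ => ρ k) := ⟨.var k, fun _ => rfl⟩
theorem Pl.const (k : ℕ) : Pl (fun _ => k) := ⟨numeral k, fun ρ => numeral_val k ρ⟩
theorem Pl.add {a b : (ℕ → ℕ) → ℕ} (ha : Pl a) (hb : Pl b) : Pl (fun ρ => a ρ + b ρ) := by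
  obtain ⟨t, ht⟩ := ha
  obtain ⟨s, hs⟩ := hb
  exact ⟨.add t s, fun ρ => by simp [ATerm.val, ht, hs]⟩
theorem Pl.mul {a b : (ℕ → ℕ) → ℕ} (ha : Pl a) (hb : Pl b) : Pl (fun ρ => a ρ * b ρ) := by
  obtain ⟨t, ht⟩ := ha
  obtain ⟨s, hs⟩ := hb
  exact ⟨.mul t s, fun ρ => by simp [ATerm.val, ht, hs]⟩

def D0 (R : (ℕ → ℕ) → Prop) : Prop := ∃ θ, IsDelta0 θ ∧ ∀ ρ, θ.Sat ρ ↔ R ρ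

theorem D0.congr {R S : (ℕ → ℕ) → Prop} (h : D0 R) (e : ∀ ρ, S ρ ↔ R ρ) : D0 S := by
  obtain ⟨θ, h1, h2⟩ := h
  exact ⟨θ, h1, fun ρ => (h2 ρ).trans (e ρ).symm⟩

theorem D0.eq {a b : (ℕ → ℕ) → ℕ} (ha : Pl a) (hb : Pl b) : D0 (fun ρ => a ρ = b ρ) := by
  obtain ⟨t, ht⟩ := ha
  obtain ⟨s, hs⟩ := hb
  exact ⟨.eq t s, .eq _ _, fun ρ => by simp [AFml.Sat, ht, hs]⟩
theorem D0.le {a b : (ℕ → ℕ) → ℕ} (ha : Pl a) (hb : Pl b) : D0 (fun ρ => a ρ ≤ b ρ) := by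
  obtain ⟨t, ht⟩ := ha
  obtain ⟨s, hs⟩ := hb
  exact ⟨.le t s, .le _ _, fun ρ => by simp [AFml.Sat, ht, hs]⟩
theorem D0.lt {a b : (ℕ → ℕ) → ℕ} (ha : Pl a) (hb : Pl b) : D0 (fun ρ => a ρ < b ρ) :=
  D0.le (ha.add (Pl.const 1)) hb
theorem D0.not {R : (ℕ → ℕ) → Prop} (h : D0 R) : D0 (fun ρ => ¬ R ρ) := by
  obtain ⟨θ, h1, h2⟩ := h
  exact ⟨.neg θ, .neg h1, fun ρ => by simp [AFml.Sat, h2]⟩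
theorem D0.and {R S : (ℕ → ℕ) → Prop} (h : D0 R) (h' : D0 S) : D0 (fun ρ => R ρ ∧ S ρ) := by
  obtain ⟨θ, h1, h2⟩ := h
  obtain ⟨θ', h1', h2'⟩ := h'
  exact ⟨.and θ θ', .and h1 h1', fun ρ => by simp [AFml.Sat, h2, h2']⟩
theorem D0.or {R S : (ℕ → ℕ) → Prop} (h : D0 R) (h' : D0 S) : D0 (fun ρ => R ρ ∨ S ρ) := by
  obtain ⟨θ, h1, h2⟩ := h
  obtain ⟨θ', h1', h2'⟩ := h'
  exact ⟨.or θ θ', .or h1 h1', fun ρ => by simp [AFml.Sat, h2, h2']⟩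
theorem D0.imp {R S : (ℕ → ℕ) → Prop} (h : D0 R) (h' : D0 S) : D0 (fun ρ => R ρ → S ρ) := by
  obtain ⟨θ, h1, h2⟩ := h
  obtain ⟨θ', h1', h2'⟩ := h'
  exact ⟨.imp θ θ', .imp h1 h1', fun ρ => by simp [AFml.Sat, h2, h2']⟩

theorem lift0_val (t : ATerm) (x : ℕ) (ρ : ℕ → ℕ) : (t.lift 0).val (consEnv x ρ) = t.val ρ := by
  rw [ATerm.lift_eq, ATerm.val_substAll]
  rfl

theorem D0.ball {b : (ℕ → ℕ) → ℕ} (hb : Pl b) {Q : ℕ → (ℕ → ℕ) → Prop}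
    (h : D0 (fun ρ => Q (ρ 0) (fun n => ρ (n + 1)))) : D0 (fun ρ => ∀ x ≤ b ρ, Q x ρ) := by
  obtain ⟨t, ht⟩ := hb
  obtain ⟨θ, h1, h2⟩ := h
  refine ⟨_, .ball t h1, fun ρ => ?_⟩
  simp only [AFml.Sat, lift0_val, ht, h2, ATerm.val]
  rfl
theorem D0.bex {b : (ℕ → ℕ) → ℕ} (hb : Pl b) {Q : ℕ → (ℕ → ℕ) → Prop}
    (h : D0 (fun ρ => Q (ρ 0) (fun n => ρ (n + 1)))) : D0 (fun ρ => ∃ x ≤ b ρ, Q x ρ) := by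
  obtain ⟨t, ht⟩ := hb
  obtain ⟨θ, h1, h2⟩ := h
  refine ⟨_, .bex t h1, fun ρ => ?_⟩
  simp only [AFml.Sat, lift0_val, ht, h2, ATerm.val]
  rfl
theorem D0.sub {R : (ℕ → ℕ) → Prop} (h : D0 R) {a : ℕ → (ℕ → ℕ) → ℕ} (ha : ∀ i, Pl (a i)) :
    D0 (fun ρ => R (fun i => a i ρ)) := by
  obtain ⟨θ, h1, h2⟩ := h
  choose t ht using ha
  refine ⟨_, h1.substAll t, fun ρ => ?_⟩
  rw [AFml.Sat_substAll, h2]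
  simp only [ht]

def S1 (R : (ℕ → ℕ) → Prop) : Prop := ∃ D, D0 D ∧ ∀ ρ, R ρ ↔ ∃ s, D (consEnv s ρ)

theorem S1.congr {R S : (ℕ → ℕ) → Prop} (h : S1 R) (e : ∀ ρ, S ρ ↔ R ρ) : S1 S := by
  obtain ⟨θ, h1, h2⟩ := h
  exact ⟨θ, h1, fun ρ => (e ρ).trans (h2 ρ)⟩

theorem D0.s1 {R : (ℕ → ℕ) → Prop} (h : D0 R) : S1 R :=
  ⟨fun ρ => R (fun i => ρ (i + 1)), h.sub (a := fun i ρ => ρ (i + 1)) (fun i => Pl.var _),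
    fun ρ => ⟨fun h => ⟨0, h⟩, fun ⟨_, h⟩ => h⟩⟩

theorem S1.sub {R : (ℕ → ℕ) → Prop} (h : S1 R) {a : ℕ → (ℕ → ℕ) → ℕ} (ha : ∀ i, Pl (a i)) :
    S1 (fun ρ => R (fun i => a i ρ)) := by
  obtain ⟨D, h1, h2⟩ := h
  refine ⟨fun ρ => D (fun i => consEnv (ρ 0) (fun i => a i (fun n => ρ (n + 1))) i),
    h1.sub (a := fun j ρ => consEnv (ρ 0) (fun i => a i (fun n => ρ (n + 1))) j) ?_, ?_⟩
  · rintro (_ | i)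
    · exact Pl.var 0
    · obtain ⟨t, ht⟩ := ha i
      refine ⟨t.lift 0, fun ρ => ?_⟩
      rw [ATerm.lift_eq, ATerm.val_substAll, ht]
      rfl
  · intro ρ
    exact h2 _

theorem S1.and {R S : (ℕ → ℕ) → Prop} (h : S1 R) (h' : S1 S) : S1 (fun ρ => R ρ ∧ S ρ) := by
  obtain ⟨D, h1, h2⟩ := h
  obtain ⟨D', h1', h2'⟩ := h'
  refine ⟨fun ρ => ∃ x ≤ ρ 0, ∃ y ≤ ρ 0, D (fun i => consEnv x (shE ρ) i) ∧
    D' (fun i => consEnv y (shE ρ) i), ?_, ?_⟩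
  · refine D0.bex (Pl.var 0) (D0.bex (Pl.var 1) (D0.and ?_ ?_))
    · refine h1.sub (a := fun i ρ => consEnv (ρ 1) (fun n => ρ (n + 3)) i) ?_
      rintro (_ | i)
      · exact Pl.var 1
      · exact Pl.var (i + 3)
    · refine h1'.sub (a := fun i ρ => consEnv (ρ 0) (fun n => ρ (n + 3)) i) ?_
      rintro (_ | i)
      · exact Pl.var 0
      · exact Pl.var (i + 3)
  · intro ρ
    beta_reduce
    rw [h2, h2']
    constructor
    · rintro ⟨⟨x, hx⟩, ⟨y, hy⟩⟩
      exact ⟨max x y, x, le_max_left _ _, y, le_max_right _ _, hx, hy⟩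
    · rintro ⟨s, x, _, y, _, hx, hy⟩
      exact ⟨⟨x, hx⟩, ⟨y, hy⟩⟩

theorem S1.or {R S : (ℕ → ℕ) → Prop} (h : S1 R) (h' : S1 S) : S1 (fun ρ => R ρ ∨ S ρ) := by
  obtain ⟨D, h1, h2⟩ := h
  obtain ⟨D', h1', h2'⟩ := h'
  refine ⟨fun ρ => D ρ ∨ D' ρ, h1.or h1', fun ρ => ?_⟩
  beta_reduce
  rw [h2, h2', exists_or]

theorem S1.ex {Q : ℕ → (ℕ → ℕ) → Prop} (h : S1 (fun ρ => Q (ρ 0) (fun n => ρ (n + 1)))) :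
    S1 (fun ρ => ∃ x, Q x ρ) := by
  obtain ⟨D, h1, h2⟩ := h
  refine ⟨fun ρ => ∃ x ≤ ρ 0, ∃ y ≤ ρ 0, D (fun i => consEnv x (consEnv y (shE ρ)) i), ?_, ?_⟩
  · refine D0.bex (Pl.var 0) (D0.bex (Pl.var 1) ?_)
    refine h1.sub (a := fun i ρ => consEnv (ρ 1) (consEnv (ρ 0) (fun n => ρ (n + 3))) i) ?_
    rintro (_ | _ | i)
    · exact Pl.var 1
    · exact Pl.var 0
    · exact Pl.var (i + 3)
  · intro ρ
    have h2' : ∀ x, Q x ρ ↔ ∃ s, D (consEnv s (consEnv x ρ)) := fun x => h2 (consEnv x ρ)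
    simp only [h2']
    constructor
    · rintro ⟨y, x, hx⟩
      exact ⟨max x y, x, le_max_left _ _, y, le_max_right _ _, hx⟩
    · rintro ⟨s, x, _, y, _, hx⟩
      exact ⟨y, x, hx⟩

theorem S1.ballV {k : ℕ} {Q : ℕ → (ℕ → ℕ) → Prop}
    (h : S1 (fun ρ => Q (ρ 0) (fun n => ρ (n + 1)))) : S1 (fun ρ => ∀ x ≤ ρ k, Q x ρ) := by
  obtain ⟨D, h1, h2⟩ := h
  refine ⟨fun ρ => ∀ x ≤ ρ (k + 1), ∃ y ≤ ρ 0, D (fun i => consEnv y (consEnv x (shE ρ)) i), ?_, ?_⟩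
  · refine D0.ball (Pl.var (k + 1)) (D0.bex (Pl.var 1) ?_)
    refine h1.sub (a := fun i ρ => consEnv (ρ 0) (consEnv (ρ 1) (fun n => ρ (n + 3))) i) ?_
    rintro (_ | _ | i)
    · exact Pl.var 0
    · exact Pl.var 1
    · exact Pl.var (i + 3)
  · intro ρ
    have h2' : ∀ x, Q x ρ ↔ ∃ s, D (consEnv s (consEnv x ρ)) := fun x => h2 (consEnv x ρ)
    simp only [h2']
    constructor
    · intro h
      choose! f hf using h
      refine ⟨(Finset.range (ρ k + 1)).sup f, fun x hx => ⟨f x, ?_, hf x hx⟩⟩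
      exact Finset.le_sup (f := f) (Finset.mem_range.2 (Nat.lt_succ_of_le hx))
    · rintro ⟨s, hs⟩ x hx
      obtain ⟨y, _, hy⟩ := hs x hx
      exact ⟨y, hy⟩

def Fn (a : (ℕ → ℕ) → ℕ) : Prop := S1 (fun ρ => ρ 0 = a (fun n => ρ (n + 1)))

theorem Pl.fn {a : (ℕ → ℕ) → ℕ} (h : Pl a) : Fn a := by
  refine (D0.eq (Pl.var 0) ?_).s1
  obtain ⟨t, ht⟩ := h
  refine ⟨t.lift 0, fun ρ => ?_⟩
  rw [ATerm.lift_eq, ATerm.val_substAll, ht]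
  rfl

theorem Fn.var (k : ℕ) : Fn (fun ρ => ρ k) := (Pl.var k).fn
theorem Fn.const (k : ℕ) : Fn (fun _ => k) := (Pl.const k).fn

theorem S1.eq {a b : (ℕ → ℕ) → ℕ} (ha : Fn a) (hb : Fn b) : S1 (fun ρ => a ρ = b ρ) := by
  refine (S1.ex (Q := fun y ρ => y = a ρ ∧ y = b ρ) (S1.and ha hb)).congr ?_
  intro ρ
  simp

theorem S1.comp1 {R : ℕ → Prop} (h : S1 (fun ρ => R (ρ 0))) {a : (ℕ → ℕ) → ℕ} (ha : Fn a) :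
    S1 (fun ρ => R (a ρ)) := by
  refine (S1.ex (Q := fun y ρ => y = a ρ ∧ R y) (S1.and ha h)).congr ?_
  intro ρ
  simp

theorem Fn.sub {b : (ℕ → ℕ) → ℕ} (h : Fn b) {a : ℕ → (ℕ → ℕ) → ℕ} (ha : ∀ i, Pl (a i)) :
    Fn (fun ρ => b (fun i => a i ρ)) := by
  refine (S1.sub h (a := fun j ρ => consEnv (ρ 0) (fun i => a i (fun n => ρ (n + 1))) j) ?_)
  rintro (_ | i)
  · exact Pl.var 0
  · obtain ⟨t, ht⟩ := ha i
    refine ⟨t.lift 0, fun ρ => ?_⟩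
    rw [ATerm.lift_eq, ATerm.val_substAll, ht]
    rfl

theorem Fn.shift {b : (ℕ → ℕ) → ℕ} (h : Fn b) : Fn (fun ρ => b (fun n => ρ (n + 1))) :=
  Fn.sub h (a := fun i ρ => ρ (i + 1)) (fun i => Pl.var _)

theorem S1.letv {R : ℕ → (ℕ → ℕ) → Prop} (h : S1 (fun ρ => R (ρ 0) (fun n => ρ (n + 1))))
    {a : (ℕ → ℕ) → ℕ} (ha : Fn a) : S1 (fun ρ => R (a ρ) ρ) := by
  refine (S1.ex (Q := fun y ρ => y = a ρ ∧ R y ρ) (S1.and ha h)).congr ?_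
  intro ρ
  simp

theorem S1.comp2 {R : ℕ → ℕ → Prop} (h : S1 (fun ρ => R (ρ 0) (ρ 1))) {a b : (ℕ → ℕ) → ℕ}
    (ha : Fn a) (hb : Fn b) : S1 (fun ρ => R (a ρ) (b ρ)) := by
  refine S1.letv (R := fun y ρ => R y (b ρ)) ?_ ha
  refine S1.letv (R := fun z ρ => R (ρ 0) z) ?_ hb.shift
  refine h.sub (a := fun i ρ => consEnv (ρ 1) (consEnv (ρ 0) ρ) i) ?_
  rintro (_ | _ | i)
  · exact Pl.var 1
  · exact Pl.var 0
  · exact Pl.var i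

theorem S1.comp3 {R : ℕ → ℕ → ℕ → Prop} (h : S1 (fun ρ => R (ρ 0) (ρ 1) (ρ 2)))
    {a b c : (ℕ → ℕ) → ℕ}
    (ha : Fn a) (hb : Fn b) (hc : Fn c) : S1 (fun ρ => R (a ρ) (b ρ) (c ρ)) := by
  refine S1.letv (R := fun y ρ => R y (b ρ) (c ρ)) ?_ ha
  refine S1.letv (R := fun z ρ => R (ρ 0) z (c (fun n => ρ (n + 1)))) ?_ hb.shift
  refine S1.letv (R := fun z ρ => R (ρ 1) (ρ 0) z) ?_ hc.shift.shift
  refine h.sub (a := fun i ρ => consEnv (ρ 2) (consEnv (ρ 1) (consEnv (ρ 0) ρ)) i) ?_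
  rintro (_ | _ | _ | i)
  · exact Pl.var 2
  · exact Pl.var 1
  · exact Pl.var 0
  · exact Pl.var i

theorem Fn.comp1 {f : ℕ → ℕ} (h : Fn (fun ρ => f (ρ 0))) {a : (ℕ → ℕ) → ℕ} (ha : Fn a) :
    Fn (fun ρ => f (a ρ)) := by
  have h' : S1 (fun ρ => (fun x y => x = f y) (ρ 0) (ρ 1)) := h
  exact S1.comp2 (R := fun x y => x = f y) h' (a := fun ρ => ρ 0) (Fn.var 0) ha.shift

theorem Fn.comp2 {f : ℕ → ℕ → ℕ} (h : Fn (fun ρ => f (ρ 0) (ρ 1))) {a b : (ℕ → ℕ) → ℕ}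
    (ha : Fn a) (hb : Fn b) : Fn (fun ρ => f (a ρ) (b ρ)) := by
  have h' : S1 (fun ρ => (fun x y z => x = f y z) (ρ 0) (ρ 1) (ρ 2)) := h
  exact S1.comp3 (R := fun x y z => x = f y z) h' (a := fun ρ => ρ 0) (Fn.var 0) ha.shift hb.shift

theorem Fn.add {a b : (ℕ → ℕ) → ℕ} (ha : Fn a) (hb : Fn b) : Fn (fun ρ => a ρ + b ρ) :=
  Fn.comp2 (f := fun x y => x + y) ((Pl.var 0).add (Pl.var 1)).fn ha hb
theorem Fn.mul {a b : (ℕ → ℕ) → ℕ} (ha : Fn a) (hb : Fn b) : Fn (fun ρ => a ρ * b ρ) :=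
  Fn.comp2 (f := fun x y => x * y) ((Pl.var 0).mul (Pl.var 1)).fn ha hb
theorem S1.le {a b : (ℕ → ℕ) → ℕ} (ha : Fn a) (hb : Fn b) : S1 (fun ρ => a ρ ≤ b ρ) :=
  S1.comp2 (R := fun x y => x ≤ y) (D0.le (Pl.var 0) (Pl.var 1)).s1 ha hb
theorem S1.lt {a b : (ℕ → ℕ) → ℕ} (ha : Fn a) (hb : Fn b) : S1 (fun ρ => a ρ < b ρ) :=
  S1.comp2 (R := fun x y => x < y) (D0.lt (Pl.var 0) (Pl.var 1)).s1 ha hb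
theorem S1.ne {a b : (ℕ → ℕ) → ℕ} (ha : Fn a) (hb : Fn b) : S1 (fun ρ => a ρ ≠ b ρ) :=
  S1.comp2 (R := fun x y => ¬ x = y) (D0.eq (Pl.var 0) (Pl.var 1)).not.s1 ha hb

theorem S1.ball {b : (ℕ → ℕ) → ℕ} (hb : Fn b) {Q : ℕ → (ℕ → ℕ) → Prop}
    (h : S1 (fun ρ => Q (ρ 0) (fun n => ρ (n + 1)))) : S1 (fun ρ => ∀ x ≤ b ρ, Q x ρ) := by
  refine S1.letv (R := fun y ρ => ∀ x ≤ y, Q x ρ) ?_ hb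
  refine S1.ballV (k := 0) (Q := fun x ρ => Q x (fun n => ρ (n + 1))) ?_
  refine S1.sub h (a := fun i ρ => consEnv (ρ 0) (fun n => ρ (n + 2)) i) ?_
  rintro (_ | i)
  · exact Pl.var 0
  · exact Pl.var (i + 2)

theorem Fn.pair {a b : (ℕ → ℕ) → ℕ} (ha : Fn a) (hb : Fn b) :
    Fn (fun ρ => Nat.pair (a ρ) (b ρ)) := by
  refine Fn.comp2 (f := Nat.pair) ?_ ha hb
  refine (D0.s1 (R := fun ρ => (ρ 1 < ρ 2 ∧ ρ 0 = ρ 2 * ρ 2 + ρ 1) ∨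
    (ρ 2 ≤ ρ 1 ∧ ρ 0 = ρ 1 * ρ 1 + ρ 1 + ρ 2)) ?_).congr ?_
  · exact ((D0.lt (Pl.var 1) (Pl.var 2)).and (D0.eq (Pl.var 0) (((Pl.var 2).mul (Pl.var 2)).add
      (Pl.var 1)))).or ((D0.le (Pl.var 2) (Pl.var 1)).and (D0.eq (Pl.var 0)
      ((((Pl.var 1).mul (Pl.var 1)).add (Pl.var 1)).add (Pl.var 2))))
  · intro ρ
    simp only [Nat.pair]
    split_ifs with h
    · simp [h]
    · simp [h]; simp at h; simp [h]

theorem Fn.mod {a b : (ℕ → ℕ) → ℕ} (ha : Fn a) (hb : Fn b) :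
    Fn (fun ρ => a ρ % (b ρ + 1)) := by
  refine Fn.comp2 (f := fun x y => x % (y + 1)) ?_ ha hb
  refine (D0.s1 (R := fun ρ => ρ 0 < ρ 2 + 1 ∧ ∃ q ≤ ρ 1, (ρ 2 + 1) * q + ρ 0 = ρ 1) ?_).congr ?_
  · exact (D0.lt (Pl.var 0) ((Pl.var 2).add (Pl.const 1))).and (D0.bex (Pl.var 1)
      (D0.eq ((((Pl.var 3).add (Pl.const 1)).mul (Pl.var 0)).add (Pl.var 1)) (Pl.var 2)))
  · intro ρ
    change ρ 0 = ρ 1 % (ρ 2 + 1) ↔ _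
    constructor
    · intro h
      rw [h]
      exact ⟨Nat.mod_lt _ (Nat.succ_pos _), ρ 1 / (ρ 2 + 1), Nat.div_le_self _ _,
        Nat.div_add_mod _ _⟩
    · rintro ⟨h, q, _, e⟩
      rw [← e, Nat.mul_add_mod, Nat.mod_eq_of_lt h]

/-- least fixed point of a finitary operator with binary rules -/
inductive Lfp (Ax : ℕ → Prop) (R : ℕ → ℕ → ℕ → Prop) : ℕ → Prop
  | ax {x} : Ax x → Lfp Ax R x
  | step {x a b} : Lfp Ax R a → Lfp Ax R b → R x a b → Lfp Ax R x

def GoodL (Ax : ℕ → Prop) (R : ℕ → ℕ → ℕ → Prop) : List ℕ → Prop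
  | [] => True
  | x :: l => (Ax x ∨ ∃ a ∈ l, ∃ b ∈ l, R x a b) ∧ GoodL Ax R l

theorem GoodL_append {Ax R} {l l' : List ℕ} (h : GoodL Ax R l) (h' : GoodL Ax R l') :
    GoodL Ax R (l ++ l') := by
  induction l with
  | nil => exact h'
  | cons x l ih =>
    refine ⟨h.1.imp id ?_, ih h.2⟩
    rintro ⟨a, ha, b, hb, r⟩
    exact ⟨a, List.mem_append_left _ ha, b, List.mem_append_left _ hb, r⟩

theorem Lfp_good {Ax R} {x : ℕ} (h : Lfp Ax R x) : ∃ l, GoodL Ax R (x :: l) := by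
  induction h with
  | ax h => exact ⟨[], Or.inl h, trivial⟩
  | @step x a b _ _ hr ih1 ih2 =>
    obtain ⟨l1, h1⟩ := ih1
    obtain ⟨l2, h2⟩ := ih2
    refine ⟨(a :: l1) ++ (b :: l2), Or.inr ⟨a, by simp, b, by simp, hr⟩, GoodL_append h1 h2⟩

theorem GoodL_index {Ax R} {l : List ℕ} (h : GoodL Ax R l) (i : ℕ) (hi : i < l.length) :
    Ax l[i] ∨ ∃ j, ∃ hj : j < l.length, ∃ k, ∃ hk : k < l.length, i < j ∧ i < k ∧
      R l[i] l[j] l[k] := by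
  induction l generalizing i with
  | nil => simp at hi
  | cons x l ih =>
    cases i with
    | zero =>
      refine h.1.imp id ?_
      rintro ⟨a, ha, b, hb, r⟩
      obtain ⟨j, hj, rfl⟩ := List.getElem_of_mem ha
      obtain ⟨k, hk, rfl⟩ := List.getElem_of_mem hb
      exact ⟨j + 1, by simpa using hj, k + 1, by simpa using hk, by omega, by omega, by simpa using r⟩
    | succ i =>
      refine (ih h.2 i (by simpa using hi)).imp (by simp) ?_
      rintro ⟨j, hj, k, hk, h1, h2, r⟩
      exact ⟨j + 1, by simpa using hj, k + 1, by simpa using hk, by omega, by omega, by simpa using r⟩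

theorem Lfp_iff {Ax R} {x : ℕ} : Lfp Ax R x ↔ ∃ a b L : ℕ, x = a % ((0 + 1) * b + 1) ∧
    ∀ i ≤ L, Ax (a % ((i + 1) * b + 1)) ∨ ∃ j, j ≤ L ∧ ∃ k, k ≤ L ∧ i < j ∧ i < k ∧
      R (a % ((i + 1) * b + 1)) (a % ((j + 1) * b + 1)) (a % ((k + 1) * b + 1)) := by
  constructor
  · intro h
    obtain ⟨l, hl⟩ := Lfp_good h
    set l' := x :: l with hl'
    have key : ∀ i (hi : i < l'.length), (Nat.unbeta l').unpair.1 %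
        ((i + 1) * (Nat.unbeta l').unpair.2 + 1) = l'[i] := by
      intro i hi
      have := Nat.beta_unbeta_coe l' ⟨i, hi⟩
      simpa [Nat.beta] using this
    refine ⟨(Nat.unbeta l').unpair.1, (Nat.unbeta l').unpair.2, l.length, ?_, ?_⟩
    · rw [key 0 (by simp [hl'])]
      simp [hl']
    · intro i hi
      have hi' : i < l'.length := by simp [hl']; omega
      rw [key i hi']
      refine (GoodL_index hl i hi').imp id ?_
      rintro ⟨j, hj, k, hk, h1, h2, r⟩
      refine ⟨j, by simp [hl'] at hj; omega, k, by simp [hl'] at hk; omega, h1, h2, ?_⟩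
      rw [key j hj, key k hk]
      exact r
  · rintro ⟨a, b, L, rfl, h⟩
    have : ∀ d i, i + d = L → Lfp Ax R (a % ((i + 1) * b + 1)) := by
      intro d
      induction d using Nat.strong_induction_on with
      | _ d ih =>
        intro i hi
        rcases h i (by omega) with h | ⟨j, hj, k, hk, h1, h2, r⟩
        · exact .ax h
        · exact .step (ih (L - j) (by omega) j (by omega)) (ih (L - k) (by omega) k (by omega)) r
    exact this L 0 (by omega)

theorem Lfp_S1 {Ax R} (hA : S1 (fun ρ => Ax (ρ 0))) (hR : S1 (fun ρ => R (ρ 0) (ρ 1) (ρ 2))) :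
    S1 (fun ρ => Lfp Ax R (ρ 0)) := by
  have hm : ∀ {a b i : (ℕ → ℕ) → ℕ}, Fn a → Fn b → Fn i →
      Fn (fun ρ => a ρ % ((i ρ + 1) * b ρ + 1)) := fun ha hb hi =>
    Fn.mod ha ((hi.add (Fn.const 1)).mul hb)
  simp only [Lfp_iff]
  refine S1.ex (S1.ex (S1.ex (S1.and (S1.eq (Fn.var _) (hm (Fn.var _) (Fn.var _) (Fn.const _)))
    (S1.ball (Fn.var _) (S1.or (hA.comp1 (hm (Fn.var _) (Fn.var _) (Fn.var _)))
      (S1.ex (S1.and (S1.le (Fn.var _) (Fn.var _)) (S1.ex (S1.and (S1.le (Fn.var _) (Fn.var _))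
      (S1.and (S1.lt (Fn.var _) (Fn.var _)) (S1.and (S1.lt (Fn.var _) (Fn.var _))
      (hR.comp3 (hm (Fn.var _) (Fn.var _) (Fn.var _)) (hm (Fn.var _) (Fn.var _) (Fn.var _))
        (hm (Fn.var _) (Fn.var _) (Fn.var _))))))))))))))

theorem primrec_Fn {f : ℕ → ℕ} (hf : Nat.Primrec f) : Fn (fun ρ => f (ρ 0)) := by
  induction hf with
  | zero => exact Fn.const 0
  | succ => exact (Fn.var 0).add (Fn.const 1)
  | left =>
    refine (S1.ex (Q := fun y ρ => ρ 1 = Nat.pair (ρ 0) y)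
      (S1.eq (Fn.var 2) (Fn.pair (Fn.var 1) (Fn.var 0)))).congr ?_
    intro ρ
    constructor
    · intro h
      exact ⟨(ρ 1).unpair.2, by rw [h]; simp⟩
    · rintro ⟨y, h⟩
      change ρ 0 = (ρ 1).unpair.1
      simp [h]
  | right =>
    refine (S1.ex (Q := fun y ρ => ρ 1 = Nat.pair y (ρ 0))
      (S1.eq (Fn.var 2) (Fn.pair (Fn.var 0) (Fn.var 1)))).congr ?_
    intro ρ
    constructor
    · intro h
      exact ⟨(ρ 1).unpair.1, by rw [h]; simp⟩
    · rintro ⟨y, h⟩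
      change ρ 0 = (ρ 1).unpair.2
      simp [h]
  | pair _ _ ih1 ih2 => exact Fn.pair ih1 ih2
  | comp _ _ ih1 ih2 => exact Fn.comp1 ih1 ih2
  | @prec f g _ _ ih1 ih2 =>
    let Ax : ℕ → Prop := fun x => ∃ z, x = Nat.pair z (Nat.pair 0 (f z))
    let R : ℕ → ℕ → ℕ → Prop := fun x a _ => ∃ z y w, a = Nat.pair z (Nat.pair y w) ∧
      x = Nat.pair z (Nat.pair (y + 1) (g (Nat.pair z (Nat.pair y w))))
    have hL : S1 (fun ρ => Lfp Ax R (ρ 0)) := by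
      refine Lfp_S1 ?_ ?_
      · exact S1.ex (S1.eq (Fn.var _) (Fn.pair (Fn.var _) (Fn.pair (Fn.const _)
          (ih1.comp1 (Fn.var _)))))
      · refine S1.ex (S1.ex (S1.ex (S1.and (S1.eq (Fn.var _) (Fn.pair (Fn.var _) (Fn.pair (Fn.var _)
          (Fn.var _)))) (S1.eq (Fn.var _) (Fn.pair (Fn.var _) (Fn.pair ((Fn.var _).add (Fn.const 1))
          (ih2.comp1 (Fn.pair (Fn.var _) (Fn.pair (Fn.var _) (Fn.var _))))))))))
    have key : ∀ x, Lfp Ax R x ↔ ∃ z n, x = Nat.pair z (Nat.pair n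
        (n.rec (f z) (fun y IH => g (Nat.pair z (Nat.pair y IH))))) := by
      intro x
      constructor
      · intro h
        induction h with
        | ax h => obtain ⟨z, rfl⟩ := h; exact ⟨z, 0, rfl⟩
        | step _ _ hr ih _ =>
          obtain ⟨z, y, w, e, rfl⟩ := hr
          obtain ⟨z', n, e'⟩ := ih
          rw [e'] at e
          simp only [Nat.pair_eq_pair] at e
          obtain ⟨rfl, rfl, rfl⟩ := e
          exact ⟨z', n + 1, rfl⟩
      · rintro ⟨z, n, rfl⟩
        induction n with
        | zero => exact .ax ⟨z, rfl⟩
        | succ n ih => exact .step ih ih ⟨z, n, _, rfl, rfl⟩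
    refine (S1.ex (Q := fun z ρ => ∃ n, ρ 1 = Nat.pair z n ∧ Lfp Ax R (Nat.pair z (Nat.pair n (ρ 0))))
      (S1.ex (S1.and (S1.eq (Fn.var _) (Fn.pair (Fn.var _) (Fn.var _)))
        (hL.comp1 (Fn.pair (Fn.var _) (Fn.pair (Fn.var _) (Fn.var _))))))).congr ?_
    intro ρ
    simp only [key]
    constructor
    · intro h
      exact ⟨(ρ 1).unpair.1, (ρ 1).unpair.2, by simp, _, _, by rw [h]⟩
    · rintro ⟨z, n, h, z', n', e⟩
      simp only [Nat.pair_eq_pair] at e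
      obtain ⟨rfl, rfl, e⟩ := e
      rw [e, h]
      simp [Nat.unpaired]

/-! ## Part 4 : arithmetization of syntax -/

theorem ATerm.code_inj : ∀ {t s : ATerm}, t.code = s.code → t = s := by
  intro t
  induction t with
  | var n => intro s h; cases s <;> simp_all [ATerm.code, Nat.pair_eq_pair]
  | zero => intro s h; cases s <;> simp_all [ATerm.code, Nat.pair_eq_pair]
  | succ t ih =>
    intro s h
    cases s <;> simp [ATerm.code, Nat.pair_eq_pair] at h
    rw [ih h]
  | add t r ih1 ih2 =>
    intro s h
    cases s <;> simp [ATerm.code, Nat.pair_eq_pair] at h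
    rw [ih1 h.1, ih2 h.2]
  | mul t r ih1 ih2 =>
    intro s h
    cases s <;> simp [ATerm.code, Nat.pair_eq_pair] at h
    rw [ih1 h.1, ih2 h.2]

theorem AFml.code_inj : ∀ {t s : AFml}, t.code = s.code → t = s := by
  intro t
  induction t with
  | eq a b | le a b =>
    intro s h
    cases s <;> simp [AFml.code, Nat.pair_eq_pair] at h
    rw [ATerm.code_inj h.1, ATerm.code_inj h.2]
  | neg t ih | all t ih | ex t ih =>
    intro s h
    cases s <;> simp [AFml.code, Nat.pair_eq_pair] at h
    rw [ih h]
  | and t r ih1 ih2 | or t r ih1 ih2 | imp t r ih1 ih2 =>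
    intro s h
    cases s <;> simp [AFml.code, Nat.pair_eq_pair] at h
    rw [ih1 h.1, ih2 h.2]

def sb (j : ℕ) (w : ATerm) (n : ℕ) : ATerm :=
  if n < j then .var n else if n = j then w else .var (n - 1)

theorem sb_zero (w : ATerm) : sb 0 w = subst0Env w := by
  funext n
  cases n <;> simp [sb, subst0Env]

theorem liftSub_sb (j : ℕ) (w : ATerm) : liftSub (sb j w) = sb (j + 1) (w.lift 0) := by
  funext n
  cases n with
  | zero => simp [liftSub, sb]
  | succ n =>
    simp only [liftSub, sb]
    rcases lt_trichotomy n j with h | h | h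
    · simp [h, ATerm.lift]
    · simp [h]
    · have h1 : ¬ n < j := by omega
      have h2 : n ≠ j := by omega
      simp [h1, h2, ATerm.lift]
      omega

/-- codes of substitutions -/
inductive Sg : ℕ → (ℕ → ATerm) → Prop
  | lift (j : ℕ) : Sg (Nat.pair j 0) (lft j)
  | sub (j : ℕ) (w : ATerm) : Sg (Nat.pair j (w.code + 1)) (sb j w)

def VV (σ n y : ℕ) : Prop := ∃ j k, σ = Nat.pair j k ∧
  ((n < j ∧ y = Nat.pair 0 n) ∨ (k = 0 ∧ j ≤ n ∧ y = Nat.pair 0 (n + 1)) ∨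
    (n = j ∧ k = y + 1) ∨ ∃ i u, k = u + 1 ∧ n = i + 1 ∧ j ≤ i ∧ y = Nat.pair 0 i)

theorem VV_iff {σ : ℕ} {s : ℕ → ATerm} (h : Sg σ s) (n y : ℕ) : VV σ n y ↔ y = (s n).code := by
  cases h with
  | lift j =>
    simp only [VV, Nat.pair_eq_pair, lft]
    by_cases h : n < j
    · simp only [h, if_true, ATerm.code]
      constructor
      · rintro ⟨j', k, ⟨rfl, rfl⟩, ⟨_, e⟩ | ⟨_, h', e⟩ | ⟨h', e⟩ | ⟨i, u, h', e⟩⟩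
        · exact e
        · omega
        · omega
        · omega
      · intro e
        exact ⟨j, 0, ⟨rfl, rfl⟩, Or.inl ⟨h, e⟩⟩
    · simp only [h, if_false, ATerm.code]
      constructor
      · rintro ⟨j', k, ⟨rfl, rfl⟩, ⟨_, e⟩ | ⟨_, h', e⟩ | ⟨h', e⟩ | ⟨i, u, h', e⟩⟩
        · omega
        · exact e
        · omega
        · omega
      · intro e
        exact ⟨j, 0, ⟨rfl, rfl⟩, Or.inr (Or.inl ⟨rfl, by omega, e⟩)⟩
  | sub j w =>
    simp only [VV, Nat.pair_eq_pair, sb]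
    rcases lt_trichotomy n j with h | h | h
    · simp only [h, if_true, ATerm.code]
      constructor
      · rintro ⟨j', k, ⟨rfl, rfl⟩, ⟨_, e⟩ | ⟨_, h', e⟩ | ⟨h', e⟩ | ⟨i, u, h', e, h'', e'⟩⟩
        · exact e
        · omega
        · omega
        · omega
      · intro e
        exact ⟨j, _, ⟨rfl, rfl⟩, Or.inl ⟨h, e⟩⟩
    · subst h
      simp only [lt_irrefl, if_false, if_true]
      constructor
      · rintro ⟨j', k, ⟨rfl, rfl⟩, ⟨_, e⟩ | ⟨_, h', e⟩ | ⟨h', e⟩ | ⟨i, u, h', e, h'', e'⟩⟩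
        · omega
        · omega
        · omega
        · omega
      · intro e
        exact ⟨n, _, ⟨rfl, rfl⟩, Or.inr (Or.inr (Or.inl ⟨rfl, by rw [e]⟩))⟩
    · have h1 : ¬ n < j := by omega
      have h2 : n ≠ j := by omega
      simp only [h1, h2, if_false, ATerm.code]
      constructor
      · rintro ⟨j', k, ⟨rfl, rfl⟩, ⟨_, e⟩ | ⟨_, h', e⟩ | ⟨h', e⟩ | ⟨i, u, h', e, h'', e'⟩⟩
        · omega
        · omega
        · omega
        · subst e; simpa using e'
      · intro e
        exact ⟨j, _, ⟨rfl, rfl⟩, Or.inr (Or.inr (Or.inr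
          ⟨n - 1, w.code, rfl, by omega, by omega, e⟩))⟩

theorem VV_S1 : S1 (fun ρ => VV (ρ 0) (ρ 1) (ρ 2)) := by
  unfold VV
  repeat' first
    | exact Fn.var _
    | exact Fn.const _
    | with_reducible apply S1.and
    | with_reducible apply S1.or
    | with_reducible apply S1.ex
    | with_reducible apply S1.eq
    | with_reducible apply S1.lt
    | with_reducible apply S1.le
    | with_reducible apply Fn.pair
    | with_reducible apply Fn.add

def TTax (e : ℕ) : Prop := ∃ σ x y, e = Nat.pair σ (Nat.pair x y) ∧
  ((∃ n, x = Nat.pair 0 n ∧ VV σ n y) ∨ (x = Nat.pair 1 0 ∧ y = Nat.pair 1 0))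
def TTst (e a b : ℕ) : Prop := ∃ σ x y x' y', a = Nat.pair σ (Nat.pair x y) ∧
  b = Nat.pair σ (Nat.pair x' y') ∧
  (e = Nat.pair σ (Nat.pair (Nat.pair 2 x) (Nat.pair 2 y)) ∨
   e = Nat.pair σ (Nat.pair (Nat.pair 3 (Nat.pair x x')) (Nat.pair 3 (Nat.pair y y'))) ∨
   e = Nat.pair σ (Nat.pair (Nat.pair 4 (Nat.pair x x')) (Nat.pair 4 (Nat.pair y y'))))
def TT (σ x y : ℕ) : Prop := Lfp TTax TTst (Nat.pair σ (Nat.pair x y))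

theorem TT_S1 : S1 (fun ρ => TT (ρ 0) (ρ 1) (ρ 2)) := by
  have h : S1 (fun ρ => Lfp TTax TTst (ρ 0)) := by
    refine Lfp_S1 ?_ ?_
    · unfold TTax
      repeat' first
        | exact Fn.var _
        | exact Fn.const _
        | with_reducible apply S1.and
        | with_reducible apply S1.or
        | with_reducible apply S1.ex
        | with_reducible apply S1.eq
        | with_reducible apply S1.comp3 VV_S1
        | with_reducible apply Fn.pair
    · unfold TTst
      repeat' first
        | exact Fn.var _
        | exact Fn.const _
        | with_reducible apply S1.and
        | with_reducible apply S1.or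
        | with_reducible apply S1.ex
        | with_reducible apply S1.eq
        | with_reducible apply Fn.pair
  exact h.comp1 (Fn.pair (Fn.var 0) (Fn.pair (Fn.var 1) (Fn.var 2)))

theorem TT_iff {σ : ℕ} {s : ℕ → ATerm} (h : Sg σ s) (x y : ℕ) :
    TT σ x y ↔ ∃ t : ATerm, x = t.code ∧ y = (t.substAll s).code := by
  constructor
  · intro hT
    unfold TT at hT
    generalize he : Nat.pair σ (Nat.pair x y) = e at hT
    induction hT generalizing x y with
    | ax hx =>
      obtain ⟨σ', x', y', rfl, hx⟩ := hx
      simp only [Nat.pair_eq_pair] at he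
      obtain ⟨rfl, rfl, rfl⟩ := he
      rcases hx with ⟨n, rfl, hv⟩ | ⟨rfl, rfl⟩
      · exact ⟨.var n, rfl, (VV_iff h _ _).1 hv⟩
      · exact ⟨.zero, rfl, rfl⟩
    | step _ _ hr ih1 ih2 =>
      obtain ⟨σ', a, b, a', b', rfl, rfl, hr⟩ := hr
      rcases hr with rfl | rfl | rfl <;> simp only [Nat.pair_eq_pair] at he <;>
        obtain ⟨rfl, rfl, rfl⟩ := he
      · obtain ⟨t, rfl, rfl⟩ := ih1 _ _ rfl
        exact ⟨.succ t, rfl, rfl⟩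
      · obtain ⟨t, rfl, rfl⟩ := ih1 _ _ rfl
        obtain ⟨t', rfl, rfl⟩ := ih2 _ _ rfl
        exact ⟨.add t t', rfl, rfl⟩
      · obtain ⟨t, rfl, rfl⟩ := ih1 _ _ rfl
        obtain ⟨t', rfl, rfl⟩ := ih2 _ _ rfl
        exact ⟨.mul t t', rfl, rfl⟩
  · rintro ⟨t, rfl, rfl⟩
    induction t with
    | var n => exact .ax ⟨_, _, _, rfl, Or.inl ⟨n, rfl, (VV_iff h _ _).2 rfl⟩⟩
    | zero => exact .ax ⟨_, _, _, rfl, Or.inr ⟨rfl, rfl⟩⟩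
    | succ t ih => exact .step ih ih ⟨_, _, _, _, _, rfl, rfl, Or.inl rfl⟩
    | add t t' ih ih' => exact .step ih ih' ⟨_, _, _, _, _, rfl, rfl, Or.inr (Or.inl rfl)⟩
    | mul t t' ih ih' => exact .step ih ih' ⟨_, _, _, _, _, rfl, rfl, Or.inr (Or.inr rfl)⟩

def NN (σ σ' : ℕ) : Prop := (∃ j, σ = Nat.pair j 0 ∧ σ' = Nat.pair (j + 1) 0) ∨
  ∃ j u u', σ = Nat.pair j (u + 1) ∧ TT (Nat.pair 0 0) u u' ∧ σ' = Nat.pair (j + 1) (u' + 1)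

theorem NN_S1 : S1 (fun ρ => NN (ρ 0) (ρ 1)) := by
  unfold NN
  repeat' first
    | exact Fn.var _
    | exact Fn.const _
    | with_reducible apply S1.and
    | with_reducible apply S1.or
    | with_reducible apply S1.ex
    | with_reducible apply S1.eq
    | with_reducible apply S1.comp3 TT_S1
    | with_reducible apply Fn.pair
    | with_reducible apply Fn.add

theorem NN_sg {σ σ' : ℕ} {s : ℕ → ATerm} (h : Sg σ s) (hn : NN σ σ') : Sg σ' (liftSub s) := by
  cases h with
  | lift j =>
    rcases hn with ⟨j', e, rfl⟩ | ⟨j', u, u', e, _⟩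
    · simp only [Nat.pair_eq_pair] at e
      obtain ⟨rfl, _⟩ := e
      rw [liftSub_lft]
      exact .lift _
    · simp [Nat.pair_eq_pair] at e
  | sub j w =>
    rcases hn with ⟨j', e, rfl⟩ | ⟨j', u, u', e, h, rfl⟩
    · simp [Nat.pair_eq_pair] at e
    · simp only [Nat.pair_eq_pair, Nat.add_right_cancel_iff] at e
      obtain ⟨rfl, rfl⟩ := e
      obtain ⟨t, e, rfl⟩ := (TT_iff (.lift 0) _ _).1 h
      have := ATerm.code_inj e
      subst this
      rw [← ATerm.lift_eq, liftSub_sb]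
      exact .sub _ _

theorem NN_ex {σ : ℕ} {s : ℕ → ATerm} (h : Sg σ s) : ∃ σ', NN σ σ' := by
  cases h with
  | lift j => exact ⟨_, Or.inl ⟨j, rfl, rfl⟩⟩
  | sub j w => exact ⟨_, Or.inr ⟨j, _, _, rfl, (TT_iff (.lift 0) _ _).2 ⟨w, rfl, rfl⟩, rfl⟩⟩

def FFax (e : ℕ) : Prop := ∃ σ x y x' y', TT σ x y ∧ TT σ x' y' ∧
  (e = Nat.pair σ (Nat.pair (Nat.pair 0 (Nat.pair x x')) (Nat.pair 0 (Nat.pair y y'))) ∨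
   e = Nat.pair σ (Nat.pair (Nat.pair 1 (Nat.pair x x')) (Nat.pair 1 (Nat.pair y y'))))
def FFst (e a b : ℕ) : Prop := ∃ σ x y τ x' y', a = Nat.pair σ (Nat.pair x y) ∧
  b = Nat.pair τ (Nat.pair x' y') ∧
  (e = Nat.pair σ (Nat.pair (Nat.pair 2 x) (Nat.pair 2 y)) ∨
   (σ = τ ∧
    e = Nat.pair σ (Nat.pair (Nat.pair 3 (Nat.pair x x')) (Nat.pair 3 (Nat.pair y y')))) ∨
   (σ = τ ∧
    e = Nat.pair σ (Nat.pair (Nat.pair 4 (Nat.pair x x')) (Nat.pair 4 (Nat.pair y y')))) ∨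
   (σ = τ ∧
    e = Nat.pair σ (Nat.pair (Nat.pair 5 (Nat.pair x x')) (Nat.pair 5 (Nat.pair y y')))) ∨
   ∃ σ0, NN σ0 σ ∧ (e = Nat.pair σ0 (Nat.pair (Nat.pair 6 x) (Nat.pair 6 y)) ∨
    e = Nat.pair σ0 (Nat.pair (Nat.pair 7 x) (Nat.pair 7 y))))
def FF (σ x y : ℕ) : Prop := Lfp FFax FFst (Nat.pair σ (Nat.pair x y))

theorem FF_S1 : S1 (fun ρ => FF (ρ 0) (ρ 1) (ρ 2)) := by
  have h : S1 (fun ρ => Lfp FFax FFst (ρ 0)) := by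
    refine Lfp_S1 ?_ ?_
    · unfold FFax
      repeat' first
        | exact Fn.var _
        | exact Fn.const _
        | with_reducible apply S1.and
        | with_reducible apply S1.or
        | with_reducible apply S1.ex
        | with_reducible apply S1.eq
        | with_reducible apply S1.comp3 TT_S1
        | with_reducible apply Fn.pair
    · unfold FFst
      repeat' first
        | exact Fn.var _
        | exact Fn.const _
        | with_reducible apply S1.and
        | with_reducible apply S1.or
        | with_reducible apply S1.ex
        | with_reducible apply S1.eq
        | with_reducible apply S1.comp2 NN_S1
        | with_reducible apply Fn.pair
  exact h.comp1 (Fn.pair (Fn.var 0) (Fn.pair (Fn.var 1) (Fn.var 2)))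

theorem FF_iff {σ : ℕ} {s : ℕ → ATerm} (h : Sg σ s) (x y : ℕ) :
    FF σ x y ↔ ∃ t : AFml, x = t.code ∧ y = (t.substAll s).code := by
  constructor
  · intro hT
    unfold FF at hT
    generalize he : Nat.pair σ (Nat.pair x y) = e at hT
    induction hT generalizing σ s x y with
    | ax hx =>
      obtain ⟨σ', a, b, a', b', h1, h2, hx⟩ := hx
      rcases hx with rfl | rfl <;> simp only [Nat.pair_eq_pair] at he <;>
        obtain ⟨rfl, rfl, rfl⟩ := he <;>
        obtain ⟨t, rfl, rfl⟩ := (TT_iff h _ _).1 h1 <;>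
        obtain ⟨t', rfl, rfl⟩ := (TT_iff h _ _).1 h2
      · exact ⟨.eq t t', rfl, rfl⟩
      · exact ⟨.le t t', rfl, rfl⟩
    | step _ _ hr ih1 ih2 =>
      obtain ⟨σ', a, b, τ', a', b', rfl, rfl, hr⟩ := hr
      rcases hr with rfl | ⟨rfl, rfl⟩ | ⟨rfl, rfl⟩ | ⟨rfl, rfl⟩ | ⟨σ0, hN, rfl | rfl⟩ <;>
        simp only [Nat.pair_eq_pair] at he <;>
        obtain ⟨rfl, rfl, rfl⟩ := he
      · obtain ⟨t, rfl, rfl⟩ := ih1 h _ _ rfl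
        exact ⟨.neg t, rfl, rfl⟩
      · obtain ⟨t, rfl, rfl⟩ := ih1 h _ _ rfl
        obtain ⟨t', rfl, rfl⟩ := ih2 h _ _ rfl
        exact ⟨.and t t', rfl, rfl⟩
      · obtain ⟨t, rfl, rfl⟩ := ih1 h _ _ rfl
        obtain ⟨t', rfl, rfl⟩ := ih2 h _ _ rfl
        exact ⟨.or t t', rfl, rfl⟩
      · obtain ⟨t, rfl, rfl⟩ := ih1 h _ _ rfl
        obtain ⟨t', rfl, rfl⟩ := ih2 h _ _ rfl
        exact ⟨.imp t t', rfl, rfl⟩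
      · obtain ⟨t, rfl, rfl⟩ := ih1 (NN_sg h hN) _ _ rfl
        exact ⟨.all t, rfl, rfl⟩
      · obtain ⟨t, rfl, rfl⟩ := ih1 (NN_sg h hN) _ _ rfl
        exact ⟨.ex t, rfl, rfl⟩
  · rintro ⟨t, rfl, rfl⟩
    induction t generalizing σ s with
    | eq t t' =>
      exact .ax ⟨_, _, _, _, _, (TT_iff h _ _).2 ⟨t, rfl, rfl⟩,
        (TT_iff h _ _).2 ⟨t', rfl, rfl⟩, Or.inl rfl⟩
    | le t t' =>
      exact .ax ⟨_, _, _, _, _, (TT_iff h _ _).2 ⟨t, rfl, rfl⟩,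
        (TT_iff h _ _).2 ⟨t', rfl, rfl⟩, Or.inr rfl⟩
    | neg t ih => exact .step (ih h) (ih h) ⟨_, _, _, _, _, _, rfl, rfl, Or.inl rfl⟩
    | and t t' ih ih' =>
      exact .step (ih h) (ih' h)
        ⟨_, _, _, _, _, _, rfl, rfl, Or.inr (Or.inl ⟨rfl, rfl⟩)⟩
    | or t t' ih ih' =>
      exact .step (ih h) (ih' h)
        ⟨_, _, _, _, _, _, rfl, rfl, Or.inr (Or.inr (Or.inl ⟨rfl, rfl⟩))⟩
    | imp t t' ih ih' =>
      exact .step (ih h) (ih' h)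
        ⟨_, _, _, _, _, _, rfl, rfl, Or.inr (Or.inr (Or.inr (Or.inl ⟨rfl, rfl⟩)))⟩
    | all t ih =>
      obtain ⟨σ', hN⟩ := NN_ex h
      have := ih (NN_sg h hN)
      exact .step this this
        ⟨_, _, _, _, _, _, rfl, rfl, Or.inr (Or.inr (Or.inr (Or.inr ⟨_, hN, Or.inl rfl⟩)))⟩
    | ex t ih =>
      obtain ⟨σ', hN⟩ := NN_ex h
      have := ih (NN_sg h hN)
      exact .step this this
        ⟨_, _, _, _, _, _, rfl, rfl, Or.inr (Or.inr (Or.inr (Or.inr ⟨_, hN, Or.inr rfl⟩)))⟩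

def IsT (x : ℕ) : Prop := ∃ t : ATerm, x = t.code
def IsF (x : ℕ) : Prop := ∃ t : AFml, x = t.code
def LiftR (x y : ℕ) : Prop := ∃ t : AFml, x = t.code ∧ y = (t.lift 0).code
def SubR (u x y : ℕ) : Prop := ∃ (w : ATerm) (t : AFml),
  u = w.code ∧ x = t.code ∧ y = (t.subst0 w).code

theorem IsT_S1 : S1 (fun ρ => IsT (ρ 0)) := by
  refine (S1.ex (Q := fun y ρ => TT (Nat.pair 0 0) (ρ 0) y)
    (TT_S1.comp3 (Fn.const _) (Fn.var 1) (Fn.var 0))).congr fun ρ => ?_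
  simp [TT_iff (.lift 0), IsT]
theorem LiftR_S1 : S1 (fun ρ => LiftR (ρ 0) (ρ 1)) := by
  refine (S1.comp3 (R := FF) FF_S1 (a := fun _ => Nat.pair 0 0) (b := fun ρ => ρ 0)
    (c := fun ρ => ρ 1) (Fn.const _) (Fn.var 0) (Fn.var 1)).congr fun ρ => ?_
  simp [FF_iff (.lift 0), LiftR, AFml.lift_eq]
theorem IsF_S1 : S1 (fun ρ => IsF (ρ 0)) := by
  refine (S1.ex (Q := fun y ρ => FF (Nat.pair 0 0) (ρ 0) y)
    (FF_S1.comp3 (Fn.const _) (Fn.var 1) (Fn.var 0))).congr fun ρ => ?_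
  simp [FF_iff (.lift 0), IsF]
theorem SubR_S1 : S1 (fun ρ => SubR (ρ 0) (ρ 1) (ρ 2)) := by
  refine (S1.and IsT_S1 (S1.comp3 (R := FF) (a := fun ρ => Nat.pair 0 (ρ 0 + 1))
    (b := fun ρ => ρ 1) (c := fun ρ => ρ 2) FF_S1
    ((Fn.const _).pair ((Fn.var 0).add (Fn.const 1))) (Fn.var 1) (Fn.var 2))).congr fun ρ => ?_
  constructor
  · rintro ⟨w, t, h1, h2, h3⟩
    refine ⟨⟨w, h1⟩, ?_⟩
    rw [h1, FF_iff (.sub 0 w)]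
    exact ⟨t, h2, by rw [h3, sb_zero]; rfl⟩
  · rintro ⟨⟨w, h1⟩, h⟩
    rw [h1, FF_iff (.sub 0 w)] at h
    obtain ⟨t, h2, h3⟩ := h
    exact ⟨w, t, h1, h2, by rw [h3, sb_zero]; rfl⟩

/-! ### Propositional tautologies -/

def bitf (a x : ℕ) : ℕ := a / 2 ^ x % 2

theorem bitf_Fn : Fn (fun ρ => bitf (ρ 0) (ρ 1)) := by
  have hp : Primrec (fun n : ℕ => 2 ^ n) := by
    have := Nat.Primrec.pow.comp (Nat.Primrec.pair (Nat.Primrec.const 2) Nat.Primrec.id)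
    refine Primrec.nat_iff.2 ?_
    simpa [Nat.unpaired] using this
  have h : Primrec (fun n : ℕ => bitf n.unpair.1 n.unpair.2) := by
    unfold bitf
    exact Primrec.nat_mod.comp (Primrec.nat_div.comp (Primrec.fst.comp Primrec.unpair)
      (hp.comp (Primrec.snd.comp Primrec.unpair))) (Primrec.const 2)
  have := Fn.comp1 (f := fun n => bitf n.unpair.1 n.unpair.2) (primrec_Fn (Primrec.nat_iff.1 h))
    (Fn.pair (Fn.var 0) (Fn.var 1))
  simpa using this

theorem two_pow_Fn {a : (ℕ → ℕ) → ℕ} (ha : Fn a) : Fn (fun ρ => 2 ^ (a ρ)) := by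
  have := Nat.Primrec.pow.comp (Nat.Primrec.pair (Nat.Primrec.const 2) Nat.Primrec.id)
  have h : Nat.Primrec (fun n : ℕ => 2 ^ n) := by simpa [Nat.unpaired] using this
  exact (primrec_Fn h).comp1 ha

def EVax (e : ℕ) : Prop := ∃ a x z, (x = Nat.pair 0 z ∨ x = Nat.pair 1 z ∨ x = Nat.pair 6 z ∨
  x = Nat.pair 7 z) ∧ e = Nat.pair a (Nat.pair x (bitf a x))
def EVst (e p q : ℕ) : Prop := ∃ a x b y c d, p = Nat.pair a (Nat.pair x b) ∧
  q = Nat.pair a (Nat.pair y c) ∧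
  ((e = Nat.pair a (Nat.pair (Nat.pair 2 x) d) ∧ d + b = 1) ∨
   (e = Nat.pair a (Nat.pair (Nat.pair 3 (Nat.pair x y)) d) ∧ d = b * c) ∨
   (e = Nat.pair a (Nat.pair (Nat.pair 4 (Nat.pair x y)) d) ∧ d + b * c = b + c) ∨
   (e = Nat.pair a (Nat.pair (Nat.pair 5 (Nat.pair x y)) d) ∧ d + b = 1 + b * c))
def EV (a x b : ℕ) : Prop := Lfp EVax EVst (Nat.pair a (Nat.pair x b))

theorem EV_S1 : S1 (fun ρ => EV (ρ 0) (ρ 1) (ρ 2)) := by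
  have h : S1 (fun ρ => Lfp EVax EVst (ρ 0)) := by
    refine Lfp_S1 ?_ ?_
    · unfold EVax
      repeat' first
        | exact Fn.var _
        | exact Fn.const _
        | with_reducible apply S1.and
        | with_reducible apply S1.or
        | with_reducible apply S1.ex
        | with_reducible apply S1.eq
        | with_reducible apply Fn.comp2 bitf_Fn
        | with_reducible apply Fn.pair
    · unfold EVst
      repeat' first
        | exact Fn.var _
        | exact Fn.const _
        | with_reducible apply S1.and
        | with_reducible apply S1.or
        | with_reducible apply S1.ex
        | with_reducible apply S1.eq
        | with_reducible apply Fn.pair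
        | with_reducible apply Fn.add
        | with_reducible apply Fn.mul
  exact h.comp1 (Fn.pair (Fn.var 0) (Fn.pair (Fn.var 1) (Fn.var 2)))

open Classical in
noncomputable def evb (a : ℕ) (φ : AFml) : ℕ :=
  if φ.evalProp (fun ψ => bitf a ψ.code = 1) then 1 else 0

theorem bitf_if (a x : ℕ) : bitf a x = 0 ∨ bitf a x = 1 := by
  unfold bitf; omega

theorem evb_cases (a : ℕ) (φ : AFml) :
    (φ.evalProp (fun ψ => bitf a ψ.code = 1) ∧ evb a φ = 1) ∨
    (¬ φ.evalProp (fun ψ => bitf a ψ.code = 1) ∧ evb a φ = 0) := by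
  by_cases h : φ.evalProp (fun ψ => bitf a ψ.code = 1)
  · exact Or.inl ⟨h, if_pos h⟩
  · exact Or.inr ⟨h, if_neg h⟩

theorem evb_neg (a : ℕ) (φ : AFml) : evb a (.neg φ) + evb a φ = 1 := by
  rcases evb_cases a φ with ⟨h1, h2⟩ | ⟨h1, h2⟩ <;>
    rcases evb_cases a φ.neg with ⟨h3, h4⟩ | ⟨h3, h4⟩ <;>
    simp only [AFml.evalProp] at h3 <;> first | omega | contradiction

theorem evb_and (a : ℕ) (φ ψ : AFml) : evb a (.and φ ψ) = evb a φ * evb a ψ := by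
  rcases evb_cases a φ with ⟨h1, h2⟩ | ⟨h1, h2⟩ <;>
    rcases evb_cases a ψ with ⟨h3, h4⟩ | ⟨h3, h4⟩ <;>
    rcases evb_cases a (φ.and ψ) with ⟨h5, h6⟩ | ⟨h5, h6⟩ <;>
    simp [AFml.evalProp, h1, h3] at h5 <;> simp [h2, h4, h6]

theorem evb_or (a : ℕ) (φ ψ : AFml) :
    evb a (.or φ ψ) + evb a φ * evb a ψ = evb a φ + evb a ψ := by
  rcases evb_cases a φ with ⟨h1, h2⟩ | ⟨h1, h2⟩ <;>
    rcases evb_cases a ψ with ⟨h3, h4⟩ | ⟨h3, h4⟩ <;>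
    rcases evb_cases a (φ.or ψ) with ⟨h5, h6⟩ | ⟨h5, h6⟩ <;>
    simp [AFml.evalProp, h1, h3] at h5 <;> simp [h2, h4, h6]

theorem evb_imp (a : ℕ) (φ ψ : AFml) :
    evb a (.imp φ ψ) + evb a φ = 1 + evb a φ * evb a ψ := by
  rcases evb_cases a φ with ⟨h1, h2⟩ | ⟨h1, h2⟩ <;>
    rcases evb_cases a ψ with ⟨h3, h4⟩ | ⟨h3, h4⟩ <;>
    rcases evb_cases a (φ.imp ψ) with ⟨h5, h6⟩ | ⟨h5, h6⟩ <;>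
    simp [AFml.evalProp, h1, h3] at h5 <;> simp [h2, h4, h6]

theorem EV_sound {a b : ℕ} {φ : AFml} (h : EV a φ.code b) : b = evb a φ := by
  unfold EV at h
  generalize he : Nat.pair a (Nat.pair φ.code b) = e at h
  induction h generalizing φ b with
  | ax hx =>
    obtain ⟨a', x, z, hx, rfl⟩ := hx
    simp only [Nat.pair_eq_pair] at he
    obtain ⟨rfl, rfl, rfl⟩ := he
    cases φ <;> simp [AFml.code, Nat.pair_eq_pair] at hx <;>
      rcases evb_cases _ _ with ⟨h1, h2⟩ | ⟨h1, h2⟩ <;> rw [h2] <;>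
      first | exact h1 | exact (bitf_if _ _).resolve_right h1
  | step _ _ hr ih1 ih2 =>
    obtain ⟨a', x, b', y, c, d, rfl, rfl, hr⟩ := hr
    rcases hr with ⟨rfl, hd⟩ | ⟨rfl, hd⟩ | ⟨rfl, hd⟩ | ⟨rfl, hd⟩ <;>
      simp only [Nat.pair_eq_pair] at he <;> obtain ⟨rfl, he, rfl⟩ := he <;>
      cases φ <;> simp [AFml.code, Nat.pair_eq_pair] at he
    · rename_i φ
      subst he
      have h1 := ih1 rfl
      have := evb_neg a φ
      omega
    · rename_i φ ψ
      obtain ⟨rfl, rfl⟩ := he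
      have h1 := ih1 rfl
      have h2 := ih2 rfl
      subst h1 h2
      exact hd.trans (evb_and a φ ψ).symm
    · rename_i φ ψ
      obtain ⟨rfl, rfl⟩ := he
      have h1 := ih1 rfl
      have h2 := ih2 rfl
      subst h1 h2
      have := evb_or a φ ψ
      omega
    · rename_i φ ψ
      obtain ⟨rfl, rfl⟩ := he
      have h1 := ih1 rfl
      have h2 := ih2 rfl
      subst h1 h2
      have := evb_imp a φ ψ
      omega

theorem EV_complete (a : ℕ) (φ : AFml) : EV a φ.code (evb a φ) := by
  have hat : ∀ φ : AFml, φ.evalProp (fun ψ => bitf a ψ.code = 1) = (bitf a φ.code = 1) →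
      bitf a φ.code = evb a φ := by
    intro φ h
    rcases evb_cases a φ with ⟨h1, h2⟩ | ⟨h1, h2⟩ <;> rw [h] at h1 <;> rw [h2] <;>
      first | exact h1 | exact (bitf_if _ _).resolve_right h1
  induction φ with
  | eq t s => rw [← hat _ rfl]; exact .ax ⟨_, _, _, Or.inl rfl, rfl⟩
  | le t s => rw [← hat _ rfl]; exact .ax ⟨_, _, _, Or.inr (Or.inl rfl), rfl⟩
  | all t => rw [← hat _ rfl]; exact .ax ⟨_, _, _, Or.inr (Or.inr (Or.inl rfl)), rfl⟩
  | ex t => rw [← hat _ rfl]; exact .ax ⟨_, _, _, Or.inr (Or.inr (Or.inr rfl)), rfl⟩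
  | neg φ ih =>
    refine .step ih ih ⟨_, _, _, _, _, _, rfl, rfl, Or.inl ⟨rfl, ?_⟩⟩
    exact evb_neg a φ
  | and φ ψ ih1 ih2 =>
    refine .step ih1 ih2 ⟨_, _, _, _, _, _, rfl, rfl, Or.inr (Or.inl ⟨rfl, ?_⟩)⟩
    exact evb_and a φ ψ
  | or φ ψ ih1 ih2 =>
    refine .step ih1 ih2 ⟨_, _, _, _, _, _, rfl, rfl, Or.inr (Or.inr (Or.inl ⟨rfl, ?_⟩))⟩
    exact evb_or a φ ψ
  | imp φ ψ ih1 ih2 =>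
    refine .step ih1 ih2 ⟨_, _, _, _, _, _, rfl, rfl, Or.inr (Or.inr (Or.inr ⟨rfl, ?_⟩))⟩
    exact evb_imp a φ ψ

theorem evalProp_congr {v v' : AFml → Prop} (φ : AFml)
    (h : ∀ ψ : AFml, ψ.code ≤ φ.code → (v ψ ↔ v' ψ)) : φ.evalProp v ↔ φ.evalProp v' := by
  induction φ with
  | eq t s => exact h _ le_rfl
  | le t s => exact h _ le_rfl
  | all t => exact h _ le_rfl
  | ex t => exact h _ le_rfl
  | neg φ ih =>
    simp only [AFml.evalProp]
    rw [ih fun ψ hψ => h ψ (hψ.trans (Nat.right_le_pair _ _))]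
  | and φ ψ ih1 ih2 | or φ ψ ih1 ih2 | imp φ ψ ih1 ih2 =>
    simp only [AFml.evalProp]
    rw [ih1 fun χ hχ => h χ (hχ.trans ((Nat.left_le_pair _ _).trans (Nat.right_le_pair _ _))),
      ih2 fun χ hχ => h χ (hχ.trans ((Nat.right_le_pair _ _).trans (Nat.right_le_pair _ _)))]

def TautR (x : ℕ) : Prop := ∃ t : AFml, x = t.code ∧ ATaut t

theorem TautR_S1 : S1 (fun ρ => TautR (ρ 0)) := by
  refine (S1.and IsF_S1 (S1.ball (b := fun ρ => 2 ^ (ρ 0 + 1)) (Q := fun a ρ => EV a (ρ 0) 1)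
    (two_pow_Fn ((Fn.var 0).add (Fn.const 1))) (EV_S1.comp3 (Fn.var 0) (Fn.var 1)
      (Fn.const 1)))).congr fun ρ => ?_
  constructor
  · rintro ⟨t, h, ht⟩
    refine ⟨⟨t, h⟩, fun a _ => ?_⟩
    have := EV_complete a t
    rw [evb, if_pos (ht _), ← h] at this
    exact this
  · rintro ⟨⟨t, h⟩, h'⟩
    refine ⟨t, h, fun v => ?_⟩
    classical
    let f : Fin (t.code + 1) → Bool := fun i => decide (∃ ψ : AFml, ψ.code = i ∧ v ψ)
    have := EV_sound (h ▸ h' (Nat.ofBits f) (by rw [h]; exact (Nat.ofBits_lt_two_pow f).le))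
    unfold evb at this
    split_ifs at this with h2
    · refine (evalProp_congr t fun ψ hψ => ?_).1 h2
      have e := Nat.testBit_ofBits_lt f ψ.code (by omega)
      rw [Nat.testBit_eq_decide_div_mod_eq] at e
      have e2 : bitf (Nat.ofBits f) ψ.code = 1 ↔ f ⟨ψ.code, by omega⟩ = true := by
        rw [← e]; simp [bitf]
      rw [e2]
      simp only [f, decide_eq_true_eq]
      constructor
      · rintro ⟨χ, h3, h4⟩
        rwa [← AFml.code_inj h3]
      · intro h3
        exact ⟨ψ, rfl, h3⟩

/-! ## Part 5 : provability is Σ₁ -/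

def nc (k : ℕ) : ℕ := (numeral k).code

theorem nc_Fn : Fn (fun ρ => nc (ρ 0)) := by
  refine primrec_Fn (Primrec.nat_iff.1 ?_)
  have := Primrec.nat_rec₁ (α := ℕ) (f := fun _ y => Nat.pair 2 y) (Nat.pair 1 0)
    (Primrec₂.natPair.comp (Primrec.const 2) Primrec.snd)
  refine this.of_eq fun n => ?_
  induction n with
  | zero => rfl
  | succ n ih =>
    show Nat.pair 2 _ = _
    rw [ih]; rfl

def PrAx (p : ℕ → Bool) (x : ℕ) : Prop :=
  (Encodable.encode (p x) = 1 ∧ IsF x) ∨ TautR x ∨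
  (∃ u f y, SubR u f y ∧ x = Nat.pair 5 (Nat.pair (Nat.pair 6 f) y)) ∨
  (∃ u f y, SubR u f y ∧ x = Nat.pair 5 (Nat.pair y (Nat.pair 7 f))) ∨
  (∃ f g, IsF f ∧ IsF g ∧ x = Nat.pair 5 (Nat.pair (Nat.pair 6 (Nat.pair 5 (Nat.pair f g)))
    (Nat.pair 5 (Nat.pair (Nat.pair 6 f) (Nat.pair 6 g))))) ∨
  (∃ f g, LiftR f g ∧ x = Nat.pair 5 (Nat.pair f (Nat.pair 6 g))) ∨
  (∃ f, IsF f ∧ x = Nat.pair 3 (Nat.pair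
    (Nat.pair 5 (Nat.pair (Nat.pair 7 f) (Nat.pair 2 (Nat.pair 6 (Nat.pair 2 f)))))
    (Nat.pair 5 (Nat.pair (Nat.pair 2 (Nat.pair 6 (Nat.pair 2 f))) (Nat.pair 7 f))))) ∨
  (∃ t, IsT t ∧ x = Nat.pair 0 (Nat.pair t t)) ∨
  (∃ f t s y z, SubR t f y ∧ SubR s f z ∧ x = Nat.pair 5 (Nat.pair (Nat.pair 0 (Nat.pair t s))
    (Nat.pair 5 (Nat.pair y z))))
def PrSt (x a b : ℕ) : Prop := IsF x ∧ (a = Nat.pair 5 (Nat.pair b x) ∨ x = Nat.pair 6 a)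

def WW (Tax : Set AFml) (x : ℕ) : Prop := ∃ φ : AFml, x = φ.code ∧ Proves Tax φ

theorem WW_code {Tax : Set AFml} {φ : AFml} : WW Tax φ.code ↔ Proves Tax φ := by
  constructor
  · rintro ⟨ψ, h, h'⟩
    rwa [AFml.code_inj h]
  · intro h
    exact ⟨φ, rfl, h⟩

theorem WW_iff {Tax : Set AFml} {p : ℕ → Bool} (hp : ∀ φ : AFml, φ ∈ Tax ↔ p φ.code = true)
    (x : ℕ) : WW Tax x ↔ Lfp (PrAx p) PrSt x := by
  have he : ∀ b : Bool, Encodable.encode b = 1 ↔ b = true := by decide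
  constructor
  · rintro ⟨φ, rfl, h⟩
    induction h with
    | @ax φ h => exact .ax (Or.inl ⟨(he _).2 ((hp _).1 h), φ, rfl⟩)
    | @taut φ h => exact .ax (Or.inr (Or.inl ⟨φ, rfl, h⟩))
    | @mp φ ψ _ _ ih1 ih2 => exact .step ih1 ih2 ⟨⟨ψ, rfl⟩, Or.inl rfl⟩
    | allE φ t => exact .ax (Or.inr (Or.inr (Or.inl ⟨_, _, _, ⟨t, φ, rfl, rfl, rfl⟩, rfl⟩)))
    | exI φ t =>
      exact .ax (Or.inr (Or.inr (Or.inr (Or.inl ⟨_, _, _, ⟨t, φ, rfl, rfl, rfl⟩, rfl⟩))))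
    | allImp φ ψ =>
      exact .ax (Or.inr (Or.inr (Or.inr (Or.inr (Or.inl ⟨_, _, ⟨φ, rfl⟩, ⟨ψ, rfl⟩, rfl⟩)))))
    | vacAll φ =>
      exact .ax (Or.inr (Or.inr (Or.inr (Or.inr (Or.inr (Or.inl
        ⟨_, _, ⟨φ, rfl, rfl⟩, rfl⟩))))))
    | exDef φ =>
      exact .ax (Or.inr (Or.inr (Or.inr (Or.inr (Or.inr (Or.inr (Or.inl
        ⟨_, ⟨φ, rfl⟩, rfl⟩)))))))
    | @gen φ _ ih => exact .step ih ih ⟨⟨.all φ, rfl⟩, Or.inr rfl⟩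
    | eqRefl t =>
      exact .ax (Or.inr (Or.inr (Or.inr (Or.inr (Or.inr (Or.inr (Or.inr (Or.inl
        ⟨_, ⟨t, rfl⟩, rfl⟩))))))))
    | eqSubst φ t s =>
      exact .ax (Or.inr (Or.inr (Or.inr (Or.inr (Or.inr (Or.inr (Or.inr (Or.inr
        ⟨_, _, _, _, _, ⟨t, φ, rfl, rfl, rfl⟩, ⟨s, φ, rfl, rfl, rfl⟩, rfl⟩))))))))
  · intro h
    induction h with
    | ax h =>
      rcases h with ⟨h, φ, rfl⟩ | ⟨φ, rfl, h⟩ | ⟨_, _, _, ⟨t, φ, rfl, rfl, rfl⟩, rfl⟩ |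
        ⟨_, _, _, ⟨t, φ, rfl, rfl, rfl⟩, rfl⟩ | ⟨_, _, ⟨φ, rfl⟩, ⟨ψ, rfl⟩, rfl⟩ |
        ⟨_, _, ⟨φ, rfl, rfl⟩, rfl⟩ | ⟨_, ⟨φ, rfl⟩, rfl⟩ | ⟨_, ⟨t, rfl⟩, rfl⟩ |
        ⟨_, _, _, _, _, ⟨t, φ, rfl, rfl, rfl⟩, ⟨s, φ', rfl, e, rfl⟩, rfl⟩
      · exact ⟨φ, rfl, .ax ((hp _).2 ((he _).1 h))⟩
      · exact ⟨φ, rfl, .taut h⟩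
      · exact ⟨_, rfl, .allE φ t⟩
      · exact ⟨_, rfl, .exI φ t⟩
      · exact ⟨_, rfl, .allImp φ ψ⟩
      · exact ⟨_, rfl, .vacAll φ⟩
      · exact ⟨_, rfl, .exDef φ⟩
      · exact ⟨_, rfl, .eqRefl t⟩
      · have := AFml.code_inj e
        subst this
        exact ⟨_, rfl, .eqSubst φ t s⟩
    | step _ _ hr ih1 ih2 =>
      obtain ⟨⟨φ, rfl⟩, hr⟩ := hr
      obtain ⟨ψ1, rfl, h1⟩ := ih1
      obtain ⟨ψ2, rfl, h2⟩ := ih2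
      rcases hr with hr | hr
      · have : ψ1 = .imp ψ2 φ := AFml.code_inj hr
        subst this
        exact ⟨φ, rfl, .mp h1 h2⟩
      · have : φ = .all ψ1 := AFml.code_inj hr
        subst this
        exact ⟨_, rfl, .gen h1⟩

theorem WW_S1 {Tax : Set AFml} (h : PrAxiomatized Tax) : S1 (fun ρ => WW Tax (ρ 0)) := by
  obtain ⟨p, hp, hp'⟩ := h
  have hpf : Fn (fun ρ => Encodable.encode (p (ρ 0))) :=
    primrec_Fn (f := fun n => Encodable.encode (p n)) (Primrec.nat_iff.1 (Primrec.encode_iff.2 hp))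
  have hpf' : S1 (fun ρ => (fun x => Encodable.encode (p x) = 1) (ρ 0)) := S1.eq hpf (Fn.const 1)
  simp only [WW_iff hp']
  refine Lfp_S1 ?_ ?_
  · unfold PrAx
    refine S1.or (S1.and hpf' IsF_S1) (S1.or TautR_S1 ?_)
    repeat' first
      | exact Fn.var _
      | exact Fn.const _
      | with_reducible apply S1.and
      | with_reducible apply S1.or
      | with_reducible apply S1.ex
      | with_reducible apply S1.eq
      | with_reducible apply S1.comp3 SubR_S1
      | with_reducible apply S1.comp2 LiftR_S1
      | with_reducible apply S1.comp1 IsF_S1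
      | with_reducible apply S1.comp1 IsT_S1
      | with_reducible apply Fn.pair
  · unfold PrSt
    repeat' first
      | exact Fn.var _
      | exact Fn.const _
      | with_reducible apply S1.and
      | with_reducible apply S1.or
      | with_reducible apply S1.eq
      | with_reducible apply S1.comp1 IsF_S1
      | with_reducible apply Fn.pair

/-! ## Part 6 : the flexible formula τ -/

theorem D0.cut {R : (ℕ → ℕ) → Prop} (h : D0 R) (k : ℕ)
    (hR : ∀ ρ ρ' : ℕ → ℕ, (∀ i < k, ρ i = ρ' i) → (R ρ ↔ R ρ')) :
    ∃ θ, IsDelta0 θ ∧ θ.FreeLt k ∧ ∀ ρ, θ.Sat ρ ↔ R ρ := by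
  obtain ⟨θ, h1, h2⟩ := h
  refine ⟨θ.substAll (fun n => if n < k then .var n else .zero), h1.substAll _, ?_, ?_⟩
  · obtain ⟨c, hc⟩ := θ.exists_FreeLt
    refine AFml.FreeLt_substAll hc fun n _ => ?_
    split_ifs with h
    · exact h
    · trivial
  · intro ρ
    rw [AFml.Sat_substAll, h2]
    refine hR _ _ fun i hi => ?_
    simp [hi, ATerm.val]

theorem S1.mat1 {R : ℕ → Prop} (h : S1 (fun ρ => R (ρ 0))) :
    ∃ w : ℕ → ℕ → Prop, D0 (fun ρ => w (ρ 0) (ρ 1)) ∧ ∀ x, R x ↔ ∃ u, w x u := by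
  obtain ⟨D, h1, h2⟩ := h
  refine ⟨fun x u => D (consEnv u (consEnv x fun _ => 0)), ?_, fun x => ?_⟩
  · refine (h1.sub (a := fun i ρ => consEnv (ρ 1) (consEnv (ρ 0) fun _ => 0) i) ?_).congr
      fun ρ => Iff.rfl
    intro i
    match i with
    | 0 => exact Pl.var 1
    | 1 => exact Pl.var 0
    | i + 2 => exact Pl.const 0
  · exact h2 (consEnv x fun _ => 0)

theorem S1.mat3 {R : ℕ → ℕ → ℕ → Prop} (h : S1 (fun ρ => R (ρ 0) (ρ 1) (ρ 2))) :
    ∃ w : ℕ → ℕ → ℕ → ℕ → Prop, D0 (fun ρ => w (ρ 0) (ρ 1) (ρ 2) (ρ 3)) ∧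
      ∀ x y z, R x y z ↔ ∃ u, w x y z u := by
  obtain ⟨D, h1, h2⟩ := h
  refine ⟨fun x y z u => D (consEnv u (consEnv x (consEnv y (consEnv z fun _ => 0)))), ?_,
    fun x y z => ?_⟩
  · refine (h1.sub (a := fun i ρ => consEnv (ρ 3) (consEnv (ρ 0) (consEnv (ρ 1)
      (consEnv (ρ 2) fun _ => 0))) i) ?_).congr fun ρ => Iff.rfl
    intro i
    match i with
    | 0 => exact Pl.var 3
    | 1 => exact Pl.var 0
    | 2 => exact Pl.var 1
    | 3 => exact Pl.var 2
    | i + 4 => exact Pl.const 0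
  · exact h2 (consEnv x (consEnv y (consEnv z fun _ => 0)))

theorem S1.mat4 {R : ℕ → ℕ → ℕ → ℕ → Prop} (h : S1 (fun ρ => R (ρ 0) (ρ 1) (ρ 2) (ρ 3))) :
    ∃ w : ℕ → ℕ → ℕ → ℕ → ℕ → Prop, D0 (fun ρ => w (ρ 0) (ρ 1) (ρ 2) (ρ 3) (ρ 4)) ∧
      ∀ x y z t, R x y z t ↔ ∃ u, w x y z t u := by
  obtain ⟨D, h1, h2⟩ := h
  refine ⟨fun x y z t u =>
    D (consEnv u (consEnv x (consEnv y (consEnv z (consEnv t fun _ => 0))))), ?_,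
    fun x y z t => ?_⟩
  · refine (h1.sub (a := fun i ρ => consEnv (ρ 4) (consEnv (ρ 0) (consEnv (ρ 1)
      (consEnv (ρ 2) (consEnv (ρ 3) fun _ => 0)))) i) ?_).congr fun ρ => Iff.rfl
    intro i
    match i with
    | 0 => exact Pl.var 4
    | 1 => exact Pl.var 0
    | 2 => exact Pl.var 1
    | 3 => exact Pl.var 2
    | 4 => exact Pl.var 3
    | i + 5 => exact Pl.const 0
  · exact h2 (consEnv x (consEnv y (consEnv z (consEnv t fun _ => 0))))

def bt (a b x : ℕ) : Prop := a % ((x + 1) * b + 1) = 1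

theorem bt_iff (a b x : ℕ) : bt a b x ↔
    (1 < (x + 1) * b + 1 ∧ ∃ q ≤ a, ((x + 1) * b + 1) * q + 1 = a) := by
  unfold bt
  generalize hM : (x + 1) * b + 1 = M
  have hM0 : 0 < M := by omega
  constructor
  · intro h
    have h1 : 1 < M := by
      have := Nat.mod_lt a hM0
      omega
    refine ⟨h1, a / M, Nat.div_le_self _ _, ?_⟩
    have := Nat.div_add_mod a M
    omega
  · rintro ⟨h1, q, _, h⟩
    rw [← h, Nat.mul_add_mod, Nat.mod_eq_of_lt h1]

theorem bt_D0 {a b x : (ℕ → ℕ) → ℕ} (ha : Pl a) (hb : Pl b) (hx : Pl x) :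
    D0 (fun ρ => bt (a ρ) (b ρ) (x ρ)) := by
  have h : D0 (fun ρ => (fun a b x => bt a b x) (ρ 0) (ρ 1) (ρ 2)) := by
    simp only [bt_iff]
    have hM : ∀ k, Pl (fun ρ => (ρ (2 + k) + 1) * ρ (1 + k) + 1) := fun k =>
      (((Pl.var _).add (Pl.const 1)).mul (Pl.var _)).add (Pl.const 1)
    refine D0.and (D0.lt (Pl.const 1) (hM 0)) ?_
    refine D0.bex (Q := fun q ρ => ((ρ 2 + 1) * ρ 1 + 1) * q + 1 = ρ 0) (Pl.var 0) ?_
    exact D0.eq (((hM 1).mul (Pl.var 0)).add (Pl.const 1)) (Pl.var 1)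
  refine (h.sub (a := fun i ρ => consEnv (a ρ) (consEnv (b ρ) (consEnv (x ρ) fun _ => 0)) i)
    ?_).congr fun ρ => Iff.rfl
  intro i
  match i with
  | 0 => exact ha
  | 1 => exact hb
  | 2 => exact hx
  | i + 3 => exact Pl.const 0

theorem bt_S1 : S1 (fun ρ => bt (ρ 0) (ρ 1) (ρ 2)) :=
  (bt_D0 (Pl.var 0) (Pl.var 1) (Pl.var 2)).s1
def nbt (a b x : ℕ) : Prop := ¬ bt a b x
theorem nbt_S1 : S1 (fun ρ => nbt (ρ 0) (ρ 1) (ρ 2)) :=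
  (bt_D0 (Pl.var 0) (Pl.var 1) (Pl.var 2)).not.s1

theorem bt_real (ε : ℕ → Prop) (N : ℕ) : ∃ a b, ∀ k < N, bt a b k ↔ ε k := by
  classical
  let l : List ℕ := List.ofFn (fun i : Fin N => if ε i then 1 else 0)
  refine ⟨(Nat.unbeta l).unpair.1, (Nat.unbeta l).unpair.2, fun k hk => ?_⟩
  have hl : k < l.length := by simpa [l] using hk
  have := Nat.beta_unbeta_coe l ⟨k, hl⟩
  unfold bt
  have h2 : (Nat.unbeta l).unpair.1 % ((k + 1) * (Nat.unbeta l).unpair.2 + 1) = l[k] := by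
    simpa [Nat.beta] using this
  rw [h2]
  simp [l]

theorem pairD0 {a b c : (ℕ → ℕ) → ℕ} (ha : Pl a) (hb : Pl b) (hc : Pl c) :
    D0 (fun ρ => c ρ = Nat.pair (a ρ) (b ρ)) := by
  refine (D0.or (D0.and (D0.lt ha hb) (D0.eq hc ((hb.mul hb).add ha)))
    (D0.and (D0.lt ha hb).not (D0.eq hc (((ha.mul ha).add ha).add hb)))).congr fun ρ => ?_
  unfold Nat.pair
  split_ifs with h <;> simp [h]

/-! ### the conjunctions of literals -/

open Classical in
noncomputable def lit (τ : AFml) (ε : ℕ → Prop) (k : ℕ) : AFml :=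
  if ε k then τ.subst0 (numeral k) else .neg (τ.subst0 (numeral k))

noncomputable def chi (τ : AFml) (ε : ℕ → Prop) : ℕ → AFml
  | 0 => botFml
  | k + 1 => .imp (lit τ ε k) (chi τ ε k)

theorem chi_congr {τ : AFml} {ε ε' : ℕ → Prop} {N : ℕ} (h : ∀ k < N, ε k ↔ ε' k) :
    chi τ ε N = chi τ ε' N := by
  induction N with
  | zero => rfl
  | succ N ih =>
    simp only [chi]
    rw [ih fun k hk => h k (by omega)]
    by_cases h1 : ε' N
    · simp only [lit, h1, (h N (by omega)).2 h1]
    · simp only [lit, h1, mt (h N (by omega)).1 h1]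

def TauR (e k t : ℕ) : Prop := ∃ u, SubR (nc e) e u ∧ SubR (nc k) u t

theorem SubR_iff (w : ATerm) (t : AFml) (y : ℕ) :
    SubR w.code t.code y ↔ y = (t.subst0 w).code := by
  constructor
  · rintro ⟨w', t', h1, h2, rfl⟩
    rw [ATerm.code_inj h1, AFml.code_inj h2]
  · rintro rfl
    exact ⟨w, t, rfl, rfl, rfl⟩

theorem TauR_iff (Φ : AFml) (k t : ℕ) : TauR Φ.code k t ↔
    t = ((Φ.subst0 (numeral Φ.code)).subst0 (numeral k)).code := by
  simp only [TauR, nc, SubR_iff]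
  constructor
  · rintro ⟨u, rfl, h⟩
    exact (SubR_iff _ _ _).1 h
  · intro h
    exact ⟨_, rfl, (SubR_iff _ _ _).2 h⟩

theorem TauR_S1 : S1 (fun ρ => TauR (ρ 0) (ρ 1) (ρ 2)) := by
  unfold TauR
  repeat' first
    | exact Fn.var _
    | exact Fn.const _
    | with_reducible apply S1.and
    | with_reducible apply S1.ex
    | with_reducible apply S1.comp3 SubR_S1
    | with_reducible apply Fn.comp1 nc_Fn

def ChiAx (z : ℕ) : Prop := ∃ q, z = Nat.pair q (Nat.pair 0 botFml.code)
def ChiSt (z p _p : ℕ) : Prop := ∃ e a b k c t l,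
  p = Nat.pair (Nat.pair e (Nat.pair a b)) (Nat.pair k c) ∧ TauR e k t ∧
  ((bt a b k ∧ l = t) ∨ (nbt a b k ∧ l = Nat.pair 2 t)) ∧
  z = Nat.pair (Nat.pair e (Nat.pair a b)) (Nat.pair (k + 1) (Nat.pair 5 (Nat.pair l c)))
def Chi (e N a b c : ℕ) : Prop :=
  Lfp ChiAx ChiSt (Nat.pair (Nat.pair e (Nat.pair a b)) (Nat.pair N c))

theorem ChiL_S1 : S1 (fun ρ => Lfp ChiAx ChiSt (ρ 0)) := by
  refine Lfp_S1 ?_ ?_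
  · unfold ChiAx
    exact S1.ex (S1.eq (Fn.var _) (Fn.pair (Fn.var _) (Fn.const _)))
  · unfold ChiSt
    repeat' first
      | exact Fn.var _
      | exact Fn.const _
      | with_reducible apply S1.and
      | with_reducible apply S1.or
      | with_reducible apply S1.ex
      | with_reducible apply S1.eq
      | with_reducible apply S1.comp3 TauR_S1
      | with_reducible apply S1.comp3 bt_S1
      | with_reducible apply S1.comp3 nbt_S1
      | with_reducible apply Fn.pair
      | with_reducible apply Fn.add

theorem Chi_iff (Φ : AFml) (N a b c : ℕ) : Chi Φ.code N a b c ↔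
    c = (chi (Φ.subst0 (numeral Φ.code)) (bt a b) N).code := by
  constructor
  · intro h
    unfold Chi at h
    generalize he : Nat.pair (Nat.pair Φ.code (Nat.pair a b)) (Nat.pair N c) = z at h
    induction h generalizing N c with
    | ax h =>
      obtain ⟨q, rfl⟩ := h
      simp only [Nat.pair_eq_pair] at he
      obtain ⟨_, rfl, rfl⟩ := he
      rfl
    | step _ _ hr ih _ =>
      obtain ⟨e, a', b', k, c', t, l, rfl, ht, hl, rfl⟩ := hr
      simp only [Nat.pair_eq_pair] at he
      obtain ⟨⟨rfl, rfl, rfl⟩, rfl, rfl⟩ := he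
      rw [ih k c' rfl]
      rw [TauR_iff] at ht
      subst ht
      rcases hl with ⟨h1, rfl⟩ | ⟨h1, rfl⟩
      · simp [chi, lit, h1, AFml.code]
      · replace h1 : ¬ bt a b k := h1
        simp [chi, lit, h1, AFml.code]
  · rintro rfl
    induction N with
    | zero => exact .ax ⟨_, rfl⟩
    | succ N ih =>
      refine .step ih ih ⟨_, _, _, _, _, _, (lit (Φ.subst0 (numeral Φ.code)) (bt a b) N).code, rfl,
        (TauR_iff _ _ _).2 rfl, ?_, rfl⟩
      by_cases h1 : bt a b N
      · exact Or.inl ⟨h1, by simp [lit, h1]⟩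
      · exact Or.inr ⟨h1, by simp [lit, h1, AFml.code]⟩

def Theta (Tax : Set AFml) (e N a b : ℕ) : Prop := ∃ c, Chi e N a b c ∧ WW Tax c

theorem Theta_S1 {Tax : Set AFml} (h : PrAxiomatized Tax) :
    S1 (fun ρ => Theta Tax (ρ 0) (ρ 1) (ρ 2) (ρ 3)) := by
  have hW := WW_S1 h
  unfold Theta Chi
  repeat' first
    | exact Fn.var _
    | exact Fn.const _
    | with_reducible apply S1.and
    | with_reducible apply S1.ex
    | with_reducible apply S1.comp1 ChiL_S1
    | with_reducible apply S1.comp1 hW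
    | with_reducible apply Fn.pair

theorem Theta_iff (Tax : Set AFml) (Φ : AFml) (N a b : ℕ) : Theta Tax Φ.code N a b ↔
    Proves Tax (chi (Φ.subst0 (numeral Φ.code)) (bt a b) N) := by
  simp only [Theta, Chi_iff]
  constructor
  · rintro ⟨c, rfl, h⟩
    exact WW_code.1 h
  · intro h
    exact ⟨_, rfl, WW_code.2 h⟩

/-! ## Part 7 : existence of τ -/

section tau
variable (w : ℕ → ℕ → Prop) (θ : ℕ → ℕ → ℕ → ℕ → ℕ → Prop)

def Onn (N a b x : ℕ) : Prop := N ≤ x ∨ bt a b x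

def Trig (e s N a b : ℕ) : Prop := ∃ u ≤ s, (∃ p ≤ s, ∃ q ≤ s, s = Nat.pair N p ∧ p = Nat.pair a q ∧
  q = Nat.pair b u) ∧ θ e N a b u ∧ ∀ x ≤ s, ∀ y ≤ s, w x y → Onn N a b x

def CC (e s : ℕ) : Prop := ∃ N ≤ s, ∃ a ≤ s, ∃ b ≤ s, Trig w θ e s N a b
def BB (e x s : ℕ) : Prop := (x ≤ s ∧ ∃ u ≤ s, w x u) ∨
  ∃ N ≤ s, ∃ a ≤ s, ∃ b ≤ s, Trig w θ e s N a b ∧ Onn N a b x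

theorem Onn_D0 : D0 (fun ρ => Onn (ρ 0) (ρ 1) (ρ 2) (ρ 3)) :=
  D0.or (D0.le (Pl.var 0) (Pl.var 3)) (bt_D0 (Pl.var 1) (Pl.var 2) (Pl.var 3))

/-- variable relocation -/
theorem D0.rel {R : (ℕ → ℕ) → Prop} (h : D0 R) (f : ℕ → ℕ) : D0 (fun ρ => R (fun i => ρ (f i))) :=
  h.sub (a := fun i ρ => ρ (f i)) (fun i => Pl.var _)

variable {w θ}

theorem Trig_D0 (hw : D0 (fun ρ => w (ρ 0) (ρ 1)))
    (hθ : D0 (fun ρ => θ (ρ 0) (ρ 1) (ρ 2) (ρ 3) (ρ 4))) :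
    D0 (fun ρ => Trig w θ (ρ 0) (ρ 1) (ρ 2) (ρ 3) (ρ 4)) := by
  refine D0.bex (Q := fun u ρ => (∃ p ≤ ρ 1, ∃ q ≤ ρ 1, ρ 1 = Nat.pair (ρ 2) p ∧
    p = Nat.pair (ρ 3) q ∧ q = Nat.pair (ρ 4) u) ∧ θ (ρ 0) (ρ 2) (ρ 3) (ρ 4) u ∧
    ∀ x ≤ ρ 1, ∀ y ≤ ρ 1, w x y → Onn (ρ 2) (ρ 3) (ρ 4) x) (Pl.var 1) ?_
  refine D0.and ?_ (D0.and ?_ ?_)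
  · refine D0.bex (Q := fun p ρ => ∃ q ≤ ρ 2, ρ 2 = Nat.pair (ρ 3) p ∧
      p = Nat.pair (ρ 4) q ∧ q = Nat.pair (ρ 5) (ρ 0)) (Pl.var 2) ?_
    refine D0.bex (Q := fun q ρ => ρ 3 = Nat.pair (ρ 4) (ρ 0) ∧
      ρ 0 = Nat.pair (ρ 5) q ∧ q = Nat.pair (ρ 6) (ρ 1)) (Pl.var 3) ?_
    exact D0.and (pairD0 (Pl.var 5) (Pl.var 1) (Pl.var 4)) (D0.and
      (pairD0 (Pl.var 6) (Pl.var 0) (Pl.var 1)) (pairD0 (Pl.var 7) (Pl.var 2) (Pl.var 0)))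
  · exact hθ.rel (consEnv 1 (consEnv 3 (consEnv 4 (consEnv 5 (consEnv 0 id)))))
  · refine D0.ball (Q := fun x ρ => ∀ y ≤ ρ 2, w x y → Onn (ρ 3) (ρ 4) (ρ 5) x) (Pl.var 2) ?_
    refine D0.ball (Q := fun y ρ => w (ρ 0) y → Onn (ρ 4) (ρ 5) (ρ 6) (ρ 0)) (Pl.var 3) ?_
    exact D0.imp (hw.rel (consEnv 1 (consEnv 0 id)))
      (Onn_D0.rel (consEnv 5 (consEnv 6 (consEnv 7 (consEnv 1 id)))))

theorem CC_D0 (hw : D0 (fun ρ => w (ρ 0) (ρ 1)))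
    (hθ : D0 (fun ρ => θ (ρ 0) (ρ 1) (ρ 2) (ρ 3) (ρ 4))) :
    D0 (fun ρ => CC w θ (ρ 1) (ρ 0)) := by
  refine D0.bex (Q := fun N ρ => ∃ a ≤ ρ 0, ∃ b ≤ ρ 0, Trig w θ (ρ 1) (ρ 0) N a b) (Pl.var 0) ?_
  refine D0.bex (Q := fun a ρ => ∃ b ≤ ρ 1, Trig w θ (ρ 2) (ρ 1) (ρ 0) a b) (Pl.var 1) ?_
  refine D0.bex (Q := fun b ρ => Trig w θ (ρ 3) (ρ 2) (ρ 1) (ρ 0) b) (Pl.var 2) ?_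
  exact (Trig_D0 hw hθ).rel (consEnv 4 (consEnv 3 (consEnv 2 (consEnv 1 (consEnv 0 id)))))

theorem BB_D0 (hw : D0 (fun ρ => w (ρ 0) (ρ 1)))
    (hθ : D0 (fun ρ => θ (ρ 0) (ρ 1) (ρ 2) (ρ 3) (ρ 4))) :
    D0 (fun ρ => BB w θ (ρ 1) (ρ 2) (ρ 0)) := by
  refine D0.or (D0.and (D0.le (Pl.var 2) (Pl.var 0)) ?_) ?_
  · refine D0.bex (Q := fun u ρ => w (ρ 2) u) (Pl.var 0) ?_
    exact hw.rel (consEnv 3 (consEnv 0 id))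
  refine D0.bex (Q := fun N ρ => ∃ a ≤ ρ 0, ∃ b ≤ ρ 0, Trig w θ (ρ 1) (ρ 0) N a b ∧
    Onn N a b (ρ 2)) (Pl.var 0) ?_
  refine D0.bex (Q := fun a ρ => ∃ b ≤ ρ 1, Trig w θ (ρ 2) (ρ 1) (ρ 0) a b ∧
    Onn (ρ 0) a b (ρ 3)) (Pl.var 1) ?_
  refine D0.bex (Q := fun b ρ => Trig w θ (ρ 3) (ρ 2) (ρ 1) (ρ 0) b ∧
    Onn (ρ 1) (ρ 0) b (ρ 4)) (Pl.var 2) ?_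
  exact D0.and
    ((Trig_D0 hw hθ).rel (consEnv 4 (consEnv 3 (consEnv 2 (consEnv 1 (consEnv 0 id))))))
    (Onn_D0.rel (consEnv 2 (consEnv 1 (consEnv 0 (consEnv 5 id)))))

theorem CC_uniq {e s N a b N' a' b' : ℕ} (h : Trig w θ e s N a b) (h' : Trig w θ e s N' a' b') :
    N = N' ∧ a = a' ∧ b = b' := by
  obtain ⟨u, _, ⟨p, _, q, _, h1, h2, h3⟩, _⟩ := h
  obtain ⟨u', _, ⟨p', _, q', _, h1', h2', h3'⟩, _⟩ := h'
  subst h3; subst h2; subst h3'; subst h2'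
  rw [h1] at h1'
  simp only [Nat.pair_eq_pair] at h1'
  tauto

end tau

theorem chi_refute {Γ : Set AFml} {τ : AFml} {ε : ℕ → Prop} {N : ℕ}
    (h : ∀ k < N, Proves Γ (lit τ ε k)) (hc : Proves Γ (chi τ ε N)) : Proves Γ botFml := by
  induction N with
  | zero => exact hc
  | succ N ih => exact ih (fun k hk => h k (by omega)) (.mp hc (h N (by omega)))

theorem AFml.FreeLt_lift {φ : AFml} {c k : ℕ} (h : φ.FreeLt k) (hc : c ≤ k) :
    (φ.lift c).FreeLt (k + 1) := by
  rw [AFml.lift_eq]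
  refine AFml.FreeLt_substAll h fun n hn => ?_
  unfold lft
  split_ifs <;> simp [ATerm.FreeLt] <;> omega

theorem Ros_FreeLt {B C : AFml} {k : ℕ} (hB : B.FreeLt (k + 1)) (hC : C.FreeLt (k + 1)) :
    (Ros B C).FreeLt k := by
  refine ⟨hB, ⟨?_, ?_⟩, ⟨?_, ?_⟩, ?_⟩
  all_goals first
    | exact AFml.FreeLt_lift hC (by omega)
    | (simp [ATerm.lift, ATerm.FreeLt])

theorem tau_exists {Tax : Set AFml} (hext : PA ⊆ Tax) (hcons : ¬ Proves Tax botFml)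
    (hpr : PrAxiomatized Tax) : ∃ τ, IsSigma1 τ ∧ τ.FreeLt 1 ∧
      (∀ k, WW Tax k → Proves PA (τ.subst0 (numeral k))) ∧
      (∀ ε N, (∀ k < N, WW Tax k → ε k) → ¬ Proves Tax (chi τ ε N)) := by
  obtain ⟨w, hw, hwW⟩ := (WW_S1 hpr).mat1
  obtain ⟨θ, hθ, hθT⟩ := (Theta_S1 hpr).mat4
  obtain ⟨B, hB0, hBF, hB⟩ := (BB_D0 hw hθ).cut 3 (by
    intro ρ ρ' h; rw [h 0 (by omega), h 1 (by omega), h 2 (by omega)])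
  obtain ⟨C, hC0, hCF, hC⟩ := (CC_D0 hw hθ).cut 2 (by
    intro ρ ρ' h; rw [h 0 (by omega), h 1 (by omega)])
  have hΦF : (Ros B C).FreeLt 2 := Ros_FreeLt hBF (hCF.mono (by omega))
  set Φ := Ros B C with hΦ
  obtain ⟨e, he⟩ : ∃ e, e = Φ.code := ⟨_, rfl⟩
  set τ := Φ.subst0 (numeral e) with hτ
  have hinst : ∀ k, Φ.inst (consEnv e (consEnv k fun _ => 0)) = τ.subst0 (numeral k) := by
    intro k
    rw [hτ]
    unfold AFml.subst0 AFml.inst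
    rw [AFml.substAll_comp]
    refine AFml.substAll_congr (fun i hi => ?_) hΦF
    match i, hi with
    | 0, _ => simp [numS, consEnv, subst0Env]
    | 1, _ => simp [numS, consEnv, subst0Env, ATerm.substAll]
  have hS : ∀ k s, (B.Sat (consEnv s (consEnv e (consEnv k fun _ => 0))) ↔ BB w θ e k s) ∧
      (C.Sat (consEnv s (consEnv e (consEnv k fun _ => 0))) ↔ CC w θ e s) := by
    intro k s
    exact ⟨hB _, hC _⟩
  -- no trigger
  have hno : ∀ s, ¬ CC w θ e s := by
    classical
    by_contra hcon
    push Not at hcon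
    have hmin : ∀ t < Nat.find hcon, ¬ CC w θ e t := fun t ht => Nat.find_min hcon ht
    have hs := Nat.find_spec hcon
    set s := Nat.find hcon
    have hsC := hs
    obtain ⟨N, hN, a, ha, b, hb, ht⟩ := hs
    have htr := ht
    obtain ⟨u, hu, hp, hth, hww⟩ := ht
    have hTh : Theta Tax e N a b := (hθT _ _ _ _).2 ⟨u, hth⟩
    have hch := (Theta_iff Tax Φ N a b).1 (he ▸ hTh)
    rw [← he] at hch
    apply hcons
    refine chi_refute (fun k hk => ?_) hch
    show Proves Tax (lit τ _ k)
    refine Proves.mono hext ?_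
    unfold lit
    split_ifs with hbt
    · rw [← hinst]
      refine Ros_true hB0 hC0 (s := s) ?_ ?_
      · rw [(hS _ _).1]
        exact Or.inr ⟨N, hN, a, ha, b, hb, htr, Or.inr hbt⟩
      · intro t ht
        rw [(hS _ _).2]
        exact hmin t ht
    · rw [← hinst]
      refine Ros_false hB0 hC0 (t := s) ?_ ?_
      · rw [(hS _ _).2]
        exact hsC
      · intro r hr hBr
        rw [(hS _ _).1] at hBr
        have hnon : ¬ Onn N a b k := by
          rintro (h | h)
          · omega
          · exact hbt h
        rcases hBr with ⟨hkr, v, hv, hwv⟩ | ⟨N', hN', a', ha', b', hb', ht', ho'⟩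
        · exact absurd (hww k (by omega) v (by omega) hwv) hnon
        · have hCr : CC w θ e r := ⟨N', hN', a', ha', b', hb', ht'⟩
          rcases Nat.lt_or_ge r s with h | h
          · exact absurd hCr (hmin r h)
          · have : r = s := by omega
            rw [this] at ht'
            obtain ⟨rfl, rfl, rfl⟩ := CC_uniq htr ht'
            exact absurd ho' hnon
  refine ⟨τ, ?_, ?_, ?_, ?_⟩
  · exact .ex (.delta0 ((RosM_delta0 hB0 hC0).substAll _))
  · refine AFml.FreeLt_substAll hΦF fun i hi => ?_
    match i, hi with
    | 0, _ => exact (numeral_FreeLt e).mono (by omega)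
    | 1, _ => exact Nat.zero_lt_one
  · intro k hk
    obtain ⟨u, hu⟩ := (hwW k).1 hk
    rw [← hinst]
    refine Ros_true hB0 hC0 (s := max k u) ?_ ?_
    · rw [(hS _ _).1]
      exact Or.inl ⟨le_max_left _ _, u, le_max_right _ _, hu⟩
    · intro t _
      rw [(hS _ _).2]
      exact hno t
  · intro ε N hε hch
    obtain ⟨a, b, hab⟩ := bt_real ε N
    rw [← chi_congr (fun k hk => hab k hk)] at hch
    rw [hτ, he, ← Theta_iff, hθT, ← he] at hch
    obtain ⟨u, hu⟩ := hch
    have h1 := Nat.right_le_pair b u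
    have h2 := Nat.right_le_pair a (Nat.pair b u)
    have h3 := Nat.right_le_pair N (Nat.pair a (Nat.pair b u))
    have h4 := Nat.left_le_pair b u
    have h5 := Nat.left_le_pair a (Nat.pair b u)
    have h6 := Nat.left_le_pair N (Nat.pair a (Nat.pair b u))
    refine hno (Nat.pair N (Nat.pair a (Nat.pair b u))) ⟨N, by omega, a, by omega, b, by omega,
      u, by omega, ⟨_, h3, _, by omega, rfl, rfl, rfl⟩, hu, ?_⟩
    intro x _ y _ hxy
    rcases Nat.lt_or_ge x N with h | h
    · exact Or.inr ((hab x h).2 (hε x h ((hwW x).2 ⟨y, hxy⟩)))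
    · exact Or.inl h

/-! ## Part 8 : the provability predicate -/

def ItAx (z : ℕ) : Prop := ∃ w y, z = Nat.pair w (Nat.pair 0 (Nat.pair y y))
def ItSt (z p _p : ℕ) : Prop := ∃ w j y u v, p = Nat.pair w (Nat.pair j (Nat.pair y u)) ∧
  TauR w u v ∧ z = Nat.pair w (Nat.pair (j + 1) (Nat.pair y v))
def It (w j y u : ℕ) : Prop := Lfp ItAx ItSt (Nat.pair w (Nat.pair j (Nat.pair y u)))

theorem ItL_S1 : S1 (fun ρ => Lfp ItAx ItSt (ρ 0)) := by
  refine Lfp_S1 ?_ ?_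
  · unfold ItAx
    repeat' first
      | exact Fn.var _
      | exact Fn.const _
      | with_reducible apply S1.ex
      | with_reducible apply S1.eq
      | with_reducible apply Fn.pair
  · unfold ItSt
    repeat' first
      | exact Fn.var _
      | exact Fn.const _
      | with_reducible apply S1.and
      | with_reducible apply S1.ex
      | with_reducible apply S1.eq
      | with_reducible apply S1.comp3 TauR_S1
      | with_reducible apply Fn.pair
      | with_reducible apply Fn.add

/-- the code of the instance of a unary formula -/
def gg (P : AFml) (y : ℕ) : ℕ := (P.subst0 (numeral y)).code

theorem It_iff (Φ : AFml) (j y u : ℕ) : It Φ.code j y u ↔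
    u = (gg (Φ.subst0 (numeral Φ.code)))^[j] y := by
  constructor
  · intro h
    unfold It at h
    generalize he : Nat.pair Φ.code (Nat.pair j (Nat.pair y u)) = z at h
    induction h generalizing j u with
    | ax h =>
      obtain ⟨w, y', rfl⟩ := h
      simp only [Nat.pair_eq_pair] at he
      obtain ⟨_, rfl, rfl, rfl⟩ := he
      rfl
    | step _ _ hr ih _ =>
      obtain ⟨w, j', y', u', v, rfl, ht, rfl⟩ := hr
      simp only [Nat.pair_eq_pair] at he
      obtain ⟨rfl, rfl, rfl, rfl⟩ := he
      have := ih j' u' rfl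
      rw [TauR_iff] at ht
      rw [Function.iterate_succ_apply', ← this, ht]
      rfl
  · rintro rfl
    induction j with
    | zero => exact .ax ⟨_, _, rfl⟩
    | succ j ih =>
      refine .step ih ih ⟨_, _, _, _, _, rfl, (TauR_iff _ _ _).2 rfl, ?_⟩
      rw [Function.iterate_succ_apply']
      rfl

/-- positive and negative form of the chain relation -/
def Rp (d n w x z : ℕ) : Prop := ∃ k, It w (d * k) z x ∧ (k = 0 ∨ ∃ y, It w (n - 1) y z)
def Rn (d n w x z : ℕ) : Prop := ∀ k ≤ x, (∃ u, It w (d * k) z u ∧ u ≠ x) ∨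
  (k ≠ 0 ∧ ∀ y ≤ z, ∃ u, It w (n - 1) y u ∧ u ≠ z)

theorem Rp_S1 (d n : ℕ) : S1 (fun ρ => Rp d n (ρ 0) (ρ 1) (ρ 2)) := by
  unfold Rp It
  repeat' first
    | exact Fn.var _
    | exact Fn.const _
    | with_reducible apply S1.and
    | with_reducible apply S1.or
    | with_reducible apply S1.ex
    | with_reducible apply S1.eq
    | with_reducible apply S1.comp1 ItL_S1
    | with_reducible apply Fn.pair
    | with_reducible apply Fn.add
    | with_reducible apply Fn.mul

theorem Rn_S1 (d n : ℕ) : S1 (fun ρ => Rn d n (ρ 0) (ρ 1) (ρ 2)) := by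
  unfold Rn It
  repeat' first
    | exact Fn.var _
    | exact Fn.const _
    | with_reducible apply S1.ball
    | with_reducible apply S1.and
    | with_reducible apply S1.or
    | with_reducible apply S1.ex
    | with_reducible apply S1.ne
    | with_reducible apply S1.comp1 ItL_S1
    | with_reducible apply Fn.pair
    | with_reducible apply Fn.add
    | with_reducible apply Fn.mul

theorem numeral_code_ge (y : ℕ) : y ≤ (numeral y).code := by
  induction y with
  | zero => exact Nat.zero_le _
  | succ y ih =>
    have := Nat.add_le_pair 2 (numeral y).code
    simp only [numeral, ATerm.code]
    omega

theorem and_eq_code_lt (y : ℕ) (R : AFml) :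
    y < (AFml.and (.eq (numeral y) (numeral y)) R).code := by
  have h0 := numeral_code_ge y
  have h1 := Nat.left_le_pair (numeral y).code (numeral y).code
  have h2 := Nat.right_le_pair 0 (Nat.pair (numeral y).code (numeral y).code)
  have h3 := Nat.left_le_pair (Nat.pair 0 (Nat.pair (numeral y).code (numeral y).code)) R.code
  have h4 := Nat.add_le_pair 3
    (Nat.pair (Nat.pair 0 (Nat.pair (numeral y).code (numeral y).code)) R.code)
  simp only [AFml.code]
  omega

/-- the (true) chain relation of a unary formula -/
def Ch (P : AFml) (d n x z : ℕ) : Prop :=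
  ∃ k, x = (gg P)^[d * k] z ∧ (k = 0 ∨ ∃ y, z = (gg P)^[n - 1] y)

theorem gg_iter_ge {P : AFml} (hg : ∀ y, y < gg P y) (j z : ℕ) : z + j ≤ (gg P)^[j] z := by
  induction j with
  | zero => simp
  | succ j ih =>
    rw [Function.iterate_succ_apply']
    have := hg ((gg P)^[j] z)
    omega

theorem Rp_iff (Φ : AFml) (d n x z : ℕ) : Rp d n Φ.code x z ↔
    Ch (Φ.subst0 (numeral Φ.code)) d n x z := by
  simp only [Rp, It_iff, Ch]

theorem Rn_iff (Φ : AFml) (d n x z : ℕ) (hd : 1 ≤ d)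
    (hg : ∀ y, y < gg (Φ.subst0 (numeral Φ.code)) y) : Rn d n Φ.code x z ↔
    ¬ Ch (Φ.subst0 (numeral Φ.code)) d n x z := by
  set P := Φ.subst0 (numeral Φ.code) with hP
  simp only [Rn, It_iff, Ch, ← hP, exists_eq_left]
  constructor
  · rintro h ⟨k, rfl, hk⟩
    have hkx : k ≤ (gg P)^[d * k] z := by
      have := gg_iter_ge hg (d * k) z
      have := Nat.le_mul_of_pos_left k hd
      omega
    rcases h k hkx with h | ⟨h0, h⟩
    · exact h rfl
    · rcases hk with hk | ⟨y, rfl⟩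
      · exact h0 hk
      · refine h y ?_ rfl
        have := gg_iter_ge hg (n - 1) y
        omega
  · intro h k _
    by_contra hc
    push Not at hc
    refine h ⟨k, hc.1.symm, ?_⟩
    by_cases h0 : k = 0
    · exact Or.inl h0
    · obtain ⟨y, _, hy⟩ := hc.2 h0
      exact Or.inr ⟨y, hy.symm⟩

theorem P_exists {τ : AFml} (hτ1 : IsSigma1 τ) (hτF : τ.FreeLt 1) (d n : ℕ) (hd : 1 ≤ d) :
    ∃ P, IsSigma1 P ∧ P.FreeLt 1 ∧
      (∀ x, ∃ R, P.subst0 (numeral x) = .and (.eq (numeral x) (numeral x)) R) ∧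
      (∀ x z, Ch P d n x z → Proves PA (.imp (τ.subst0 (numeral z)) (P.subst0 (numeral x)))) ∧
      (∀ x ψ, ψ.FreeLt 0 → (∀ z ≤ x, Ch P d n x z →
        Proves PA (.imp (τ.subst0 (numeral z)) ψ)) →
        Proves PA (.imp (P.subst0 (numeral x)) ψ)) := by
  obtain ⟨rp, hrp, hrp'⟩ := (Rp_S1 d n).mat3
  obtain ⟨rn, hrn, hrn'⟩ := (Rn_S1 d n).mat3
  -- variables: 0 = s, 1 = z, 2 = w, 3 = x
  obtain ⟨B, hB0, hBF, hB⟩ := (hrp.rel (consEnv 2 (consEnv 3 (consEnv 1 (consEnv 0 id))))).cut 4 (by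
    intro ρ ρ' h
    show rp (ρ 2) (ρ 3) (ρ 1) (ρ 0) ↔ rp (ρ' 2) (ρ' 3) (ρ' 1) (ρ' 0)
    rw [h 0 (by omega), h 1 (by omega), h 2 (by omega), h 3 (by omega)])
  obtain ⟨C, hC0, hCF, hC⟩ := (hrn.rel (consEnv 2 (consEnv 3 (consEnv 1 (consEnv 0 id))))).cut 4 (by
    intro ρ ρ' h
    show rn (ρ 2) (ρ 3) (ρ 1) (ρ 0) ↔ rn (ρ' 2) (ρ' 3) (ρ' 1) (ρ' 0)
    rw [h 0 (by omega), h 1 (by omega), h 2 (by omega), h 3 (by omega)])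
  have hρF : (Ros B C).FreeLt 3 := Ros_FreeLt hBF hCF
  obtain ⟨M, hM⟩ : ∃ M, M = AFml.and (.le (.var 0) (.var 2)) (.and (Ros B C) τ) := ⟨_, rfl⟩
  have hMF : M.FreeLt 3 := by
    rw [hM]
    exact ⟨⟨by show 0 < 3; omega, by show 2 < 3; omega⟩, hρF, hτF.mono (by omega)⟩
  obtain ⟨Φ, hΦ⟩ : ∃ Φ, Φ = AFml.and (.eq (.var 1) (.var 1)) (.ex M) := ⟨_, rfl⟩
  have hΦF : Φ.FreeLt 2 := by
    rw [hΦ]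
    exact ⟨⟨by show 1 < 2; omega, by show 1 < 2; omega⟩, hMF⟩
  obtain ⟨e, he⟩ : ∃ e, e = Φ.code := ⟨_, rfl⟩
  obtain ⟨P, hP⟩ : ∃ P, P = Φ.subst0 (numeral e) := ⟨_, rfl⟩
  have hinst : ∀ k, P.subst0 (numeral k) = Φ.inst (consEnv e (consEnv k fun _ => 0)) := by
    intro k
    rw [hP]
    unfold AFml.subst0 AFml.inst
    rw [AFml.substAll_comp]
    refine AFml.substAll_congr (fun i hi => ?_) hΦF
    match i, hi with
    | 0, _ => simp [numS, consEnv, subst0Env]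
    | 1, _ => simp [numS, consEnv, subst0Env, ATerm.substAll]
  have hshape : ∀ x, P.subst0 (numeral x) = .and (.eq (numeral x) (numeral x))
      (.ex (M.inst1 (consEnv e (consEnv x fun _ => 0)))) := by
    intro x
    rw [hinst, hΦ]
    rfl
  have hg : ∀ y, y < gg P y := by
    intro y
    unfold gg
    rw [hshape]
    exact and_eq_code_lt _ _
  have hτi : ∀ ρ z, τ.inst (consEnv z ρ) = τ.subst0 (numeral z) := by
    intro ρ z
    refine AFml.substAll_congr (fun i hi => ?_) hτF
    match i, hi with
    | 0, _ => simp [numS, consEnv, subst0Env]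
  have hMi : ∀ x z, M.inst (consEnv z (consEnv e (consEnv x fun _ => 0))) =
      .and (.le (numeral z) (numeral x)) (.and
        ((Ros B C).inst (consEnv z (consEnv e (consEnv x fun _ => 0)))) (τ.subst0 (numeral z))) := by
    intro x z
    rw [hM, ← hτi]
    rfl
  have hBS : ∀ s x z, B.Sat (consEnv s (consEnv z (consEnv e (consEnv x fun _ => 0)))) ↔
      rp e x z s := fun s x z => hB _
  have hCS : ∀ s x z, C.Sat (consEnv s (consEnv z (consEnv e (consEnv x fun _ => 0)))) ↔
      rn e x z s := fun s x z => hC _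
  have hRp : ∀ x z, Rp d n e x z ↔ Ch P d n x z := by
    intro x z
    rw [hP, he]
    exact Rp_iff Φ d n x z
  have hRn : ∀ x z, Rn d n e x z ↔ ¬ Ch P d n x z := by
    intro x z
    have := hg
    rw [hP, he] at this
    rw [hP, he]
    exact Rn_iff Φ d n x z hd this
  have hT : ∀ x z, Ch P d n x z →
      Proves PA ((Ros B C).inst (consEnv z (consEnv e (consEnv x fun _ => 0)))) := by
    intro x z h
    obtain ⟨s, hs⟩ := (hrp' _ _ _).1 ((hRp x z).2 h)
    refine Ros_true hB0 hC0 ((hBS s x z).2 hs) fun t _ hc => ?_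
    exact (hRn x z).1 ((hrn' _ _ _).2 ⟨t, (hCS t x z).1 hc⟩) h
  have hFa : ∀ x z, ¬ Ch P d n x z →
      Proves PA (.neg ((Ros B C).inst (consEnv z (consEnv e (consEnv x fun _ => 0))))) := by
    intro x z h
    obtain ⟨s, hs⟩ := (hrn' _ _ _).1 ((hRn x z).2 h)
    refine Ros_false hB0 hC0 ((hCS s x z).2 hs) fun t _ hc => ?_
    exact absurd ((hRp x z).1 ((hrp' _ _ _).2 ⟨t, (hBS t x z).1 hc⟩)) h
  refine ⟨P, ?_, ?_, fun x => ⟨_, hshape x⟩, ?_, ?_⟩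
  · rw [hP, hΦ, hM]
    have e1 : τ.substAll (liftSub (subst0Env (numeral e))) = τ := by
      conv_rhs => rw [← AFml.substAll_var τ]
      refine AFml.substAll_congr (fun i hi => ?_) hτF
      match i, hi with
      | 0, _ => rfl
    refine .and (.delta0 (.eq _ _)) (.ex (.and (.delta0 (.le _ _)) (.and ?_ ?_)))
    · exact .ex (.delta0 ((RosM_delta0 hB0 hC0).substAll _))
    · rw [e1]
      exact hτ1
  · rw [hP]
    refine AFml.FreeLt_substAll hΦF fun i hi => ?_
    match i, hi with
    | 0, _ => exact (numeral_FreeLt e).mono (by omega)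
    | 1, _ => exact Nat.zero_lt_one
  · intro x z h
    rw [hshape]
    have h1 := Proves.exI (Γ := PA) (M.inst1 (consEnv e (consEnv x fun _ => 0))) (numeral z)
    rw [AFml.inst1_subst0_num, hMi] at h1
    have hzx : z ≤ x := by
      obtain ⟨k, rfl, _⟩ := h
      have := gg_iter_ge hg (d * k) z
      omega
    refine Proves.tc4 h1 (numLe hzx) (hT x z h) (Proves.eqRefl (numeral x)) ?_
    intro v
    simp only [AFml.evalProp]
    tauto
  · intro x ψ hψ h
    rw [hshape]
    have hψl : ψ.lift 0 = ψ := by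
      rw [AFml.lift_eq]
      exact AFml.substAll_closed hψ
    have key : Proves PA (.imp (M.inst1 (consEnv e (consEnv x fun _ => 0))) (ψ.lift 0)) := by
      have hb : Proves PA (.imp (.le (.var 0) (numeral x))
          ((AFml.imp M ψ).inst1 (consEnv e (consEnv x fun _ => 0)))) := by
        refine boundedAll fun z hz => ?_
        have e1 : (AFml.imp M ψ).inst (consEnv z (consEnv e (consEnv x fun _ => 0))) =
            .imp (M.inst (consEnv z (consEnv e (consEnv x fun _ => 0)))) ψ := by
          show AFml.imp _ (ψ.substAll _) = _
          rw [AFml.substAll_closed hψ]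
          rfl
        rw [e1, hMi]
        by_cases hc : Ch P d n x z
        · refine Proves.tc1 (h z hz hc) ?_
          intro v
          simp only [AFml.evalProp]
          tauto
        · refine Proves.tc1 (hFa x z hc) ?_
          intro v
          simp only [AFml.evalProp]
          tauto
      have e2 : (AFml.imp M ψ).inst1 (consEnv e (consEnv x fun _ => 0)) =
          .imp (M.inst1 (consEnv e (consEnv x fun _ => 0))) ψ := by
        show AFml.imp _ (ψ.substAll _) = _
        rw [AFml.substAll_closed hψ]
        rfl
      rw [e2] at hb
      rw [hψl]
      obtain ⟨R, hR⟩ : ∃ R, M.inst1 (consEnv e (consEnv x fun _ => 0)) =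
          .and (.le (.var 0) (numeral x)) R := by
        rw [hM]
        refine ⟨AFml.inst1 (.and (Ros B C) τ) (consEnv e (consEnv x fun _ => 0)), ?_⟩
        show AFml.and (.le (.var 0) (ATerm.lift 0 (numeral x))) _ = _
        rw [numeral_lift]
        rfl
      rw [hR] at hb ⊢
      refine Proves.tc1 hb ?_
      intro v
      simp only [AFml.evalProp]
      tauto
    refine Proves.tc1 key.exE ?_
    intro v
    simp only [AFml.evalProp]
    tauto

/-! ## Part 9 : the modal part -/

theorem not_bot : Proves PA (.neg botFml) := numNe (a := 0) (b := 1) (by omega)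

theorem boxIter_add (a b : ℕ) (A : MFml) : boxIter a (boxIter b A) = boxIter (a + b) A := by
  induction a with
  | zero => simp [boxIter]
  | succ a ih => rw [Nat.succ_add]; simp [boxIter, ih]

theorem NA_true {m n : ℕ} (hm : 1 ≤ m) {A : MFml} (h : NAProves m n A) :
    A.evalTC (fun _ => True) := by
  induction h with
  | taut h => exact h _
  | acc A =>
    intro _
    obtain ⟨k, rfl⟩ := Nat.exists_eq_add_of_le' hm
    trivial
  | mp _ _ ih1 ih2 => exact ih1 ih2
  | nec _ _ => trivial
  | ros _ ih => exact absurd trivial ih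

theorem NA_id {m n : ℕ} (A : MFml) : NAProves m n (.imp A A) := .taut fun _ h => h

theorem NA_trans {m n : ℕ} {A B C : MFml} (h : NAProves m n (.imp A B))
    (h' : NAProves m n (.imp B C)) : NAProves m n (.imp A C) :=
  .mp (.mp (.taut (A := .imp (.imp A B) (.imp (.imp B C) (.imp A C)))
    (fun _ h1 h2 h3 => h2 (h1 h3))) h) h'

theorem NA_nec_iter {m n : ℕ} {A : MFml} (h : NAProves m n A) (k : ℕ) :
    NAProves m n (boxIter k A) := by
  induction k with
  | zero => exact h
  | succ k ih => exact .nec ih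

theorem NA_acc_iter {m n : ℕ} (hnm : n < m) (A : MFml) (k : ℕ) :
    NAProves m n (.imp (boxIter n A) (boxIter ((m - n) * k + n) A)) := by
  induction k with
  | zero => simpa using NA_id _
  | succ k ih =>
    refine NA_trans ih ?_
    have := NAProves.acc (m := m) (n := n) (boxIter ((m - n) * k) A)
    rw [boxIter_add, boxIter_add] at this
    rw [Nat.add_comm _ n]
    have e : (m - n) * (k + 1) + n = m + (m - n) * k := by
      rw [Nat.mul_succ]
      omega
    rw [e]
    exact this

theorem exists_val {m n : ℕ} (L : List MFml) (hL : ∀ B ∈ L, NAProves m n B) (A : MFml)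
    (hA : ¬ NAProves m n A) : ∃ v, (∀ B ∈ L, B.evalTC v) ∧ ¬ A.evalTC v := by
  induction L generalizing A with
  | nil =>
    by_contra hc
    push Not at hc
    exact hA (.taut fun v => hc v (by simp))
  | cons B L ih =>
    obtain ⟨v, h1, h2⟩ := ih (fun C hC => hL C (by simp [hC])) (.imp B A)
      (fun h => hA (.mp h (hL B (by simp))))
    refine ⟨v, ?_, fun h => h2 fun _ => h⟩
    intro C hC
    rcases List.mem_cons.1 hC with rfl | hC
    · by_contra hc
      exact h2 fun h => absurd h hc
    · exact h1 C hC

def subs : MFml → List MFml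
  | .var i => [.var i]
  | .bot => [.bot]
  | .neg A => .neg A :: subs A
  | .and A B => .and A B :: (subs A ++ subs B)
  | .or A B => .or A B :: (subs A ++ subs B)
  | .imp A B => .imp A B :: (subs A ++ subs B)
  | .box A => .box A :: subs A

theorem self_mem_subs (A : MFml) : A ∈ subs A := by
  cases A <;> simp [subs]

theorem mem_subs {B A : MFml} (h : IsSub B A) : B ∈ subs A := by
  induction h with
  | refl => exact self_mem_subs _
  | _ => simp_all [subs]

theorem exists_val' {m n : ℕ} (A : MFml) (hA : ¬ NAProves m n A) : ∃ v, ¬ A.evalTC v ∧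
    (∀ C, IsSub C A → NAProves m n C → C.evalTC v) ∧
    (∀ C D, IsSub C A → IsSub D A → NAProves m n (.imp C D) → C.evalTC v → D.evalTC v) := by
  classical
  let L := subs A ++ (subs A).flatMap (fun C => (subs A).map (fun D => .imp C D))
  obtain ⟨v, h1, h2⟩ := exists_val (m := m) (n := n) (L.filter (fun C => decide (NAProves m n C)))
    (by intro B hB; simpa using (List.mem_filter.1 hB).2) A hA
  refine ⟨v, h2, ?_, ?_⟩
  · intro C hC hp
    refine h1 C (List.mem_filter.2 ⟨?_, by simpa using hp⟩)
    simp [L, mem_subs hC]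
  · intro C D hC hD hp
    refine h1 (.imp C D) (List.mem_filter.2 ⟨?_, by simpa using hp⟩)
    simp [L, mem_subs hC, mem_subs hD]

def msize : MFml → ℕ
  | .var _ => 1
  | .bot => 1
  | .neg A => msize A + 1
  | .and A B => msize A + msize B + 1
  | .or A B => msize A + msize B + 1
  | .imp A B => msize A + msize B + 1
  | .box A => msize A + 1

theorem IsSub.size_le {B A : MFml} (h : IsSub B A) : msize B ≤ msize A := by
  induction h with
  | refl => exact le_rfl
  | _ => simp only [msize]; omega

theorem boxIter_size (k : ℕ) (A : MFml) : msize A ≤ msize (boxIter k A) := by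
  induction k with
  | zero => exact le_rfl
  | succ k ih => simp only [boxIter, msize]; omega

theorem IsSub_trans {A D E : MFml} (hE : IsSub E A) (hD : IsSub D E) : IsSub D A := by
  induction hE with
  | refl => exact hD
  | neg _ ih => exact .neg ih
  | andL _ ih => exact .andL ih
  | andR _ ih => exact .andR ih
  | orL _ ih => exact .orL ih
  | orR _ ih => exact .orR ih
  | impL _ ih => exact .impL ih
  | impR _ ih => exact .impR ih
  | box _ ih => exact .box ih

theorem IsSub_boxIter (k : ℕ) (A : MFml) : IsSub A (boxIter k A) := by
  induction k with
  | zero => exact .refl _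
  | succ k ih => exact .box ih

/-! ### evaluation of `chi` -/

theorem chi_eval (τ : AFml) (ε : ℕ → Prop) (N : ℕ) (v : AFml → Prop) :
    (chi τ ε N).evalProp v ↔ ((∀ k < N, (lit τ ε k).evalProp v) → v botFml) := by
  induction N with
  | zero =>
    show v botFml ↔ _
    simp
  | succ N ih =>
    simp only [chi, AFml.evalProp, ih]
    constructor
    · intro h h'
      exact h (h' N (by omega)) fun k hk => h' k (by omega)
    · intro h h1 h2
      refine h fun k hk => ?_
      rcases Nat.lt_or_ge k N with h3 | h3
      · exact h2 k h3
      · have : k = N := by omega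
        rw [this]
        exact h1

theorem chi_pos {τ : AFml} {ε : ℕ → Prop} {N k : ℕ} (hk : k < N) (h : ε k) :
    ATaut (.or (τ.subst0 (numeral k)) (chi τ ε N)) := by
  intro v
  by_cases h1 : (τ.subst0 (numeral k)).evalProp v
  · exact Or.inl h1
  · refine Or.inr ((chi_eval _ _ _ _).2 fun h2 => ?_)
    have := h2 k hk
    simp only [lit, h, if_true] at this
    exact absurd this h1

theorem chi_neg {τ : AFml} {ε : ℕ → Prop} {N k : ℕ} (hk : k < N) (h : ¬ ε k) :
    ATaut (.imp (τ.subst0 (numeral k)) (chi τ ε N)) := by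
  intro v h1
  refine (chi_eval _ _ _ _).2 fun h2 => ?_
  have := h2 k hk
  simp only [lit, h, if_false] at this
  exact absurd h1 this

theorem subst0_closed {τ : AFml} (h : τ.FreeLt 1) (k : ℕ) : (τ.subst0 (numeral k)).FreeLt 0 := by
  refine AFml.FreeLt_substAll h fun i hi => ?_
  match i, hi with
  | 0, _ => exact numeral_FreeLt k

theorem chi_closed {τ : AFml} (h : τ.FreeLt 1) (ε : ℕ → Prop) (N : ℕ) : (chi τ ε N).FreeLt 0 := by
  induction N with
  | zero => exact ⟨trivial, trivial⟩
  | succ N ih =>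
    refine ⟨?_, ih⟩
    unfold lit
    split_ifs
    · exact subst0_closed h N
    · exact subst0_closed h N

/-! ### soundness -/

theorem interp_eval {P : AFml} {f : MFml → AFml} (hf : IsInterp P f) (v : AFml → Prop)
    (hv : ¬ v botFml) (A : MFml) :
    (f A).evalProp v ↔ A.evalTC (fun B => (f B).evalProp v) := by
  obtain ⟨_, h0, h1, h2, h3, h4, _⟩ := hf
  induction A with
  | var i => rfl
  | bot =>
    rw [h0]
    exact iff_of_false hv id
  | neg A ih => rw [h1]; simp only [AFml.evalProp, MFml.evalTC, ih]
  | and A B ihA ihB => rw [h2]; simp only [AFml.evalProp, MFml.evalTC, ihA, ihB]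
  | or A B ihA ihB => rw [h3]; simp only [AFml.evalProp, MFml.evalTC, ihA, ihB]
  | imp A B ihA ihB => rw [h4]; simp only [AFml.evalProp, MFml.evalTC, ihA, ihB]
  | box A _ => rfl

theorem interp_iter {P : AFml} {f : MFml → AFml} (hf : IsInterp P f) (k : ℕ) (A : MFml) :
    (f (boxIter k A)).code = (gg P)^[k] (f A).code := by
  induction k with
  | zero => rfl
  | succ k ih =>
    rw [Function.iterate_succ_apply', ← ih, boxIter, hf.2.2.2.2.2.2]
    rfl

section main
variable {Tax : Set AFml} {τ P : AFml} {m n : ℕ}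

theorem modal_sound (hext : PA ⊆ Tax) (hn : 1 ≤ n) (hnm : n < m)
    (hPF : P.FreeLt 1) (hPP : ∀ φ, Proves Tax φ → Proves PA (P.appNum φ))
    (hF1 : ∀ x z, Ch P (m - n) n x z →
      Proves PA (.imp (τ.subst0 (numeral z)) (P.subst0 (numeral x))))
    (hF2 : ∀ x ψ, ψ.FreeLt 0 → (∀ z ≤ x, Ch P (m - n) n x z →
        Proves PA (.imp (τ.subst0 (numeral z)) ψ)) →
        Proves PA (.imp (P.subst0 (numeral x)) ψ))
    {f : MFml → AFml} (hf : IsInterp P f) {A : MFml} (h : NAProves m n A) : Proves Tax (f A) := by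
  have hf' := hf
  obtain ⟨_, h0, h1, h2, h3, h4, h5⟩ := hf'
  induction h with
  | @taut A h =>
    refine Proves.tc1 (not_bot.mono hext) fun v hv => ?_
    rw [interp_eval hf v hv]
    exact h _
  | acc A =>
    rw [h4]
    obtain ⟨n', rfl⟩ := Nat.exists_eq_add_of_le' hn
    obtain ⟨m', rfl⟩ := Nat.exists_eq_add_of_le' (show 1 ≤ m by omega)
    rw [boxIter, boxIter, h5, h5]
    unfold AFml.appNum gnum
    rw [interp_iter hf, interp_iter hf]
    refine Proves.mono hext (hF2 _ _ (subst0_closed hPF _) fun z _ hz => hF1 _ _ ?_)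
    have e : m' = (m' + 1 - (n' + 1)) + n' := by omega
    have hx : (gg P)^[m'] (f A).code =
        (gg P)^[m' + 1 - (n' + 1)] ((gg P)^[n'] (f A).code) := by
      rw [← Function.iterate_add_apply, ← e]
    obtain ⟨k, hk, hk'⟩ := hz
    refine ⟨k + 1, ?_, Or.inr ?_⟩
    · rw [hx, hk, ← Function.iterate_add_apply]
      have e2 : ∀ a : ℕ, a * (k + 1) = a + a * k := fun a => by rw [Nat.mul_succ, Nat.add_comm]
      rw [e2]
    · rcases hk' with rfl | hk'
      · exact ⟨(f A).code, by simpa using hk.symm⟩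
      · exact hk'
  | mp _ _ ih1 ih2 =>
    rw [h4] at ih1
    exact .mp ih1 ih2
  | nec _ ih =>
    rw [h5]
    exact (hPP _ ih).mono hext
  | ros h _ => exact absurd trivial (NA_true (by omega) h)

theorem provPred (hext : PA ⊆ Tax) (hτF : τ.FreeLt 1)
    (hτ1 : ∀ k, WW Tax k → Proves PA (τ.subst0 (numeral k)))
    (hτ2 : ∀ ε N, (∀ k < N, WW Tax k → ε k) → ¬ Proves Tax (chi τ ε N))
    (hF1 : ∀ x z, Ch P (m - n) n x z →
      Proves PA (.imp (τ.subst0 (numeral z)) (P.subst0 (numeral x))))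
    (hF2 : ∀ x ψ, ψ.FreeLt 0 → (∀ z ≤ x, Ch P (m - n) n x z →
        Proves PA (.imp (τ.subst0 (numeral z)) ψ)) →
        Proves PA (.imp (P.subst0 (numeral x)) ψ))
    (φ : AFml) : Proves Tax φ ↔ Proves PA (P.appNum φ) := by
  have hfw : ∀ φ, Proves Tax φ → Proves PA (P.appNum φ) := by
    intro φ h
    exact .mp (hF1 φ.code φ.code ⟨0, rfl, Or.inl rfl⟩) (hτ1 _ (WW_code.2 h))
  refine ⟨hfw φ, fun h => ?_⟩
  have hex : ∃ z, Ch P (m - n) n φ.code z ∧ WW Tax z := by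
    by_contra hc
    push Not at hc
    refine hτ2 (WW Tax) (φ.code + 1) (fun _ _ h => h) (Proves.mono hext (.mp (hF2 φ.code _
      (chi_closed hτF _ _) fun z hz hz' => ?_) h))
    exact .taut (chi_neg (by omega) (hc z hz'))
  obtain ⟨z, ⟨k, hk, _⟩, hW⟩ := hex
  have hit : ∀ j, WW Tax ((gg P)^[j] z) := by
    intro j
    induction j with
    | zero => exact hW
    | succ j ih =>
      rw [Function.iterate_succ_apply']
      obtain ⟨ψ, h1, h2⟩ := ih
      rw [h1]
      exact ⟨_, rfl, (hfw ψ h2).mono hext⟩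
  rw [← WW_code, hk]
  exact hit _

end main

/-! ### the exact interpretation -/

def fex (τ P : AFml) : MFml → AFml
  | .var i => .imp (.eq (numeral (Nat.pair 8 i)) (numeral (Nat.pair 8 i)))
      (τ.subst0 (numeral (Nat.pair 8 i)))
  | .bot => botFml
  | .neg A => .neg (fex τ P A)
  | .and A B => .and (fex τ P A) (fex τ P B)
  | .or A B => .or (fex τ P A) (fex τ P B)
  | .imp A B => .imp (fex τ P A) (fex τ P B)
  | .box A => P.appNum (fex τ P A)

theorem code_ne8 (φ : AFml) (i : ℕ) : φ.code ≠ Nat.pair 8 i := by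
  cases φ <;> simp [AFml.code, Nat.pair_eq_pair]

section exact
variable {τ P : AFml}

theorem fex_ne_eq (hsh : ∀ x, ∃ R, P.subst0 (numeral x) = .and (.eq (numeral x) (numeral x)) R)
    (A : MFml) (y : ℕ) : fex τ P A ≠ .eq (numeral y) (numeral y) := by
  cases A with
  | bot =>
    intro h
    simp only [fex, botFml, AFml.eq.injEq] at h
    exact absurd (h.1.trans h.2.symm) (by simp)
  | box A =>
    obtain ⟨R, hR⟩ := hsh (fex τ P A).code
    simp [fex, AFml.appNum, gnum, hR]
  | _ => simp [fex]

theorem fex_box_inv (hsh : ∀ x, ∃ R, P.subst0 (numeral x) = .and (.eq (numeral x) (numeral x)) R)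
    {A : MFml} {y : ℕ} (h : fex τ P A = P.subst0 (numeral y)) :
    ∃ B, A = .box B ∧ (fex τ P B).code = y := by
  obtain ⟨R, hR⟩ := hsh y
  rw [hR] at h
  cases A with
  | box A =>
    obtain ⟨R', hR'⟩ := hsh (fex τ P A).code
    simp only [fex, AFml.appNum, gnum, hR', AFml.and.injEq, AFml.eq.injEq] at h
    exact ⟨A, rfl, numeral_inj h.1.1⟩
  | and A B =>
    simp only [fex, AFml.and.injEq] at h
    exact absurd h.1 (fex_ne_eq hsh A y)
  | _ => simp [fex, botFml] at h

theorem fex_inj (hsh : ∀ x, ∃ R, P.subst0 (numeral x) = .and (.eq (numeral x) (numeral x)) R)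
    {A B : MFml} (h : fex τ P A = fex τ P B) : A = B := by
  have hbox : ∀ C, ∃ R, fex τ P (.box C) = .and (.eq (numeral (fex τ P C).code)
      (numeral (fex τ P C).code)) R := fun C => hsh _
  induction A generalizing B with
  | box A ih =>
    obtain ⟨C, rfl, hC⟩ := fex_box_inv hsh h.symm
    rw [ih (AFml.code_inj hC.symm)]
  | var i =>
    cases B with
    | var j =>
      simp only [fex, AFml.imp.injEq, AFml.eq.injEq] at h
      have := numeral_inj h.1.1
      simp only [Nat.pair_eq_pair] at this
      rw [this.2]
    | imp B C =>
      simp only [fex, AFml.imp.injEq] at h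
      exact absurd h.1.symm (fex_ne_eq hsh B _)
    | box B =>
      obtain ⟨R, hR⟩ := hbox B
      rw [hR] at h
      simp [fex] at h
    | _ => simp [fex, botFml] at h
  | bot =>
    cases B with
    | bot => rfl
    | box B =>
      obtain ⟨R, hR⟩ := hbox B
      rw [hR] at h
      simp [fex, botFml] at h
    | _ => simp [fex, botFml] at h
  | neg A ih =>
    cases B with
    | neg B =>
      simp only [fex, AFml.neg.injEq] at h
      rw [ih h]
    | box B =>
      obtain ⟨R, hR⟩ := hbox B
      rw [hR] at h
      simp [fex] at h
    | _ => simp [fex, botFml] at h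
  | and A A' ih ih' =>
    cases B with
    | and B B' =>
      simp only [fex, AFml.and.injEq] at h
      rw [ih h.1, ih' h.2]
    | box B =>
      obtain ⟨C, hC, _⟩ := fex_box_inv hsh h
      exact MFml.noConfusion hC
    | _ => simp [fex, botFml] at h
  | or A A' ih ih' =>
    cases B with
    | or B B' =>
      simp only [fex, AFml.or.injEq] at h
      rw [ih h.1, ih' h.2]
    | box B =>
      obtain ⟨R, hR⟩ := hbox B
      rw [hR] at h
      simp [fex] at h
    | _ => simp [fex, botFml] at h
  | imp A A' ih ih' =>
    cases B with
    | imp B B' =>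
      simp only [fex, AFml.imp.injEq] at h
      rw [ih h.1, ih' h.2]
    | var i =>
      simp only [fex, AFml.imp.injEq] at h
      exact absurd h.1 (fex_ne_eq hsh A _)
    | box B =>
      obtain ⟨R, hR⟩ := hbox B
      rw [hR] at h
      simp [fex] at h
    | _ => simp [fex, botFml] at h

theorem fex_iter_inv
    (hsh : ∀ x, ∃ R, P.subst0 (numeral x) = .and (.eq (numeral x) (numeral x)) R)
    {A : MFml} {j z : ℕ} (h : (fex τ P A).code = (gg P)^[j] z) :
    ∃ B, A = boxIter j B ∧ (fex τ P B).code = z := by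
  induction j generalizing A with
  | zero => exact ⟨A, rfl, h⟩
  | succ j ih =>
    rw [Function.iterate_succ_apply'] at h
    obtain ⟨C, rfl, hC⟩ := fex_box_inv hsh (AFml.code_inj h)
    obtain ⟨B, rfl, hB⟩ := ih hC
    exact ⟨B, rfl, hB⟩

theorem fex_interp (hτF : τ.FreeLt 1) : IsInterp P (fex τ P) := by
  refine ⟨fun i => ⟨⟨numeral_FreeLt _, numeral_FreeLt _⟩, subst0_closed hτF _⟩, rfl, fun _ => rfl,
    fun _ _ => rfl, fun _ _ => rfl, fun _ _ => rfl, fun _ => rfl⟩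

variable {Tax : Set AFml} {d n : ℕ}

set_option maxHeartbeats 2000000 in
theorem fex_eval (hext : PA ⊆ Tax) (hτF : τ.FreeLt 1)
    (hF1 : ∀ x z, Ch P d n x z →
      Proves PA (.imp (τ.subst0 (numeral z)) (P.subst0 (numeral x))))
    (hF2 : ∀ x ψ, ψ.FreeLt 0 → (∀ z ≤ x, Ch P d n x z →
        Proves PA (.imp (τ.subst0 (numeral z)) ψ)) →
        Proves PA (.imp (P.subst0 (numeral x)) ψ))
    (v : MFml → Prop) (ε : ℕ → Prop) (A : MFml)
    (hvar : ∀ i, ε (Nat.pair 8 i) ↔ v (.var i))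
    (hb1 : ∀ B, v (.box B) → ε (fex τ P B).code)
    (hb2 : ∀ B, IsSub (.box B) A → ∀ z, Ch P d n (fex τ P B).code z → ε z → v (.box B))
    (C : MFml) (hC : ∀ D, IsSub D C → IsSub D A) :
    ∃ N₀, ∀ N ≥ N₀, (C.evalTC v → Proves Tax (.or (fex τ P C) (chi τ ε N))) ∧
      (¬ C.evalTC v → Proves Tax (.or (.neg (fex τ P C)) (chi τ ε N))) := by
  induction C with
  | var i =>
    refine ⟨Nat.pair 8 i + 1, fun N hN => ⟨fun h => ?_, fun h => ?_⟩⟩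
    · refine Proves.tc1 (.taut (chi_pos (τ := τ) (N := N) (by omega) ((hvar i).2 h))) ?_
      intro v
      simp only [fex, AFml.evalProp]
      tauto
    · refine Proves.tc2 (.taut (chi_neg (τ := τ) (N := N) (by omega) (mt (hvar i).1 h)))
        (Proves.eqRefl (numeral (Nat.pair 8 i))) ?_
      intro v
      simp only [fex, AFml.evalProp]
      tauto
  | bot =>
    refine ⟨0, fun N _ => ⟨fun h => absurd h id, fun _ => ?_⟩⟩
    refine Proves.tc1 (not_bot.mono hext) fun v h => Or.inl h
  | neg A ih =>
    obtain ⟨N₀, h⟩ := ih fun D hD => hC D (.neg hD)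
    refine ⟨N₀, fun N hN => ⟨fun h1 => (h N hN).2 h1, fun h1 => ?_⟩⟩
    refine Proves.tc1 ((h N hN).1 (not_not.1 h1)) ?_
    intro v
    simp only [fex, AFml.evalProp]
    tauto
  | and A B ihA ihB =>
    obtain ⟨N₀, h⟩ := ihA fun D hD => hC D (.andL hD)
    obtain ⟨N₁, h'⟩ := ihB fun D hD => hC D (.andR hD)
    refine ⟨max N₀ N₁, fun N hN => ?_⟩
    obtain ⟨a1, a2⟩ := h N (le_trans (le_max_left _ _) hN)
    obtain ⟨b1, b2⟩ := h' N (le_trans (le_max_right _ _) hN)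
    refine ⟨fun h1 => ?_, fun h1 => ?_⟩
    · refine Proves.tc2 (a1 h1.1) (b1 h1.2) ?_
      intro v
      simp only [fex, AFml.evalProp]
      tauto
    · by_cases hA : A.evalTC v
      · have hB : ¬ B.evalTC v := fun hB => h1 ⟨hA, hB⟩
        refine Proves.tc1 (b2 hB) ?_
        intro v
        simp only [fex, AFml.evalProp]
        tauto
      · refine Proves.tc1 (a2 hA) ?_
        intro v
        simp only [fex, AFml.evalProp]
        tauto
  | or A B ihA ihB =>
    obtain ⟨N₀, h⟩ := ihA fun D hD => hC D (.orL hD)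
    obtain ⟨N₁, h'⟩ := ihB fun D hD => hC D (.orR hD)
    refine ⟨max N₀ N₁, fun N hN => ?_⟩
    obtain ⟨a1, a2⟩ := h N (le_trans (le_max_left _ _) hN)
    obtain ⟨b1, b2⟩ := h' N (le_trans (le_max_right _ _) hN)
    refine ⟨fun h1 => ?_, fun h1 => ?_⟩
    · rcases h1 with h1 | h1
      · refine Proves.tc1 (a1 h1) ?_
        intro v
        simp only [fex, AFml.evalProp]
        tauto
      · refine Proves.tc1 (b1 h1) ?_
        intro v
        simp only [fex, AFml.evalProp]
        tauto
    · refine Proves.tc2 (a2 fun h => h1 (Or.inl h)) (b2 fun h => h1 (Or.inr h)) ?_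
      intro v
      simp only [fex, AFml.evalProp]
      tauto
  | imp A B ihA ihB =>
    obtain ⟨N₀, h⟩ := ihA fun D hD => hC D (.impL hD)
    obtain ⟨N₁, h'⟩ := ihB fun D hD => hC D (.impR hD)
    refine ⟨max N₀ N₁, fun N hN => ?_⟩
    obtain ⟨a1, a2⟩ := h N (le_trans (le_max_left _ _) hN)
    obtain ⟨b1, b2⟩ := h' N (le_trans (le_max_right _ _) hN)
    refine ⟨fun h1 => ?_, fun h1 => ?_⟩
    · by_cases hA : A.evalTC v
      · refine Proves.tc1 (b1 (h1 hA)) ?_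
        intro v
        simp only [fex, AFml.evalProp]
        tauto
      · refine Proves.tc1 (a2 hA) ?_
        intro v
        simp only [fex, AFml.evalProp]
        tauto
    · have hA : A.evalTC v := by
        by_contra hA
        exact h1 fun h => absurd h hA
      have hB : ¬ B.evalTC v := fun hB => h1 fun _ => hB
      refine Proves.tc2 (a1 hA) (b2 hB) ?_
      intro v
      simp only [fex, AFml.evalProp]
      tauto
  | box B _ =>
    refine ⟨(fex τ P B).code + 1, fun N hN => ⟨fun h => ?_, fun h => ?_⟩⟩
    · refine Proves.tc2 (.taut (chi_pos (τ := τ) (N := N) (show (fex τ P B).code < N by omega)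
        (hb1 B h))) ((hF1 (fex τ P B).code (fex τ P B).code ⟨0, rfl, Or.inl rfl⟩).mono hext) ?_
      intro v
      simp only [fex, AFml.evalProp, AFml.appNum, gnum]
      tauto
    · have h1 := hF2 (fex τ P B).code (chi τ ε N) (chi_closed hτF _ _) fun z hz hz' =>
        .taut (chi_neg (by omega) fun h2 => h (hb2 B (hC _ (.refl _)) z hz' h2))
      refine Proves.tc1 (h1.mono hext) ?_
      intro v
      simp only [fex, AFml.evalProp, AFml.appNum, gnum]
      tauto

end exact

theorem modal_complete {Tax : Set AFml} {τ P : AFml} {m n : ℕ} (hext : PA ⊆ Tax) (hn : 1 ≤ n)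
    (hnm : n < m) (hτF : τ.FreeLt 1)
    (hτ2 : ∀ ε N, (∀ k < N, WW Tax k → ε k) → ¬ Proves Tax (chi τ ε N))
    (hsh : ∀ x, ∃ R, P.subst0 (numeral x) = .and (.eq (numeral x) (numeral x)) R)
    (hF1 : ∀ x z, Ch P (m - n) n x z →
      Proves PA (.imp (τ.subst0 (numeral z)) (P.subst0 (numeral x))))
    (hF2 : ∀ x ψ, ψ.FreeLt 0 → (∀ z ≤ x, Ch P (m - n) n x z →
        Proves PA (.imp (τ.subst0 (numeral z)) ψ)) →
        Proves PA (.imp (P.subst0 (numeral x)) ψ))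
    (s : ℕ) (A : MFml) (hs : msize A ≤ s) (h : Proves Tax (fex τ P A)) : NAProves m n A := by
  induction s generalizing A with
  | zero => cases A <;> simp [msize] at hs
  | succ s ih =>
    by_contra hA
    obtain ⟨v, hv0, hv1, hv2⟩ := exists_val' A hA
    obtain ⟨ε, hε⟩ : ∃ ε : ℕ → Prop, ∀ z, ε z ↔ (WW Tax z ∨
      (∃ B, z = (fex τ P B).code ∧ v (.box B)) ∨ ∃ i, z = Nat.pair 8 i ∧ v (.var i)) :=
      ⟨_, fun _ => Iff.rfl⟩
    have hvar : ∀ i, ε (Nat.pair 8 i) ↔ v (.var i) := by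
      intro i
      rw [hε]
      constructor
      · rintro (⟨φ, hφ, _⟩ | ⟨B, hB, _⟩ | ⟨j, hj, h⟩)
        · exact absurd hφ.symm (code_ne8 _ _)
        · exact absurd hB.symm (code_ne8 _ _)
        · simp only [Nat.pair_eq_pair] at hj
          rw [hj.2]
          exact h
      · intro h
        exact Or.inr (Or.inr ⟨i, rfl, h⟩)
    have hb2 : ∀ B, IsSub (.box B) A → ∀ z, Ch P (m - n) n (fex τ P B).code z → ε z →
        v (.box B) := by
      intro B hB z hz hεz
      obtain ⟨k, hk, hk'⟩ := hz
      obtain ⟨B', rfl, rfl⟩ := fex_iter_inv hsh hk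
      have hbb : MFml.box (boxIter ((m - n) * k) B') = boxIter ((m - n) * k) (.box B') := by
        have e : MFml.box B' = boxIter 1 B' := rfl
        rw [e, boxIter_add]
        rfl
      have hsz := hB.size_le
      have hsz' := boxIter_size ((m - n) * k) B'
      simp only [msize] at hsz
      have hB' : IsSub (.box B') A := by
        refine IsSub_trans hB ?_
        rw [hbb]
        exact IsSub_boxIter _ _
      rcases (hε _).1 hεz with hW | ⟨D, hD, hvD⟩ | ⟨i, hi, _⟩
      · have hp := ih B' (by omega) (WW_code.1 hW)
        exact hv1 _ hB (NA_nec_iter hp ((m - n) * k + 1))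
      · rw [← fex_inj hsh (AFml.code_inj hD)] at hvD
        refine hv2 _ _ hB' hB ?_ hvD
        rcases hk' with rfl | ⟨y, hy⟩
        · exact NA_id _
        · obtain ⟨B'', rfl, _⟩ := fex_iter_inv hsh hy
          have := NA_acc_iter hnm B'' k
          have e1 : MFml.box (boxIter (n - 1) B'') = boxIter n B'' := by
            have : n = (n - 1) + 1 := by omega
            conv_rhs => rw [this]
            rfl
          rw [hbb, e1, boxIter_add]
          exact this
      · exact absurd hi (code_ne8 _ _)
    obtain ⟨N, hN⟩ := fex_eval hext hτF hF1 hF2 v ε A hvar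
      (fun B hB => (hε _).2 (Or.inr (Or.inl ⟨B, rfl, hB⟩))) hb2 A fun _ h => h
    refine hτ2 ε N (fun k _ hk => (hε _).2 (Or.inl hk)) ?_
    refine Proves.tc2 h ((hN N le_rfl).2 hv0) ?_
    intro v
    simp only [AFml.evalProp]
    tauto

theorem main_thm (Tax : Set AFml) (hext : PA ⊆ Tax) (hcons : ¬ Proves Tax botFml)
    (hpr : PrAxiomatized Tax) (m n : ℕ) (hn : 1 ≤ n) (hnm : n < m) :
    ∃ P : AFml, IsSigma1 P ∧ IsProvPred Tax P ∧
      (∀ (A : MFml) (f : MFml → AFml), IsInterp P f → NAProves m n A → Proves Tax (f A)) ∧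
      (∃ f : MFml → AFml, IsInterp P f ∧ ∀ A : MFml, NAProves m n A ↔ Proves Tax (f A)) := by
  obtain ⟨τ, h1, hτF, hτ1, hτ2⟩ := tau_exists hext hcons hpr
  obtain ⟨P, hP1, hPF, hsh, hF1, hF2⟩ := P_exists h1 hτF (m - n) n (by omega)
  have hpp := provPred hext hτF hτ1 hτ2 hF1 hF2
  have hsound : ∀ (A : MFml) (f : MFml → AFml), IsInterp P f → NAProves m n A →
      Proves Tax (f A) := fun A f hf hA =>
    modal_sound hext hn hnm hPF (fun φ => (hpp φ).1) hF1 hF2 hf hA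
  refine ⟨P, hP1, ⟨hPF, hpp⟩, hsound, fex τ P, fex_interp hτF, fun A => ⟨?_, ?_⟩⟩
  · exact hsound A _ (fex_interp hτF)
  · exact modal_complete hext hn hnm hτF hτ2 hsh hF1 hF2 (msize A) A le_rfl

/-- Theorem 4.5: Suppose `m > n ≥ 1` (no `Σ₁`-soundness assumed). Then
there is a `Σ₁` provability predicate `PR_T(x)` of `T` such that (1) `N⁺A_{m,n}` is sound for
every arithmetical interpretation based on `PR_T(x)`, and (2) some arithmetical interpretation
based on `PR_T(x)` is exact for `N⁺A_{m,n}`. -/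
theorem statement_9 (Tax : Set AFml) (hext : PA ⊆ Tax)
    (hcons : ¬ Proves Tax botFml) (hpr : PrAxiomatized Tax)
    (m n : ℕ) (hn : 1 ≤ n) (hnm : n < m) :
    ∃ P : AFml, IsSigma1 P ∧ IsProvPred Tax P ∧
      (∀ (A : MFml) (f : MFml → AFml), IsInterp P f → NAProves m n A → Proves Tax (f A)) ∧
      (∃ f : MFml → AFml, IsInterp P f ∧ ∀ A : MFml, NAProves m n A ↔ Proves Tax (f A)) := by
  exact main_thm Tax hext hcons hpr m n hn hnm

end PLN
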